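/- arXiv:0707.1108 — 4 statements merged into one kernel-verified Lean document; each statement's English description precedes it below -/
import Mathlib

section
/- Let q ≥ 4 be a prime power and let n, k > 0 be integers with gcd(n, k, q−1) = 1. If gcd(k, q−1) > 2q(log log q)/(log q) (natural logarithms), then there exists a nonzero element a of F_q such that x^n (x^k + a) permutes F_q. Moreover, letting T denote the number of elements a ∈ F_q for which x^n (x^k + a) permutes F_q, and writing r := (q−1)/gcd(k, q−1), one has (r!/r^r)·(q + 1 − √q·(r^{r+1} − 2r^r − r^{r−1} + 2) − (r+1)·r^{r−1}) ≤ T ≤ (r!/r^r)·(q + 1 + √q·(r^{r+1} − 2r^r − r^{r−1} + 2)). -/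
/-!
Let `s = gcd(k, q - 1)`, `r = (q - 1) / s`, and let `θ` be a multiplicative character of order `r`.
The polynomial `x ^ n * (x ^ k + a)` permutes the field exactly when, for the `r` numbers
`z j = g ^ (k j)` and `w j = g ^ (n j)` (`g` a generator of the unit group), the values
`θ (w j * (z j + a))` are nonzero and distinct (`exists_setup`), i.e. are the `r`-th roots of unity
in some order. Detecting each order by orthogonality of characters expresses `r ^ r * T` as a sum
over exponent vectors `e` of `∑ a, ∏ j, (θ ^ e j) (z j + a)` with weights at most `r!`
(`count_estimate`). The zero vector contributes `r! * (q - r)`, and fewer than `r ^ (r - 1)` other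
vectors, those with `r ∣ ∑ e j`, contribute at all. Weil's bound `(r - 1) √q` for their character
sums (`weil`) gives the two inequalities for `T` unless `r = 2`; in that case the only
nontrivial sum is a Jacobi sum with absolute value `1` (`norm_quadratic_sum`). The
hypothesis on `gcd(k, q - 1)` means that `r ^ r < √q` (`pow_self_lt_sqrt`), and then `T ≥ 2`, so some
nonzero `a` is counted.

Weil's bound is proved from first principles. The `L`-function of the completely multiplicative
function `f ↦ ∏ χ i (f (z i))` on monic polynomials is a polynomial of degree less than the number
of the `z i` (`Lcoeff_eq_zero`), and the Euler product identifies the power sums of its reciprocal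
roots with character sums over extensions of the base field (`newton_Lcoeff`,
`psum_eq_extension`, `exists_reciprocal_roots`). It therefore suffices to bound the sums over
extensions with `P ^ 2` elements by `O(P)` (`norm_le_of_psum_bound`). There Stepanov's method bounds
from above how often the character takes a given value (`stepanov`), and as the values are
roots of unity with sum zero, upper bounds alone control the sum (`norm_charSum_le`). The
auxiliary polynomial of Stepanov's method is nonzero by a resultant argument based on the
irreducibility of a Kummer polynomial (`kummer_irreducible`, `independence`).
-/

namespace PermBinom

/-! ### Independence of powers of a Kummer root -/

section

open Polynomial

/-- The specialisation `E[X][x] → E[x]`, `X ↦ x ^ P`, `x ↦ x`. The outer variable of the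
bivariate ring is `x` and the inner one is `X`. -/
noncomputable def spec (E : Type*) [Field E] (P : ℕ) : E[X][X] →+* E[X] :=
  eval₂RingHom (expand E P : E[X] →+* E[X]) X

/-- On polynomials of `x`-degree less than `P` the specialisation is injective: the monomials
`x ^ (P * m + i)` with `i < P` are distinct. -/
theorem spec_ne_zero {E : Type*} [Field E] {P : ℕ} (a : E[X][X]) (ha : a ≠ 0)
    (hdeg : a.natDegree < P) : spec E P a ≠ 0 := by
  intro h
  apply ha
  ext i m
  have hP : 0 < P := by omega
  rcases lt_or_ge a.natDegree i with hi | hi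
  · rw [coeff_eq_zero_of_natDegree_lt hi]; simp
  have h2 : (spec E P a).coeff (P * m + i) = (a.coeff i).coeff m := by
    simp only [spec, coe_eval₂RingHom, eval₂_eq_sum_range, finsetSum_coeff, RingHom.coe_coe]
    rw [Finset.sum_eq_single i]
    · rw [coeff_mul_X_pow, mul_comm P m]
      exact coeff_expand_mul hP _ _
    · intro j hj hji
      rw [coeff_mul_X_pow']
      split_ifs with hle
      · rw [coeff_expand hP, if_neg]
        intro hd
        have hj' : j < P := by
          have := Finset.mem_range.1 hj
          omega
        have hi' : i < P := by omega
        apply hji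
        have h3 : P * m + i ≡ j [MOD P] := by
          exact ((Nat.modEq_iff_dvd' hle).2 hd).symm
        have h4 : i ≡ j [MOD P] := by
          simpa [Nat.ModEq] using h3
        have := Nat.ModEq.eq_of_lt_of_lt h4 hi' hj'
        exact this.symm
      · rfl
    · intro hi2
      exact absurd (Finset.mem_range.2 (by omega)) hi2
  rw [← h2, h]; simp

theorem natDegree_det_le {R : Type*} [CommRing R] {n : ℕ} (M : Matrix (Fin n) (Fin n) R[X]) (B : ℕ)
    (h : ∀ i j, (M i j).natDegree ≤ B) : M.det.natDegree ≤ n * B := by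
  rw [Matrix.det_apply]
  refine natDegree_sum_le_of_forall_le _ _ fun σ _ => ?_
  refine (natDegree_smul_le _ _).trans ?_
  refine (natDegree_prod_le _ _).trans ?_
  refine (Finset.sum_le_card_nsmul _ _ B (fun i _ => h _ _)).trans ?_
  simp

theorem natDegree_resultant_le {R : Type*} [CommRing R] (f g : R[X][X]) (m n B : ℕ)
    (hf : ∀ i, (f.coeff i).natDegree ≤ B) (hg : ∀ i, (g.coeff i).natDegree ≤ B) :
    (resultant f g m n).natDegree ≤ (m + n) * B := by
  refine natDegree_det_le _ _ fun i j => ?_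
  simp only [sylvester, Matrix.of_apply]
  refine Fin.addCases (fun j₁ => ?_) (fun j₁ => ?_) j
  · simp only [Fin.addCases_left]; split_ifs
    · exact hg _
    · simp
  · simp only [Fin.addCases_right]; split_ifs
    · exact hf _
    · simp

/-- The polynomial `∏ (z i - X) ^ e i`. -/
noncomputable def Fpoly {E ι : Type*} [Field E] [Fintype ι] (z : ι → E) (e : ι → ℕ) : E[X] :=
  ∏ i, (C (z i) - X) ^ e i

theorem Fpoly_ne_zero {E ι : Type*} [Field E] [Fintype ι] (z : ι → E) (e : ι → ℕ) :
    Fpoly z e ≠ 0 := by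
  refine Finset.prod_ne_zero_iff.2 fun i _ => pow_ne_zero _ ?_
  rw [← neg_ne_zero, neg_sub]; exact X_sub_C_ne_zero _

theorem natDegree_Fpoly_le {E ι : Type*} [Field E] [Fintype ι] (z : ι → E) (e : ι → ℕ) :
    (Fpoly z e).natDegree ≤ ∑ i, e i := by
  refine (natDegree_prod_le _ _).trans (Finset.sum_le_sum fun i _ => ?_)
  refine natDegree_pow_le.trans ?_
  have : (C (z i) - X).natDegree ≤ 1 := by
    rw [← neg_sub, natDegree_neg, natDegree_X_sub_C]
  nlinarith

theorem multiplicity_Fpoly {E ι : Type*} [Field E] [Fintype ι] (z : ι → E)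
    (hz : Function.Injective z) (e : ι → ℕ) (i : ι) :
    emultiplicity (X - C (C (z i)) : E[X][X]) ((Fpoly z e).map C) = e i := by
  classical
  have hp : Prime (X - C (C (z i)) : E[X][X]) := prime_X_sub_C _
  rw [Fpoly, Polynomial.map_prod, Finset.emultiplicity_prod hp, Finset.sum_eq_single i]
  · rw [Polynomial.map_pow, emultiplicity_pow hp]
    have : emultiplicity (X - C (C (z i)) : E[X][X]) (Polynomial.map C (C (z i) - X)) = 1 := by
      have : (Polynomial.map C (C (z i) - X)) = -(X - C (C (z i)) : E[X][X]) := by simp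
      rw [this, emultiplicity_neg]
      exact (FiniteMultiplicity.of_prime_left hp (X_sub_C_ne_zero _)).emultiplicity_self
    rw [this, mul_one]
  · intro j _ hji
    rw [Polynomial.map_pow, emultiplicity_pow hp]
    have : emultiplicity (X - C (C (z i)) : E[X][X]) (Polynomial.map C (C (z j) - X)) = 0 := by
      rw [emultiplicity_eq_zero, dvd_iff_isRoot]
      simp only [Polynomial.map_sub, map_C, map_X, IsRoot.def, eval_sub, eval_C, eval_X]
      intro h
      rw [← C_sub, C_eq_zero, sub_eq_zero] at h
      exact hji (hz h)
    rw [this, mul_zero]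
  · simp

theorem multiplicity_C {E : Type*} [Field E] (z : E) (f : E[X]) (hf : f ≠ 0) :
    emultiplicity (X - C (C z) : E[X][X]) (C f) = 0 := by
  rw [emultiplicity_eq_zero, dvd_iff_isRoot]
  simpa using hf

/-- With `w = F(X) F(x) ^ (R - 1)`, the polynomial `Y ^ R - w` is irreducible over `E(x, X)`. The
constant coefficient of the minimal polynomial of one of its roots, of degree `m`, is an `R`-th
root of `± w ^ m`; comparing the multiplicities of the primes `x - z i` gives `R ∣ m`. -/
theorem kummer_irreducible {E ι : Type*} [Field E] [Fintype ι] (z : ι → E)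
    (hz : Function.Injective z) (e : ι → ℕ) (R : ℕ) (hR : 0 < R)
    (hgcd : ∀ m, (∀ i, R ∣ m * e i) → R ∣ m) :
    Irreducible (X ^ R - C (algebraMap E[X][X] (FractionRing E[X][X])
      (C (Fpoly z e) * ((Fpoly z e).map C) ^ (R - 1)))) := by
  let A := E[X][X]
  let L := FractionRing A
  set w : A := C (Fpoly z e) * ((Fpoly z e).map C) ^ (R - 1) with hw
  set p : L[X] := X ^ R - C (algebraMap A L w) with hp
  have hpm : p.Monic := monic_X_pow_sub_C _ hR.ne'
  have hpd : p.natDegree = R := natDegree_X_pow_sub_C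
  obtain ⟨y, hy⟩ : ∃ y : AlgebraicClosure L, y ^ R = algebraMap L _ (algebraMap A L w) :=
    IsAlgClosed.exists_pow_nat_eq _ hR
  have hyint : IsIntegral L y := Algebra.IsIntegral.isIntegral y
  set μ := minpoly L y with hμ
  have hdvd : μ ∣ p := minpoly.dvd _ _ (by simp [hp, hy])
  have hμsplit : (μ.map (algebraMap L (AlgebraicClosure L))).Splits := IsAlgClosed.splits _
  set m := μ.natDegree with hm
  -- the constant coefficient is an `R`-th root of `± w ^ m`
  have hroots : ∀ x ∈ (μ.map (algebraMap L (AlgebraicClosure L))).roots,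
      x ^ R = algebraMap L _ (algebraMap A L w) := by
    intro x hx
    have hx1 : aeval x μ = 0 := by
      have := (mem_roots'.1 hx).2
      rwa [IsRoot.def, eval_map, ← aeval_def] at this
    have hx2 : aeval x p = 0 := by
      obtain ⟨c, hc⟩ := hdvd
      rw [hc, map_mul, hx1, zero_mul]
    simpa [hp, sub_eq_zero] using hx2
  have hmonic : μ.Monic := minpoly.monic hyint
  have hc0 : (μ.coeff 0) ^ R = (-1) ^ (m * R) * (algebraMap A L w) ^ m := by
    apply (algebraMap L (AlgebraicClosure L)).injective
    have h1 := hμsplit.coeff_zero_eq_prod_roots_of_monic (hmonic.map _)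
    rw [coeff_map, natDegree_map] at h1
    have h2 := Multiset.prod_map_pow (m := (μ.map (algebraMap L (AlgebraicClosure L))).roots)
      (n := R) (f := fun x => x)
    rw [Multiset.map_id'] at h2
    rw [map_pow, h1, mul_pow, ← pow_mul, ← h2, Multiset.map_congr rfl hroots, Multiset.map_const', Multiset.prod_replicate,
      ← hμsplit.natDegree_eq_card_roots, natDegree_map]
    simp [hm]
  -- being integral, this coefficient lies in the ring `E[X][x]`
  obtain ⟨c, hc⟩ : ∃ c : A, algebraMap A L c = μ.coeff 0 := by
    apply IsIntegrallyClosed.isIntegral_iff.1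
    apply IsIntegral.of_pow hR
    rw [hc0]
    have : ((-1) ^ (m * R) * (algebraMap A L w) ^ m) = algebraMap A L ((-1) ^ (m * R) * w ^ m) := by
      simp
    rw [this]
    exact isIntegral_algebraMap
  have hcR : c ^ R = (-1) ^ (m * R) * w ^ m := by
    apply IsFractionRing.injective A L
    simpa [hc] using hc0
  have hwne : w ≠ 0 := by
    rw [hw]
    refine mul_ne_zero (C_ne_zero.2 (Fpoly_ne_zero z e)) (pow_ne_zero _ ?_)
    rw [Polynomial.map_ne_zero_iff (C_injective)]; exact Fpoly_ne_zero z e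
  have hcne : c ≠ 0 := by
    rintro rfl
    rw [zero_pow hR.ne'] at hcR
    have : w ^ m = 0 := by
      rcases neg_one_pow_eq_or A (m * R) with h | h <;> rw [h] at hcR <;> simpa using hcR.symm
    exact hwne (pow_eq_zero_iff (minpoly.natDegree_pos hyint).ne' |>.1 this)
  have hRm : R ∣ m := by
    apply hgcd
    intro i
    have hpr : Prime (X - C (C (z i)) : A) := prime_X_sub_C _
    have h1 := congrArg (emultiplicity (X - C (C (z i)) : A)) hcR
    have h2 : emultiplicity (X - C (C (z i)) : A) ((-1) ^ (m * R) * w ^ m)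
        = emultiplicity (X - C (C (z i)) : A) (w ^ m) := by
      rcases neg_one_pow_eq_or A (m * R) with h | h <;> rw [h] <;> simp [emultiplicity_neg]
    rw [h2, emultiplicity_pow hpr, emultiplicity_pow hpr, hw, emultiplicity_mul hpr,
      emultiplicity_pow hpr, multiplicity_C _ _ (Fpoly_ne_zero z e), multiplicity_Fpoly z hz,
      zero_add, (FiniteMultiplicity.of_prime_left hpr hcne).emultiplicity_eq_multiplicity] at h1
    have h3 : R * multiplicity (X - C (C (z i)) : A) c = m * ((R - 1) * e i) := by exact_mod_cast h1
    obtain ⟨t, rfl⟩ : ∃ t, R = t + 1 := ⟨R - 1, by omega⟩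
    simp only [Nat.add_sub_cancel] at h3
    have h4 : m * e i + m * (t * e i) = (t + 1) * (m * e i) := by ring
    rw [← (Nat.dvd_add_left (⟨_, h3.symm⟩ : (t + 1) ∣ m * (t * e i))), h4]
    exact dvd_mul_right _ _
  have hle : R ≤ m := Nat.le_of_dvd (minpoly.natDegree_pos hyint) hRm
  have : μ = p := by
    refine (eq_of_monic_of_dvd_of_natDegree_le hmonic hpm hdvd ?_).symm
    rw [hpd]; exact hle
  rw [← this]
  exact minpoly.irreducible hyint

/-- Independence of `1, H, …, H ^ (R - 1)` over the space of polynomials `C (x, x ^ P)` with small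
`x`-degree, for `H ^ R = F(x ^ P) F(x) ^ (R - 1)`. Since `Y ^ R - w` is irreducible, its resultant
with `∑ C j Y ^ j` is nonzero; it has small `x`-degree, so it survives the specialisation
`X ↦ x ^ P`, `Y ↦ H`, whereas a relation would make it vanish. -/
theorem independence {E ι : Type*} [Field E] [Fintype ι] (z : ι → E)
    (hz : Function.Injective z) (e : ι → ℕ) (R : ℕ) (hR : 0 < R)
    (hgcd : ∀ m, (∀ i, R ∣ m * e i) → R ∣ m) (P : ℕ) (H : E[X])
    (hH : H ^ R = expand E P (Fpoly z e) * (Fpoly z e) ^ (R - 1))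
    (c : ℕ → E[X][X]) (B : ℕ) (hc : ∀ j, (c j).natDegree ≤ B) (hB : (R - 1) * ∑ i, e i ≤ B)
    (hBP : 2 * R * B < P)
    (hsum : ∑ j ∈ Finset.range R, spec E P (c j) * H ^ j = 0) :
    ∀ j < R, c j = 0 := by
  let A := E[X][X]
  let L := FractionRing A
  set w : A := C (Fpoly z e) * ((Fpoly z e).map C) ^ (R - 1) with hw
  set p : A[X] := X ^ R - C w with hp
  set θ : A[X] := ∑ j ∈ Finset.range R, C (c j) * X ^ j with hθ
  have hcoeff : ∀ j, θ.coeff j = if j < R then c j else 0 := by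
    intro j
    simp [hθ, coeff_C_mul, coeff_X_pow]
  by_contra hne
  have hθ0 : θ ≠ 0 := by
    intro h0
    apply hne
    intro j hj
    have := hcoeff j
    rw [h0, if_pos hj] at this
    simpa using this.symm
  have hθd : θ.natDegree < R := by
    rw [natDegree_lt_iff_degree_lt hθ0, degree_lt_iff_coeff_zero]
    intro j hj
    rw [hcoeff, if_neg (by omega)]
  have hpd : p.natDegree = R := natDegree_X_pow_sub_C
  have hinj : Function.Injective (algebraMap A L) := IsFractionRing.injective A L
  have hres : resultant θ p ≠ 0 := by
    intro h0
    have h1 := resultant_map_map θ p θ.natDegree p.natDegree (algebraMap A L)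
    rw [h0, map_zero] at h1
    have h2 : resultant (θ.map (algebraMap A L)) (p.map (algebraMap A L)) = 0 := by
      rw [natDegree_map_eq_of_injective hinj, natDegree_map_eq_of_injective hinj]
      exact h1
    rw [resultant_eq_zero_iff] at h2
    apply h2.2
    have hpL : p.map (algebraMap A L) = X ^ R - C (algebraMap A L w) := by simp [hp]
    have hirr : Irreducible (p.map (algebraMap A L)) := by
      rw [hpL]; exact kummer_irreducible z hz e R hR hgcd
    refine (hirr.coprime_iff_not_dvd.2 ?_).symm
    intro hd
    have h3 : θ.map (algebraMap A L) ≠ 0 := (Polynomial.map_ne_zero_iff hinj).2 hθ0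
    have := natDegree_le_of_dvd hd h3
    rw [natDegree_map_eq_of_injective hinj, natDegree_map_eq_of_injective hinj] at this
    omega
  have hmapdeg : ((Fpoly z e).map C : A).natDegree ≤ ∑ i, e i := by
    exact (natDegree_map_le).trans (natDegree_Fpoly_le z e)
  have hwd : w.natDegree ≤ B := by
    rw [hw]
    refine natDegree_mul_le.trans ?_
    rw [natDegree_C, zero_add]
    refine natDegree_pow_le.trans (le_trans ?_ hB)
    exact Nat.mul_le_mul_left _ hmapdeg
  have hresd : (resultant θ p).natDegree < P := by
    refine lt_of_le_of_lt (natDegree_resultant_le θ p _ _ B ?_ ?_) ?_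
    · intro j
      rw [hcoeff]; split_ifs
      · exact hc j
      · simp
    · intro j
      rw [hp, coeff_sub, coeff_X_pow, coeff_C]
      refine (natDegree_sub_le _ _).trans (max_le ?_ ?_)
      · split_ifs <;> simp
      · split_ifs
        · exact hwd
        · simp
    · rw [hpd]
      refine lt_of_le_of_lt (Nat.mul_le_mul_right _ ?_) hBP
      omega
  apply spec_ne_zero _ hres hresd
  obtain ⟨u, v, -, -, huv⟩ := exists_mul_add_mul_eq_C_resultant θ p le_rfl le_rfl
    (Or.inr (by omega))
  have h5 := congrArg (eval₂ (spec E P) H) huv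
  rw [eval₂_add, eval₂_mul, eval₂_mul, eval₂_C] at h5
  rw [← h5]
  have h6 : eval₂ (spec E P) H θ = 0 := by
    rw [hθ, eval₂_finsetSum, ← hsum]
    simp [eval₂_mul, eval₂_pow]
  have h8 : spec E P ((Fpoly z e).map C) = Fpoly z e := by
    rw [spec, coe_eval₂RingHom, eval₂_map]
    have : ((expand E P : E[X] →+* E[X]).comp C) = C := by
      ext; simp
    rw [this]
    exact eval₂_C_X
  have h7 : eval₂ (spec E P) H p = 0 := by
    rw [hp, eval₂_sub, eval₂_pow, eval₂_X, eval₂_C, hH, hw, map_mul, map_pow, h8]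
    simp [spec]
  rw [h6, h7]; simp

end

/-! ### Stepanov's method -/

section

open Polynomial

/-- More than `M` polynomials of degree less than `M`, indexed by a box `a × b × c`, satisfy a
nontrivial linear relation. -/
theorem exists_relation {K : Type*} [Field K] (a b c M : ℕ) (v : ℕ → ℕ → ℕ → K[X])
    (hv : ∀ j < a, ∀ i < b, ∀ l < c, v j i l ∈ degreeLT K M) (hM : M < a * (b * c)) :
    ∃ g : ℕ → ℕ → ℕ → K,
      (∑ j ∈ Finset.range a, ∑ i ∈ Finset.range b, ∑ l ∈ Finset.range c,
        C (g j i l) * v j i l = 0) ∧ ∃ j < a, ∃ i < b, ∃ l < c, g j i l ≠ 0 := by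
  classical
  have : FiniteDimensional K (degreeLT K M) := (degreeLTEquiv K M).symm.finiteDimensional
  let v' : Fin a × Fin b × Fin c → degreeLT K M := fun x =>
    ⟨v x.1 x.2.1 x.2.2, hv _ x.1.2 _ x.2.1.2 _ x.2.2.2⟩
  have hfr : Module.finrank K (degreeLT K M) = M := by
    rw [(degreeLTEquiv K M).finrank_eq]; simp
  have hni : ¬ LinearIndependent K v' := by
    intro h
    have := h.fintype_card_le_finrank
    rw [hfr] at this
    simp only [Fintype.card_prod, Fintype.card_fin] at this
    omega
  obtain ⟨g, hg, ⟨⟨j, i, l⟩, hne⟩⟩ := Fintype.not_linearIndependent_iff.1 hni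
  refine ⟨fun j i l => if h : j < a ∧ i < b ∧ l < c then g (⟨j, h.1⟩, ⟨i, h.2.1⟩, ⟨l, h.2.2⟩) else 0,
    ?_, j, j.2, i, i.2, l, l.2, by simpa using hne⟩
  have h1 := congrArg (Subtype.val) hg
  simp only [Submodule.coe_sum, Submodule.coe_smul, ZeroMemClass.coe_zero] at h1
  rw [Fintype.sum_prod_type] at h1
  simp only [Fintype.sum_prod_type] at h1
  rw [← h1, Finset.sum_range]
  refine Finset.sum_congr rfl fun j _ => ?_
  rw [Finset.sum_range]
  refine Finset.sum_congr rfl fun i _ => ?_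
  rw [Finset.sum_range]
  refine Finset.sum_congr rfl fun l _ => ?_
  simp [v', smul_eq_C_mul]

/-- The roots of `F` are fixed by the Frobenius `x ↦ x ^ P`, so `F(x ^ P) = F(x) ^ P`. -/
theorem expand_Fpoly {E ι : Type*} [Field E] [Fintype ι] (p k : ℕ) [Fact p.Prime] [CharP E p]
    (z : ι → E) (hzP : ∀ i, z i ^ (p ^ k) = z i) (e : ι → ℕ) :
    expand E (p ^ k) (Fpoly z e) = (Fpoly z e) ^ (p ^ k) := by
  rw [Fpoly, map_prod, ← Finset.prod_pow]
  refine Finset.prod_congr rfl fun i _ => ?_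
  rw [map_pow, ← pow_mul, mul_comm, pow_mul, sub_pow_char_pow, ← C_pow, hzP]
  simp

set_option maxHeartbeats 2000000 in
/-- Stepanov's method over the field with `P ^ 2` elements: upper bound for the number of points
where `F ^ ((P ^ 2 - 1) / R)` takes a prescribed value `c`. With `h = F ^ ((P - 1) / R)` the
condition reads `h ^ (P + 1) = c`. The auxiliary polynomial is
`ψ = ∑ (g j i l) ^ P x ^ (P i + l) h ^ j`: at the points in question, `ψ ^ P h ^ (R - 1)` equals
`∑ g j i l c ^ j x ^ (P l + i) h ^ (R - 1 - j)`, a combination of polynomials of low degree that can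
be made identically zero, while `independence` shows `ψ ≠ 0`. -/
theorem stepanov {E ι : Type*} [Field E] [Fintype E] [DecidableEq E] [Fintype ι]
    (p k P : ℕ) [Fact p.Prime] [CharP E p] (hPp : P = p ^ k)
    (hcard : Fintype.card E = P ^ 2) (z : ι → E) (hz : Function.Injective z)
    (hzP : ∀ i, z i ^ P = z i) (e : ι → ℕ) (R t : ℕ) (hR : 0 < R) (hPt : P = R * t + 1)
    (hgcd : ∀ m, (∀ i, R ∣ m * e i) → R ∣ m)
    (hPbig : 4 * R * (R * (∑ i, e i)) + 4 * (∑ i, e i) + 5 < P) (c : E) (hc : c ≠ 0) :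
    R * (Finset.univ.filter fun a => ((Fpoly z e).eval a) ^ (t * (P + 1)) = c).card
      ≤ P ^ 2 + (1 + R * (4 * (∑ i, e i) + 5) + R * ∑ i, e i) * P := by
  set D := ∑ i, e i with hD
  set F := Fpoly z e with hF
  obtain ⟨N, hN⟩ : ∃ N, N = 4 * D + 5 := ⟨_, rfl⟩
  obtain ⟨b, hb⟩ : ∃ b, b = P / (4 * R) := ⟨_, rfl⟩
  have hb1 : 4 * R * b ≤ P := by rw [hb]; exact Nat.mul_div_le _ _
  have hb2 : P < 4 * R * (b + 1) := by
    rw [hb]; exact Nat.lt_mul_div_succ _ (by omega)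
  set h := F ^ t with hh
  have hFd : F.natDegree ≤ D := natDegree_Fpoly_le z e
  have hhd : h.natDegree ≤ t * D := natDegree_pow_le.trans (Nat.mul_le_mul_left _ hFd)
  set M := P * b + (t + N) + (R - 1) * (t * D) with hM
  have htP : t < P := by rw [hPt]; nlinarith
  have hRtD : (R - 1) * (t * D) ≤ P * D := by
    rw [← mul_assoc]
    refine Nat.mul_le_mul_right _ ?_
    calc (R - 1) * t ≤ R * t := Nat.mul_le_mul_right _ (Nat.sub_le _ _)
      _ ≤ P := by omega
  -- more unknowns than equations
  have hcount : M < R * ((t + N) * (b + 1)) := by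
    have h1 : R * ((t + N) * (b + 1)) = (b + 1) * (R * t + 1) + (b + 1) * (R * N - 1) := by
      obtain ⟨x, hx⟩ : ∃ x, R * N = x + 1 := ⟨R * N - 1, by
        have : 0 < R * N := Nat.mul_pos hR (by omega)
        omega⟩
      rw [hx, Nat.add_sub_cancel]
      have : R * ((t + N) * (b + 1)) = (b + 1) * (R * t) + (b + 1) * (R * N) := by ring
      rw [this, hx]; ring
    have h2 : P * (D + 1) ≤ (b + 1) * (R * N - 1) := by
      have h3 : 4 * R * (D + 1) ≤ R * N - 1 := by
        have : R * N = 4 * R * (D + 1) + R := by rw [hN]; ring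
        omega
      calc P * (D + 1) ≤ (4 * R * (b + 1)) * (D + 1) := Nat.mul_le_mul_right _ hb2.le
        _ = (b + 1) * (4 * R * (D + 1)) := by ring
        _ ≤ _ := Nat.mul_le_mul_left _ h3
    rw [h1, ← hPt, hM]
    have h4 : N ≤ P := by omega
    nlinarith
  -- a relation making the low-degree form of `ψ ^ P * h ^ (R - 1)` vanish identically
  obtain ⟨g, hg, j₀, hj₀, i₀, hi₀, l₀, hl₀, hne⟩ := exists_relation R (t + N) (b + 1) M
    (fun j i l => C (c ^ j) * (X ^ (P * l + i) * h ^ (R - 1 - j))) (by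
      intro j hj i hi l hl
      rw [mem_degreeLT]
      refine lt_of_le_of_lt degree_le_natDegree ?_
      rw [Nat.cast_lt]
      refine lt_of_le_of_lt (natDegree_C_mul_le _ _) ?_
      refine lt_of_le_of_lt natDegree_mul_le ?_
      have h1 : (X ^ (P * l + i) : E[X]).natDegree ≤ P * l + i := natDegree_X_pow_le _
      have h2 : (h ^ (R - 1 - j)).natDegree ≤ (R - 1) * (t * D) :=
        natDegree_pow_le.trans (Nat.mul_le_mul (Nat.sub_le _ _) hhd)
      have h3 : P * l ≤ P * b := Nat.mul_le_mul_left _ (by omega)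
      rw [hM]; omega) hcount
  have hP2 : ∀ x : E, x ^ (P * P) = x := by
    intro x
    rw [← sq, ← hcard]; exact FiniteField.pow_card x
  -- since `x ^ (P * P) = x` on `E`, the `P`-th root of `g j i l` is `g j i l ^ P`
  set Cj : ℕ → E[X][X] := fun j => ∑ i ∈ Finset.range (t + N), ∑ l ∈ Finset.range (b + 1),
    C (C (g j i l ^ P) * X ^ i) * X ^ l with hCj
  set ψ : E[X] := ∑ j ∈ Finset.range R, spec E P (Cj j) * h ^ j with hψ
  have hspec : ∀ j, spec E P (Cj j) = ∑ i ∈ Finset.range (t + N), ∑ l ∈ Finset.range (b + 1),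
      C (g j i l ^ P) * X ^ (P * i + l) := by
    intro j
    simp only [hCj, map_sum, map_mul, spec, coe_eval₂RingHom, eval₂_C, eval₂_X, RingHom.coe_coe, map_pow, expand_C, expand_X]
    refine Finset.sum_congr rfl fun i _ => Finset.sum_congr rfl fun l _ => ?_
    rw [mul_assoc, ← pow_mul, ← pow_add]
  have hCjd : ∀ j, (Cj j).natDegree ≤ b := by
    intro j
    refine natDegree_sum_le_of_forall_le _ _ fun i _ => ?_
    refine natDegree_sum_le_of_forall_le _ _ fun l hl => ?_
    refine (natDegree_C_mul_X_pow_le _ _).trans ?_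
    have := Finset.mem_range.1 hl
    omega
  have hFmd : (F.map C : E[X][X]).natDegree ≤ D := natDegree_map_le.trans hFd
  have hFspec : spec E P (F.map C) = F := by
    rw [spec, coe_eval₂RingHom, eval₂_map]
    have : ((expand E P : E[X] →+* E[X]).comp C) = C := by
      ext; simp
    rw [this]
    exact eval₂_C_X
  -- the auxiliary polynomial does not vanish
  have hψ0 : ψ ≠ 0 := by
    intro h0
    have hH : (F ^ (t + 1)) ^ R = expand E P F * F ^ (R - 1) := by
      have : expand E P F = F ^ P := by
        subst hPp
        exact expand_Fpoly p k z hzP e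
      rw [this, ← pow_mul, ← pow_add, hPt]
      congr 1
      obtain ⟨x, rfl⟩ : ∃ x, R = x + 1 := ⟨R - 1, by omega⟩
      rw [Nat.add_sub_cancel]; ring
    have hind := independence z hz e R hR hgcd P (F ^ (t + 1)) hH
      (fun j => Cj j * (F.map C) ^ (R - 1 - j)) (b + (R - 1) * D) (by
        intro j
        refine natDegree_mul_le.trans (Nat.add_le_add (hCjd j) ?_)
        exact natDegree_pow_le.trans (Nat.mul_le_mul (Nat.sub_le _ _) hFmd))
      (by rw [← hD]; omega)
      (by
        have h1 : 2 * R * (b + (R - 1) * D) ≤ 2 * R * b + 2 * R * (R * D) := by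
          rw [mul_add]
          gcongr
          omega
        nlinarith)
      (by
        have : ∀ j ∈ Finset.range R, spec E P (Cj j * (F.map C) ^ (R - 1 - j)) * (F ^ (t + 1)) ^ j
            = F ^ (R - 1) * (spec E P (Cj j) * h ^ j) := by
          intro j hj
          have hj' := Finset.mem_range.1 hj
          rw [map_mul, map_pow, hFspec, hh]
          have : F ^ (R - 1) = F ^ (R - 1 - j) * F ^ j := by rw [← pow_add]; congr 1; omega
          rw [this]; ring
        rw [Finset.sum_congr rfl this, ← Finset.mul_sum, ← hψ, h0, mul_zero])
    have h1 : Cj j₀ = 0 := by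
      have := hind j₀ hj₀
      refine (mul_eq_zero.1 this).resolve_right (pow_ne_zero _ ?_)
      rw [Polynomial.map_ne_zero_iff C_injective]
      exact Fpoly_ne_zero z e
    have h2 : ((Cj j₀).coeff l₀).coeff i₀ = g j₀ i₀ l₀ ^ P := by
      simp only [hCj, finsetSum_coeff, coeff_C_mul_X_pow]
      rw [Finset.sum_eq_single i₀]
      · rw [Finset.sum_eq_single l₀]
        · rw [if_pos rfl, coeff_C_mul_X_pow, if_pos rfl]
        · intro l _ hl
          rw [if_neg (Ne.symm hl)]; simp
        · intro hl; exact absurd (Finset.mem_range.2 hl₀) hl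
      · intro i _ hi
        refine Finset.sum_eq_zero fun l _ => ?_
        split_ifs
        · rw [coeff_C_mul_X_pow, if_neg (Ne.symm hi)]
        · simp
      · intro hi; exact absurd (Finset.mem_range.2 hi₀) hi
    rw [h1] at h2
    simp only [coeff_zero] at h2
    exact hne (pow_eq_zero_iff (by omega) |>.1 h2.symm)
  -- it vanishes at all the points in question
  have hroot : ∀ a : E, (F.eval a) ^ (t * (P + 1)) = c → ψ.eval a = 0 := by
    intro a ha
    have hca : (h.eval a) ^ (P + 1) = c := by rw [hh, eval_pow, ← pow_mul, ha]
    set y := h.eval a with hy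
    have hy0 : y ≠ 0 := by
      intro h0
      rw [h0, zero_pow (by omega)] at hca
      exact hc hca.symm
    have h1 : (ψ.eval a) ^ P * y ^ (R - 1) = 0 := by
      have h2 := congrArg (eval a) hg
      simp only [eval_finsetSum, eval_mul, eval_C, eval_pow, eval_X, eval_zero] at h2
      rw [← h2, hψ]
      simp only [hspec, eval_finsetSum, eval_mul, eval_pow, eval_C, eval_X]
      rw [hPp, sum_pow_char_pow, Finset.sum_mul]
      refine Finset.sum_congr rfl fun j hj => ?_
      rw [mul_pow, sum_pow_char_pow, Finset.sum_mul, Finset.sum_mul]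
      refine Finset.sum_congr rfl fun i _ => ?_
      rw [sum_pow_char_pow, Finset.sum_mul, Finset.sum_mul]
      refine Finset.sum_congr rfl fun l _ => ?_
      rw [← hPp, ← hy]
      have hj' := Finset.mem_range.1 hj
      have e1 : (g j i l ^ P * a ^ (P * i + l)) ^ P = g j i l * a ^ (P * l + i) := by
        rw [mul_pow, ← pow_mul, hP2, ← pow_mul]
        have : (P * i + l) * P = (P * P) * i + P * l := by ring
        rw [this, pow_add, pow_mul, hP2, ← pow_add, add_comm]
      have e2 : (y ^ j) ^ P * y ^ (R - 1) = c ^ j * y ^ (R - 1 - j) := by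
        rw [← hca, ← pow_mul, ← pow_mul, ← pow_add, ← pow_add]
        congr 1
        have : R - 1 = (R - 1 - j) + j := by omega
        rw [add_mul, one_mul, mul_comm j P]; omega
      rw [e1, mul_assoc, e2]; ring
    have h3 := (mul_eq_zero.1 h1).resolve_right (pow_ne_zero _ hy0)
    exact pow_eq_zero_iff (by omega) |>.1 h3
  have hψd : ψ.natDegree ≤ P * (t + N) + b + (R - 1) * (t * D) := by
    refine natDegree_sum_le_of_forall_le _ _ fun j hj => ?_
    refine natDegree_mul_le.trans (Nat.add_le_add ?_ ?_)
    · rw [hspec]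
      refine natDegree_sum_le_of_forall_le _ _ fun i hi => ?_
      refine natDegree_sum_le_of_forall_le _ _ fun l hl => ?_
      refine (natDegree_C_mul_X_pow_le _ _).trans ?_
      have := Finset.mem_range.1 hl
      have : P * i ≤ P * (t + N) := Nat.mul_le_mul_left _ (Finset.mem_range.1 hi).le
      omega
    · refine natDegree_pow_le.trans (Nat.mul_le_mul ?_ hhd)
      have := Finset.mem_range.1 hj
      omega
  have hle : (Finset.univ.filter fun a => (F.eval a) ^ (t * (P + 1)) = c).card ≤ ψ.natDegree := by
    refine le_trans (Finset.card_le_card ?_) (card_roots' ψ |>.trans' (Multiset.toFinset_card_le _))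
    intro a ha
    rw [Multiset.mem_toFinset, mem_roots hψ0]
    exact hroot a (Finset.mem_filter.1 ha).2
  refine (Nat.mul_le_mul_left R (hle.trans hψd)).trans ?_
  have h1 : R * (P * (t + N)) ≤ P ^ 2 + R * N * P := by
    have : R * (P * (t + N)) = P * (R * t) + R * N * P := by ring
    rw [this, sq]
    gcongr
    omega
  have h2 : R * b ≤ P := by nlinarith
  have h3 : R * ((R - 1) * (t * D)) ≤ R * (P * D) := Nat.mul_le_mul_left _ hRtD
  rw [← hN]
  nlinarith

end

/-! ### `L`-functions over `K[X]` and Newton's identities -/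

section

open Polynomial UniqueFactorizationMonoid

section Newton

variable {K : Type*} [Field K] [Finite K]

theorem finite_degree_le (n : ℕ) : {f : K[X] | f.natDegree ≤ n}.Finite := by
  have : Finite (degreeLT K (n + 1)) := Finite.of_equiv _ (degreeLTEquiv K (n + 1)).symm.toEquiv
  refine Set.Finite.subset (Set.toFinite (degreeLT K (n + 1) : Set K[X])) fun f hf => ?_
  rw [SetLike.mem_coe, mem_degreeLT]
  exact lt_of_le_of_lt degree_le_natDegree (by exact_mod_cast Nat.lt_succ_of_le hf)

variable (K) in
/-- The finite set of monic polynomials of degree `n`. -/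
noncomputable def monicDeg (n : ℕ) : Finset K[X] :=
  ((finite_degree_le n).subset (fun _ hf => hf.2.le) :
    {f : K[X] | f.Monic ∧ f.natDegree = n}.Finite).toFinset

theorem mem_monicDeg {n : ℕ} {f : K[X]} : f ∈ monicDeg K n ↔ f.Monic ∧ f.natDegree = n := by
  simp [monicDeg]

variable (K) in
/-- The finite set of monic irreducible polynomials whose degree divides `m` (empty for `m = 0`). -/
noncomputable def irredDvd (m : ℕ) : Finset K[X] :=
  ((finite_degree_le m).subset
    (fun _ hf => Nat.le_of_dvd (Nat.pos_of_ne_zero hf.2.2.2) hf.2.2.1) :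
    {f : K[X] | f.Monic ∧ Irreducible f ∧ f.natDegree ∣ m ∧ m ≠ 0}.Finite).toFinset

theorem mem_irredDvd {m : ℕ} {f : K[X]} :
    f ∈ irredDvd K m ↔ f.Monic ∧ Irreducible f ∧ f.natDegree ∣ m ∧ m ≠ 0 := by
  simp [irredDvd]

/-- The degree of a monic polynomial is the sum of `deg P` over all prime powers `P ^ k`, `k ≥ 1`,
dividing it, the prime powers being sorted by their degree `m`. -/
theorem degree_eq_sum_primePowers [DecidableEq K] [DecidableRel ((· ∣ ·) : K[X] → K[X] → Prop)]
    {n : ℕ} {f : K[X]} (hf : f ∈ monicDeg K n) :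
    n = ∑ m ∈ Finset.Icc 1 n, ∑ P ∈ irredDvd K m,
      if P ^ (m / P.natDegree) ∣ f then P.natDegree else 0 := by
  obtain ⟨hfm, hfd⟩ := mem_monicDeg.1 hf
  have hf0 : f ≠ 0 := hfm.ne_zero
  set U := (normalizedFactors f).toFinset with hU
  have hUmem : ∀ P ∈ U, P.Monic ∧ Irreducible P := by
    intro P hP
    have hP' := Multiset.mem_toFinset.1 hP
    have hirr := irreducible_of_normalized_factor P hP'
    refine ⟨?_, hirr⟩
    rw [← normalize_normalized_factor P hP']
    exact monic_normalize hirr.ne_zero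
  have hcount : ∀ P, P.Monic → Irreducible P → ∀ k, P ^ k ∣ f ↔
      k ≤ (normalizedFactors f).count P := by
    intro P hPm hP k
    rw [pow_dvd_iff_le_emultiplicity, emultiplicity_eq_count_normalizedFactors hP hf0,
      hPm.normalize_eq_self]
    norm_cast
  have hstep : ∀ m ∈ Finset.Icc 1 n, (∑ P ∈ irredDvd K m,
      if P ^ (m / P.natDegree) ∣ f then P.natDegree else 0) =
      ∑ P ∈ U, if P.natDegree ∣ m ∧ P ^ (m / P.natDegree) ∣ f then P.natDegree else 0 := by
    intro m hm
    have hm1 := (Finset.mem_Icc.1 hm).1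
    rw [← Finset.sum_filter, ← Finset.sum_filter]
    refine Finset.sum_congr ?_ fun _ _ => rfl
    ext P
    simp only [Finset.mem_filter, mem_irredDvd]
    constructor
    · rintro ⟨⟨h1, h2, h3, h4⟩, h5⟩
      refine ⟨?_, h3, h5⟩
      rw [hU, Multiset.mem_toFinset, ← Multiset.count_pos]
      refine lt_of_lt_of_le ?_ ((hcount P h1 h2 _).1 h5)
      exact Nat.div_pos (Nat.le_of_dvd (by omega) h3) h2.natDegree_pos
    · rintro ⟨h1, h2, h3⟩
      exact ⟨⟨(hUmem P h1).1, (hUmem P h1).2, h2, by omega⟩, h3⟩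
  rw [Finset.sum_congr rfl hstep, Finset.sum_comm]
  have hdeg : n = ∑ P ∈ U, (normalizedFactors f).count P * P.natDegree := by
    have h1 : (normalizedFactors f).prod = f := by
      rw [prod_normalizedFactors_eq hf0, hfm.normalize_eq_self]
    have h2 := natDegree_multiset_prod (normalizedFactors f) (zero_notMem_normalizedFactors f)
    rw [h1, hfd, Finset.sum_multiset_map_count] at h2
    simpa only [smul_eq_mul] using h2
  conv_lhs => rw [hdeg]
  refine Finset.sum_congr rfl fun P hP => ?_
  obtain ⟨hPm, hPi⟩ := hUmem P hP
  have hd := hPi.natDegree_pos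
  rw [← Finset.sum_filter, Finset.sum_const, smul_eq_mul]
  congr 1
  have : (Finset.Icc 1 n).filter (fun m => P.natDegree ∣ m ∧ P ^ (m / P.natDegree) ∣ f) =
      (Finset.Icc 1 ((normalizedFactors f).count P)).image (fun k => P.natDegree * k) := by
    ext m
    simp only [Finset.mem_filter, Finset.mem_Icc, Finset.mem_image]
    constructor
    · rintro ⟨⟨h1, h2⟩, ⟨k, rfl⟩, h4⟩
      rw [Nat.mul_div_cancel_left _ hd, hcount P hPm hPi] at h4
      exact ⟨k, ⟨Nat.pos_of_mul_pos_left (a := P.natDegree) (by omega), h4⟩, rfl⟩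
    · rintro ⟨k, ⟨h1, h2⟩, rfl⟩
      have h3 : P ^ k ∣ f := (hcount P hPm hPi k).2 h2
      have h4 := natDegree_le_of_dvd h3 hf0
      rw [natDegree_pow, hfd] at h4
      refine ⟨⟨Nat.mul_pos hd h1, by rw [mul_comm]; exact h4⟩, dvd_mul_right _ _, ?_⟩
      rwa [Nat.mul_div_cancel_left _ hd]
  rw [this, Finset.card_image_of_injective _ (fun a b h => Nat.eq_of_mul_eq_mul_left hd h)]
  simp

/-- The sum of a completely multiplicative function over the monic polynomials of degree `n`:
the coefficient of `T ^ n` in the `L`-function of `Y`. -/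
noncomputable def Lcoeff (Y : K[X] →* ℂ) (n : ℕ) : ℂ := ∑ f ∈ monicDeg K n, Y f

/-- The coefficient of `T ^ m` in the logarithmic derivative `T L'/L` of the `L`-function
of `Y`. -/
noncomputable def psum (Y : K[X] →* ℂ) (m : ℕ) : ℂ :=
  ∑ P ∈ irredDvd K m, P.natDegree * Y P ^ (m / P.natDegree)

theorem Lcoeff_zero (Y : K[X] →* ℂ) : Lcoeff Y 0 = 1 := by
  have : monicDeg K 0 = {1} := by
    ext f
    rw [mem_monicDeg, Finset.mem_singleton]
    constructor
    · rintro ⟨h1, h2⟩; exact h1.natDegree_eq_zero.1 h2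
    · rintro rfl; exact ⟨monic_one, natDegree_one⟩
  rw [Lcoeff, this, Finset.sum_singleton, map_one]

/-- The Euler product, in the form of the identity `T L' = L · (T L'/L)`. -/
theorem newton_Lcoeff (Y : K[X] →* ℂ) (n : ℕ) :
    (n : ℂ) * Lcoeff Y n = ∑ m ∈ Finset.Icc 1 n, psum Y m * Lcoeff Y (n - m) := by
  classical
  have h1 : (n : ℂ) * Lcoeff Y n = ∑ f ∈ monicDeg K n, ∑ m ∈ Finset.Icc 1 n,
      ∑ P ∈ irredDvd K m, if P ^ (m / P.natDegree) ∣ f then P.natDegree * Y f else 0 := by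
    rw [Lcoeff, Finset.mul_sum]
    refine Finset.sum_congr rfl fun f hf => ?_
    have := congrArg (Nat.cast : ℕ → ℂ) (degree_eq_sum_primePowers hf)
    push_cast at this
    conv_lhs => rw [this]
    rw [Finset.sum_mul]
    refine Finset.sum_congr rfl fun m _ => ?_
    rw [Finset.sum_mul]
    refine Finset.sum_congr rfl fun P _ => ?_
    split_ifs <;> simp
  rw [h1, Finset.sum_comm]
  refine Finset.sum_congr rfl fun m hm => ?_
  have hmn := (Finset.mem_Icc.1 hm).2
  rw [Finset.sum_comm, psum, Finset.sum_mul]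
  refine Finset.sum_congr rfl fun P hP => ?_
  obtain ⟨hPm, hPi, hPd, _⟩ := mem_irredDvd.1 hP
  have hQm : (P ^ (m / P.natDegree)).Monic := hPm.pow _
  have hQd : (P ^ (m / P.natDegree)).natDegree = m := by
    rw [natDegree_pow, Nat.div_mul_cancel hPd]
  rw [← Finset.sum_filter, Lcoeff, mul_assoc, Finset.mul_sum, Finset.mul_sum]
  symm
  refine Finset.sum_bij (fun g _ => P ^ (m / P.natDegree) * g) ?_ ?_ ?_ ?_
  · intro g hg
    obtain ⟨hg1, hg2⟩ := mem_monicDeg.1 hg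
    rw [Finset.mem_filter, mem_monicDeg]
    refine ⟨⟨hQm.mul hg1, ?_⟩, dvd_mul_right _ _⟩
    rw [hQm.natDegree_mul hg1, hQd, hg2]; omega
  · intro g _ g' _ h
    exact mul_left_cancel₀ hQm.ne_zero h
  · intro f hf
    obtain ⟨hf1, g, rfl⟩ := Finset.mem_filter.1 hf
    obtain ⟨hf2, hf3⟩ := mem_monicDeg.1 hf1
    have hg : g.Monic := hQm.of_mul_monic_left hf2
    refine ⟨g, mem_monicDeg.2 ⟨hg, ?_⟩, rfl⟩
    rw [hQm.natDegree_mul hg, hQd] at hf3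
    omega
  · intro g _
    rw [map_mul, map_pow]; try ring

end Newton

end

/-! ### The `L`-function of a product of characters -/

section

open Polynomial

/-- The norm of `z - a` is the value at `z` of the characteristic polynomial of `a`, a power of the
minimal polynomial. -/
theorem norm_sub_eq {K E : Type*} [Field K] [Field E] [Fintype E] [Algebra K E] (a : E) (z : K) :
    Algebra.norm K (algebraMap K E z - a) =
      ((minpoly K a).eval z) ^ (Module.finrank K E / (minpoly K a).natDegree) := by
  have : Module.Finite K E := Module.Finite.of_finite
  have hint : ∀ b : E, IsIntegral K b := fun b => Algebra.IsIntegral.isIntegral b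
  set b := a - algebraMap K E z with hb
  set d := (minpoly K a).natDegree with hd
  have hmb : minpoly K b = (minpoly K a).comp (X + C z) := minpoly.sub_algebraMap a z
  have hdb : (minpoly K b).natDegree = d := by
    rw [hmb, natDegree_comp, natDegree_X_add_C, mul_one]
  have hd0 : 0 < d := minpoly.natDegree_pos (hint a)
  have hfr : Module.finrank K (IntermediateField.adjoin K {b}) = d := by
    rw [IntermediateField.adjoin.finrank (hint b), hdb]
  have hfr2 : Module.finrank (IntermediateField.adjoin K {b}) E = Module.finrank K E / d := by
    rw [← Module.finrank_mul_finrank K (IntermediateField.adjoin K {b}) E, hfr,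
      Nat.mul_div_cancel_left _ hd0]
  have hdvd : d ∣ Module.finrank K E := by
    rw [← Module.finrank_mul_finrank K (IntermediateField.adjoin K {b}) E, hfr]
    exact dvd_mul_right _ _
  have hnb : Algebra.norm K b = ((-1) ^ d * (minpoly K a).eval z) ^ (Module.finrank K E / d) := by
    rw [Algebra.norm_eq_norm_adjoin, hfr2]
    congr 1
    have h1 := Algebra.PowerBasis.norm_gen_eq_coeff_zero_minpoly
      (IntermediateField.adjoin.powerBasis (hint b))
    rw [IntermediateField.adjoin.powerBasis_gen, ← PowerBasis.finrank, hfr,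
      IntermediateField.minpoly_gen, hmb, coeff_zero_eq_eval_zero, eval_comp] at h1
    simpa using h1
  have : algebraMap K E z - a = algebraMap K E (-1) * b := by
    rw [hb]; simp
  rw [this, map_mul, Algebra.norm_algebraMap, hnb, mul_pow, ← pow_mul, Nat.mul_div_cancel' hdvd,
    ← mul_assoc, ← mul_pow]
  simp

section Characters

variable {K ι : Type*} [Field K] [Fintype ι]

/-- The completely multiplicative function `f ↦ ∏ i, χ i (f (z i))` on `K[X]`. -/
noncomputable def charHom (χ : ι → MulChar K ℂ) (z : ι → K) : K[X] →* ℂ where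
  toFun f := ∏ i, χ i (f.eval (z i))
  map_one' := by simp
  map_mul' f g := by simp [Finset.prod_mul_distrib]

theorem charHom_apply (χ : ι → MulChar K ℂ) (z : ι → K) (f : K[X]) :
    charHom χ z f = ∏ i, χ i (f.eval (z i)) := rfl

variable [Finite K]

/-- The `L`-function of a nontrivial `charHom` is a polynomial of degree less than the number
of points: modifying the value of `f` at a single point `z i₀` permutes the monic polynomials of
degree `n` and multiplies the sum by a number other than `1`. -/
theorem Lcoeff_eq_zero (χ : ι → MulChar K ℂ) (z : ι → K) (hz : Function.Injective z)
    (i₀ : ι) (hχ : χ i₀ ≠ 1) (n : ℕ) (hn : Fintype.card ι ≤ n) :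
    Lcoeff (charHom χ z) n = 0 := by
  classical
  obtain ⟨u, hu⟩ : ∃ u : Kˣ, χ i₀ u ≠ 1 := by
    by_contra! h
    exact hχ (MulChar.ext fun u => by rw [h u, MulChar.one_apply_coe])
  set B := Lagrange.basis Finset.univ z i₀ with hB
  have hzs : Set.InjOn z (Finset.univ : Finset ι) := hz.injOn
  have hB1 : B.eval (z i₀) = 1 := Lagrange.eval_basis_self hzs (Finset.mem_univ _)
  have hB0 : ∀ j, j ≠ i₀ → B.eval (z j) = 0 := fun j hj =>
    Lagrange.eval_basis_of_ne (Ne.symm hj) (Finset.mem_univ _)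
  have hBd : B.degree < n := by
    rw [hB, Lagrange.degree_basis hzs (Finset.mem_univ _), Finset.card_univ]
    have : 0 < Fintype.card ι := Fintype.card_pos_iff.2 ⟨i₀⟩
    exact_mod_cast (by omega : Fintype.card ι - 1 < n)
  let τ : Kˣ → K[X] → K[X] := fun v f => f + C (((v : K) - 1) * f.eval (z i₀)) * B
  have hτ0 : ∀ v f, (τ v f).eval (z i₀) = v * f.eval (z i₀) := by
    intro v f; simp only [τ, eval_add, eval_mul, eval_C, hB1]; ring
  have hτj : ∀ v f j, j ≠ i₀ → (τ v f).eval (z j) = f.eval (z j) := by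
    intro v f j hj; simp only [τ, eval_add, eval_mul, eval_C, hB0 j hj]; ring
  have hτinv : ∀ v f, τ v⁻¹ (τ v f) = f := by
    intro v f
    have h1 : τ v⁻¹ (τ v f) = τ v f + C (((v⁻¹ : Kˣ) - 1 : K) * (τ v f).eval (z i₀)) * B := rfl
    rw [h1, hτ0]
    simp only [τ]
    rw [add_assoc, ← add_mul, ← C_add]
    have : ((v : K) - 1) * f.eval (z i₀) + ((v⁻¹ : Kˣ) - 1 : K) * (v * f.eval (z i₀)) = 0 := by
      have : ((v⁻¹ : Kˣ) : K) * v = 1 := by simp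
      linear_combination (f.eval (z i₀)) * this
    rw [this]; simp
  have hτM : ∀ v, ∀ f ∈ monicDeg K n, τ v f ∈ monicDeg K n := by
    intro v f hf
    obtain ⟨h1, h2⟩ := mem_monicDeg.1 hf
    have h3 : (C (((v : K) - 1) * f.eval (z i₀)) * B).degree < f.degree := by
      rw [degree_eq_natDegree h1.ne_zero, h2]
      refine lt_of_le_of_lt ?_ hBd
      rw [C_mul']
      exact degree_smul_le _ _
    rw [mem_monicDeg]
    exact ⟨h1.add_of_left h3, by rw [natDegree_add_eq_left_of_degree_lt h3, h2]⟩
  have hval : ∀ f, charHom χ z (τ u f) = χ i₀ u * charHom χ z f := by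
    intro f
    rw [charHom_apply, charHom_apply, ← Finset.mul_prod_erase _ _ (Finset.mem_univ i₀),
      ← Finset.mul_prod_erase _ (fun i => χ i (f.eval (z i))) (Finset.mem_univ i₀), hτ0,
      map_mul, mul_assoc]
    congr 2
    refine Finset.prod_congr rfl fun j hj => ?_
    rw [hτj _ _ _ (Finset.ne_of_mem_erase hj)]
  have hsum : Lcoeff (charHom χ z) n = χ i₀ u * Lcoeff (charHom χ z) n := by
    conv_lhs => rw [Lcoeff]
    rw [Lcoeff, Finset.mul_sum]
    symm
    refine Finset.sum_bij' (fun f _ => τ u f) (fun f _ => τ u⁻¹ f) (hτM u) (hτM u⁻¹)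
      (fun f _ => hτinv u f) (fun f _ => ?_) (fun f _ => (hval f).symm)
    have := hτinv u⁻¹ f
    rwa [inv_inv] at this
  have : (1 - χ i₀ u) * Lcoeff (charHom χ z) n = 0 := by
    linear_combination hsum
  exact (mul_eq_zero.1 this).resolve_left (sub_ne_zero.2 (Ne.symm hu))

variable {E : Type*} [Field E] [Fintype E] [Algebra K E]

theorem card_aroots_eq [DecidableEq E] [DecidableEq K[X]] {P : K[X]}
    (hP : P ∈ irredDvd K (Module.finrank K E)) :
    (Finset.univ.filter fun a : E => minpoly K a = P).card = P.natDegree := by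
  obtain ⟨hPm, hPi, hPd, _⟩ := mem_irredDvd.1 hP
  have : Module.Finite K E := Module.Finite.of_finite
  have h1 : P ∣ X ^ Fintype.card E - X := by
    have := hPi.natDegree_dvd_iff_dvd_X_pow_card_pow_sub_X.1 hPd
    rwa [← Module.natCard_eq_pow_finrank, Nat.card_eq_fintype_card] at this
  have hne : (X ^ Fintype.card E - X : E[X]) ≠ 0 :=
    FiniteField.X_pow_card_sub_X_ne_zero E Fintype.one_lt_card
  have hs : (X ^ Fintype.card E - X : E[X]).Splits := by
    rw [splits_iff_card_roots, FiniteField.roots_X_pow_card_sub_X,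
      FiniteField.X_pow_card_sub_X_natDegree_eq _ Fintype.one_lt_card]
    rfl
  have hs' : (P.map (algebraMap K E)).Splits := by
    refine hs.of_dvd hne ?_
    have := map_dvd (mapRingHom (algebraMap K E)) h1
    simpa using this
  have hc := card_rootSet_eq_natDegree (PerfectField.separable_of_irreducible hPi) hs'
  rw [← hc, ← Set.toFinset_card]
  congr 1
  ext a
  rw [Finset.mem_filter, Set.mem_toFinset, mem_rootSet_of_ne hPm.ne_zero]
  constructor
  · rintro ⟨_, rfl⟩; exact minpoly.aeval K a
  · intro h
    exact ⟨Finset.mem_univ _, (minpoly.eq_of_irreducible_of_monic hPi h hPm).symm⟩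

/-- The coefficients of the logarithmic derivative of the `L`-function are character sums over
the extensions of `K`. -/
theorem psum_eq_extension (χ : ι → MulChar K ℂ) (z : ι → K) :
    psum (charHom χ z) (Module.finrank K E) =
      ∑ a : E, ∏ i, χ i (Algebra.norm K (algebraMap K E (z i) - a)) := by
  classical
  have : Module.Finite K E := Module.Finite.of_finite
  have h1 : ∀ a : E, minpoly K a ∈ irredDvd K (Module.finrank K E) := by
    intro a
    have hint : IsIntegral K a := Algebra.IsIntegral.isIntegral a
    refine mem_irredDvd.2 ⟨minpoly.monic hint, minpoly.irreducible hint, ?_,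
      Module.finrank_pos.ne'⟩
    exact minpoly.degree_dvd hint
  rw [psum, ← Finset.sum_fiberwise_of_maps_to (s := Finset.univ) (fun a _ => h1 a)]
  refine Finset.sum_congr rfl fun P hP => ?_
  have h2 : ∀ a ∈ Finset.univ.filter (fun a : E => minpoly K a = P),
      (∏ i, χ i (Algebra.norm K (algebraMap K E (z i) - a))) =
        charHom χ z P ^ (Module.finrank K E / P.natDegree) := by
    intro a ha
    have ha' := (Finset.mem_filter.1 ha).2
    rw [charHom_apply, ← Finset.prod_pow]
    refine Finset.prod_congr rfl fun i _ => ?_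
    rw [norm_sub_eq, ha', map_pow]
  rw [Finset.sum_congr rfl h2, Finset.sum_const, card_aroots_eq hP, nsmul_eq_mul]

end Characters

theorem psum_one {K ι : Type*} [Field K] [Fintype K] [Fintype ι] (χ : ι → MulChar K ℂ)
    (z : ι → K) : psum (charHom χ z) 1 = ∑ a : K, ∏ i, χ i (z i - a) := by
  have := psum_eq_extension (E := K) χ z
  rw [Module.finrank_self] at this
  rw [this]
  simp [Algebra.norm_self]

end

/-! ### Reciprocal roots -/

section

open Polynomial

/-- Newton's identities: a sequence `s` related to the coefficients `A` of a polynomial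
`∑ A n T ^ n` of degree at most `d` by `n A n = ∑ s m A (n - m)` is the negated sequence of power
sums of the reciprocal roots. -/
theorem exists_reciprocal_roots (A s : ℕ → ℂ) (d : ℕ) (hA0 : A 0 = 1) (hA : ∀ n, d < n → A n = 0)
    (hN : ∀ n : ℕ, (n : ℂ) * A n = ∑ m ∈ Finset.Icc 1 n, s m * A (n - m)) :
    ∃ ω : Fin d → ℂ, ∀ m, 0 < m → s m = -∑ j, ω j ^ m := by
  set p : ℂ[X] := X ^ d + ∑ j ∈ Finset.range d, C (A (d - j)) * X ^ j with hp
  have hlow : (∑ j ∈ Finset.range d, C (A (d - j)) * X ^ j : ℂ[X]).degree < d := by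
    refine (degree_sum_le _ _).trans_lt ((Finset.sup_lt_iff (WithBot.bot_lt_coe d)).2 ?_)
    intro j hj
    exact (degree_C_mul_X_pow_le _ _).trans_lt (Nat.cast_lt.2 (Finset.mem_range.1 hj))
  have hpm : p.Monic := monic_X_pow_add hlow
  have hpd : p.natDegree = d := natDegree_eq_of_degree_eq_some (by
    rw [hp, degree_add_eq_left_of_degree_lt (by rwa [degree_X_pow]), degree_X_pow])
  have hcoeff : ∀ j, j ≤ d → p.coeff j = A (d - j) := by
    intro j hj
    rw [hp, coeff_add, coeff_X_pow, finsetSum_coeff]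
    simp only [coeff_C_mul_X_pow]
    rw [Finset.sum_ite_eq]
    rcases hj.eq_or_lt with rfl | h
    · simp [hA0]
    · rw [if_neg h.ne, if_pos (Finset.mem_range.2 h), zero_add]
  have hcard : p.roots.card = d := by
    rw [splits_iff_card_roots.1 (IsAlgClosed.splits p), hpd]
  obtain ⟨ω, hω⟩ : ∃ ω : Fin d → ℂ, Finset.univ.val.map ω = p.roots := by
    refine ⟨fun j => p.roots.toList.get (j.cast (by rw [Multiset.length_toList, hcard])), ?_⟩
    have h1 := List.ofFn_get p.roots.toList
    have : (List.ofFn fun j : Fin d =>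
        p.roots.toList.get (j.cast (by rw [Multiset.length_toList, hcard]))) = p.roots.toList := by
      refine List.ext_get (by simp [hcard]) fun n h1 h2 => by simp
    conv_rhs => rw [← Multiset.coe_toList p.roots, ← this]
    rw [Fin.univ_val_map]
  have hAe : ∀ n, A n = (-1) ^ n * p.roots.esymm n := by
    intro n
    rcases le_or_gt n d with h | h
    · have h1 := coeff_eq_esymm_roots_of_card (p := p) (by rw [hcard, hpd]) (k := d - n)
        (by rw [hpd]; omega)
      rw [hcoeff _ (by omega), hpm.leadingCoeff, hpd, Nat.sub_sub_self h, one_mul] at h1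
      exact h1
    · rw [hA n h, Multiset.esymm, Multiset.powersetCard_eq_empty _ (by rw [hcard]; exact h)]
      simp
  have hNewton : ∀ n : ℕ, (n : ℂ) * A n = ∑ m ∈ Finset.Icc 1 n, (-∑ j, ω j ^ m) * A (n - m) := by
    intro n
    have h1 := congrArg (MvPolynomial.aeval ω) (MvPolynomial.mul_esymm_eq_sum (Fin d) ℂ n)
    simp only [map_mul, map_natCast, map_pow, map_neg, map_one, map_sum,
      MvPolynomial.aeval_esymm_eq_multiset_esymm, hω, MvPolynomial.psum,
      MvPolynomial.aeval_X] at h1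
    have h2 : ∀ a ∈ (Finset.HasAntidiagonal.antidiagonal n).filter (fun a => a.1 < n),
        (-1) ^ a.1 * p.roots.esymm a.1 * ∑ j, ω j ^ a.2 = A a.1 * ∑ j, ω j ^ a.2 := by
      intro a _; rw [hAe a.1]
    rw [Finset.sum_congr rfl h2] at h1
    rw [hAe n]
    calc (n : ℂ) * ((-1) ^ n * p.roots.esymm n) = (-1) ^ n * (n * p.roots.esymm n) := by ring
      _ = -∑ a ∈ (Finset.HasAntidiagonal.antidiagonal n).filter (fun a => a.1 < n),
          A a.1 * ∑ j, ω j ^ a.2 := by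
        rw [h1, ← mul_assoc, ← pow_add]
        have : (-1 : ℂ) ^ (n + (n + 1)) = -1 := Odd.neg_one_pow ⟨n, by ring⟩
        rw [this, neg_one_mul]
      _ = _ := by
        rw [← Finset.sum_neg_distrib]
        refine Finset.sum_bij' (fun a _ => a.2) (fun m _ => (n - m, m)) ?_ ?_ ?_ ?_ ?_
        · intro a ha
          simp only [Finset.mem_filter, Finset.HasAntidiagonal.mem_antidiagonal] at ha
          rw [Finset.mem_Icc]; omega
        · intro m hm
          rw [Finset.mem_Icc] at hm
          simp only [Finset.mem_filter, Finset.HasAntidiagonal.mem_antidiagonal]; omega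
        · intro a ha
          simp only [Finset.mem_filter, Finset.HasAntidiagonal.mem_antidiagonal] at ha
          ext <;> simp; omega
        · intro m _; rfl
        · intro a ha
          simp only [Finset.mem_filter, Finset.HasAntidiagonal.mem_antidiagonal] at ha
          rw [show n - a.2 = a.1 by omega]; ring
  refine ⟨ω, fun m => ?_⟩
  induction m using Nat.strong_induction_on with
  | _ m ih =>
    intro hm
    have h := (hN m).symm.trans (hNewton m)
    obtain ⟨x, rfl⟩ : ∃ x, m = x + 1 := ⟨m - 1, by omega⟩
    rw [Finset.sum_Icc_succ_top (by omega), Finset.sum_Icc_succ_top (by omega), Nat.sub_self,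
      hA0, mul_one, mul_one] at h
    have h2 : ∑ k ∈ Finset.Icc 1 x, s k * A (x + 1 - k) =
        ∑ k ∈ Finset.Icc 1 x, (-∑ j, ω j ^ k) * A (x + 1 - k) := by
      refine Finset.sum_congr rfl fun k hk => ?_
      rw [Finset.mem_Icc] at hk
      rw [ih k (by omega) (by omega)]
    rw [h2] at h
    exact add_left_cancel h

/-- If the power sums `∑ ω j ^ m` are `O(B ^ m)` along the even exponents, then all `|ω j|` are
at most `B`: infinitely many even powers of the arguments of the `ω j` are simultaneously close
to `1`, and for these there is no cancellation in the power sum. -/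
theorem norm_le_of_psum_bound {d : ℕ} (ω : Fin d → ℂ) (B C : ℝ) (hB : 0 < B) (k₀ : ℕ)
    (h : ∀ k, k₀ ≤ k → ‖∑ j, ω j ^ (2 * k)‖ ≤ C * B ^ (2 * k)) (j : Fin d) : ‖ω j‖ ≤ B := by
  by_contra! hj
  let v : Fin d → Circle := fun j => Circle.exp (Complex.arg (ω j))
  have hv : ∀ j, ω j = ‖ω j‖ * (v j : ℂ) := fun j => by
    rw [Circle.coe_exp, Complex.norm_mul_exp_arg_mul_I]
  -- the powers of the unit parts return to a neighbourhood of `1` infinitely often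
  have hU : {w : Fin d → Circle | ∀ j, 1 / 2 < (w j : ℂ).re} ∈ nhds (1 : Fin d → Circle) := by
    refine IsOpen.mem_nhds ?_ (fun j => by norm_num)
    simp only [Set.ofPred_forall]
    exact isOpen_iInter_of_finite fun j => isOpen_lt continuous_const (by fun_prop)
  have hfreq := (mapClusterPt_one_atTop_pow (v ^ 2)).frequently hU
  have hlim : Filter.Tendsto (fun k : ℕ => (‖ω j‖ ^ 2 / B ^ 2) ^ k) Filter.atTop Filter.atTop :=
    tendsto_pow_atTop_atTop_of_one_lt ((one_lt_div (by positivity)).2 (by gcongr))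
  obtain ⟨k, hk, hk1, hk2⟩ := (hfreq.and_eventually
    ((Filter.eventually_ge_atTop k₀).and (hlim.eventually_gt_atTop (2 * C)))).exists
  have h1 := h k hk1
  have h2 : ∀ i, ‖ω i‖ ^ (2 * k) * (1 / 2) ≤ (ω i ^ (2 * k)).re := by
    intro i
    have h3 : ω i ^ (2 * k) = ((‖ω i‖ ^ (2 * k) : ℝ) : ℂ) * (((v ^ 2) ^ k) i : Circle) := by
      conv_lhs => rw [hv i]
      rw [mul_pow, ← pow_mul]
      push_cast
      simp
    rw [h3, Complex.re_ofReal_mul]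
    exact mul_le_mul_of_nonneg_left (hk i).le (by positivity)
  have h4 : ‖ω j‖ ^ (2 * k) * (1 / 2) ≤ C * B ^ (2 * k) :=
    calc ‖ω j‖ ^ (2 * k) * (1 / 2) ≤ ∑ i, ‖ω i‖ ^ (2 * k) * (1 / 2) :=
          Finset.single_le_sum (f := fun i => ‖ω i‖ ^ (2 * k) * (1 / 2))
            (fun i _ => by positivity) (Finset.mem_univ j)
      _ ≤ ∑ i, (ω i ^ (2 * k)).re := Finset.sum_le_sum fun i _ => h2 i
      _ = (∑ i, ω i ^ (2 * k)).re := by rw [Complex.re_sum]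
      _ ≤ ‖∑ i, ω i ^ (2 * k)‖ := Complex.re_le_norm _
      _ ≤ _ := h1
  have h5 : 2 * C * B ^ (2 * k) < ‖ω j‖ ^ (2 * k) := by
    rw [← div_pow, ← pow_mul, div_pow, lt_div_iff₀ (by positivity)] at hk2
    exact hk2
  linarith

end

/-! ### Weil's bound -/

section

open Polynomial

/-- The kernel of a character of order `R` on the cyclic group `Kˣ` consists of the elements killed
by `(q - 1) / R`. -/
theorem pow_eq_pow_of_mulChar_eq {K : Type*} [Field K] [Fintype K] (θ : MulChar K ℂ) {x y : K}
    (hx : x ≠ 0) (hy : y ≠ 0) (h : θ x = θ y) :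
    x ^ ((Fintype.card K - 1) / orderOf θ) = y ^ ((Fintype.card K - 1) / orderOf θ) := by
  classical
  obtain ⟨g, hg'⟩ := IsCyclic.exists_generator (α := Kˣ)
  set u : Kˣ := Units.mk0 x hx * (Units.mk0 y hy)⁻¹ with hu
  have hxu : x = u * y := by simp [hu, hy]
  obtain ⟨m, hm⟩ := mem_powers_iff_mem_zpowers.2 (hg' u)
  have hθu : θ u = 1 := by
    have h1 : θ u * θ y = θ y := by rw [← map_mul, ← hxu, h]
    have h2 : θ y ≠ 0 := MulChar.apply_ne_zero_iff.2 hy.isUnit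
    exact mul_right_cancel₀ h2 (by rw [h1, one_mul])
  have hd : orderOf θ ∣ m := by
    rw [orderOf_dvd_iff_pow_eq_one]
    rw [MulChar.eq_iff hg', MulChar.pow_apply_coe, MulChar.one_apply_coe, ← map_pow]
    rw [← hθu, ← hm]; simp
  have hR : orderOf θ ∣ Fintype.card K - 1 := MulChar.orderOf_dvd_card_sub_one _ θ
  have hu1 : (u : K) ^ ((Fintype.card K - 1) / orderOf θ) = 1 := by
    obtain ⟨c, rfl⟩ := hd
    simp only at hm
    rw [← hm, ← Units.val_pow_eq_pow_val, ← pow_mul]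
    have : orderOf θ * c * ((Fintype.card K - 1) / orderOf θ) = (Fintype.card K - 1) * c := by
      rw [mul_right_comm, Nat.mul_div_cancel' hR]
    rw [this, pow_mul, ← Fintype.card_units, pow_card_eq_one, one_pow, Units.val_one]
  rw [hxu, mul_pow, hu1, one_mul]

/-- Stepanov's upper bound for the individual values of a character turns into a bound for the
character sum, because the values are roots of unity, whose sum is zero. -/
theorem norm_charSum_le {K E ι : Type*} [Field K] [Fintype K] [Field E] [Fintype E] [Algebra K E]
    [Fintype ι] (p k P : ℕ) [Fact p.Prime] [CharP E p] (hPp : P = p ^ k)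
    (hcard : Fintype.card E = P ^ 2) (hqP : ∃ m, P = Fintype.card K ^ m) (θ : MulChar K ℂ)
    (hR : 1 < orderOf θ) (z : ι → K) (hz : Function.Injective z) (e : ι → ℕ)
    (hgcd : ∀ m, (∀ i, orderOf θ ∣ m * e i) → orderOf θ ∣ m)
    (hPbig : 4 * orderOf θ * (orderOf θ * (∑ i, e i)) + 4 * (∑ i, e i) + 5 < P) :
    ‖∑ a : E, ∏ i, (θ ^ e i) (Algebra.norm K (algebraMap K E (z i) - a))‖ ≤
      (1 + orderOf θ * (4 * (∑ i, e i) + 5) + orderOf θ * ∑ i, e i + Fintype.card ι : ℕ) * P := by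
  classical
  obtain ⟨R, hRdef⟩ : ∃ R, R = orderOf θ := ⟨_, rfl⟩
  rw [← hRdef] at hR hgcd hPbig ⊢
  set q := Fintype.card K with hq
  have hq1 : 1 < q := Fintype.one_lt_card
  have hRq : R ∣ q - 1 := hRdef ▸ MulChar.orderOf_dvd_card_sub_one _ θ
  obtain ⟨m, hm⟩ := hqP
  have hqP1 : q - 1 ∣ P - 1 := by rw [hm]; simpa using Nat.sub_dvd_pow_sub_pow q 1 m
  obtain ⟨t, ht⟩ : R ∣ P - 1 := hRq.trans hqP1
  have hPt : P = R * t + 1 := by omega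
  set z' : ι → E := fun i => algebraMap K E (z i) with hz'
  have hz'i : Function.Injective z' := (algebraMap K E).injective.comp hz
  have hz'P : ∀ i, z' i ^ P = z' i := by
    intro i
    rw [hz', hm]
    simp only
    rw [← map_pow, FiniteField.pow_card_pow]
  set F := Fpoly z' e with hF
  obtain ⟨C₀, hC₀⟩ : ∃ C₀, C₀ = 1 + R * (4 * (∑ i, e i) + 5) + R * ∑ i, e i := ⟨_, rfl⟩
  rw [← hC₀]
  have hst : ∀ c : E, c ≠ 0 →
      R * (Finset.univ.filter fun a => (F.eval a) ^ (t * (P + 1)) = c).card ≤ P ^ 2 + C₀ * P := by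
    intro c hc
    rw [hC₀]
    exact stepanov p k P hPp hcard z' hz'i hz'P e R t (by omega) hPt hgcd hPbig c hc
  set G : Finset E := Finset.univ.filter fun a => ∀ i, z' i ≠ a with hG
  have hFG : ∀ a ∈ G, F.eval a ≠ 0 := by
    intro a ha
    rw [hF, Fpoly, eval_prod]
    refine Finset.prod_ne_zero_iff.2 fun i _ => ?_
    rw [eval_pow, eval_sub, eval_C, eval_X]
    exact pow_ne_zero _ (sub_ne_zero.2 ((Finset.mem_filter.1 ha).2 i))
  have hnorm0 : ∀ x : E, x ≠ 0 → Algebra.norm K x ≠ 0 := fun x hx =>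
    (Algebra.norm_ne_zero_iff (R := K)).2 hx
  set v : E → ℂ := fun a => θ (Algebra.norm K (F.eval a)) with hv
  have hterm : ∀ a ∈ G, (∏ i, (θ ^ e i) (Algebra.norm K (z' i - a))) = v a := by
    intro a ha
    rw [hv]
    simp only [hF, Fpoly, eval_prod, eval_pow, eval_sub, eval_C, eval_X, map_prod, map_pow]
    refine Finset.prod_congr rfl fun i _ => ?_
    have h1 := hnorm0 _ (sub_ne_zero.2 ((Finset.mem_filter.1 ha).2 i))
    exact MulChar.pow_apply_coe θ (e i) (Units.mk0 _ h1)
  have hterm0 : ∀ a, a ∉ G → (∏ i, (θ ^ e i) (Algebra.norm K (z' i - a))) = 0 := by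
    intro a ha
    simp only [hG, Finset.mem_filter, Finset.mem_univ, true_and, not_forall, not_not] at ha
    obtain ⟨i, hi⟩ := ha
    refine Finset.prod_eq_zero (Finset.mem_univ i) ?_
    rw [hi, sub_self, Algebra.norm_zero, MulChar.map_zero]
  have hsum : ∑ a : E, ∏ i, (θ ^ e i) (Algebra.norm K (z' i - a)) = ∑ a ∈ G, v a := by
    rw [← Finset.sum_congr rfl hterm]
    symm
    exact Finset.sum_subset (Finset.subset_univ _) fun a _ ha => hterm0 a ha
  obtain ⟨Ω, hΩ⟩ : ∃ Ω : ℂ, IsPrimitiveRoot Ω R := ⟨_, Complex.isPrimitiveRoot_exp R (by omega)⟩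
  set V := nthRootsFinset R (1 : ℂ) with hV
  have hVsum : ∑ ρ ∈ V, ρ = 0 := by
    rw [← hΩ.geom_sum_eq_zero hR]
    symm
    refine Finset.sum_bij (fun i _ => Ω ^ i) ?_ ?_ ?_ (fun _ _ => rfl)
    · intro i _
      rw [hV, mem_nthRootsFinset (by omega), ← pow_mul, mul_comm, pow_mul, hΩ.pow_eq_one, one_pow]
    · intro i hi j hj h
      exact hΩ.pow_inj (Finset.mem_range.1 hi) (Finset.mem_range.1 hj) h
    · intro ρ hρ
      rw [hV, mem_nthRootsFinset (by omega)] at hρ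
      have : NeZero R := ⟨by omega⟩
      obtain ⟨i, hi, h⟩ := hΩ.eq_pow_of_pow_eq_one hρ
      exact ⟨i, Finset.mem_range.2 hi, h⟩
  have hVcard : V.card = R := hΩ.card_nthRootsFinset
  have hvV : ∀ a ∈ G, v a ∈ V := by
    intro a ha
    rw [hV, mem_nthRootsFinset (by omega), hv]
    have h1 := hnorm0 _ (hFG a ha)
    have := MulChar.pow_apply_coe θ R (Units.mk0 _ h1)
    rw [hRdef, pow_orderOf_eq_one, MulChar.one_apply_coe] at this
    rw [hRdef]; exact this.symm
  set N : ℂ → ℕ := fun ρ => (G.filter fun a => v a = ρ).card with hN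
  have hNle : ∀ ρ, R * N ρ ≤ P ^ 2 + C₀ * P := by
    intro ρ
    rcases (G.filter fun a => v a = ρ).eq_empty_or_nonempty with h | ⟨a₀, ha₀⟩
    · rw [hN]; simp only [h]; simp
    obtain ⟨ha₀G, ha₀v⟩ := Finset.mem_filter.1 ha₀
    refine le_trans (Nat.mul_le_mul_left R ?_)
      (hst ((F.eval a₀) ^ (t * (P + 1))) (pow_ne_zero _ (hFG _ ha₀G)))
    refine Finset.card_le_card fun a ha => ?_
    obtain ⟨haG, hav⟩ := Finset.mem_filter.1 ha
    rw [Finset.mem_filter]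
    refine ⟨Finset.mem_univ _, ?_⟩
    have h1 := pow_eq_pow_of_mulChar_eq θ (hnorm0 _ (hFG _ haG)) (hnorm0 _ (hFG _ ha₀G))
      (show v a = v a₀ by rw [hav, ha₀v])
    have h2 := congrArg (algebraMap K E) h1
    rw [map_pow, map_pow, FiniteField.algebraMap_norm_eq_pow, FiniteField.algebraMap_norm_eq_pow,
      ← pow_mul, ← pow_mul, Nat.card_eq_fintype_card, Nat.card_eq_fintype_card, hcard, ← hq,
      ← hRdef] at h2
    have h3 : (P ^ 2 - 1) / (q - 1) * ((q - 1) / R) = t * (P + 1) := by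
      have h4 : P ^ 2 - 1 = (P - 1) * (P + 1) := by
        have := Nat.sq_sub_sq P 1
        rw [one_pow] at this; rw [this, mul_comm]
      have h5 : q - 1 ∣ P ^ 2 - 1 := h4 ▸ hqP1.mul_right _
      have h6 : R * ((P ^ 2 - 1) / (q - 1) * ((q - 1) / R)) = R * (t * (P + 1)) := by
        rw [mul_left_comm, Nat.mul_div_cancel' hRq, Nat.div_mul_cancel h5, h4, ht, mul_assoc]
      exact Nat.eq_of_mul_eq_mul_left (by omega) h6
    rwa [h3] at h2
  have hGcard : Fintype.card E ≤ G.card + Fintype.card ι := by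
    have h1 : (Finset.univ : Finset E) ⊆ G ∪ Finset.univ.image z' := by
      intro a _
      rw [Finset.mem_union]
      by_cases h : a ∈ G
      · exact Or.inl h
      · right
        simp only [hG, Finset.mem_filter, Finset.mem_univ, true_and, not_forall, not_not] at h
        obtain ⟨i, hi⟩ := h
        exact Finset.mem_image.2 ⟨i, Finset.mem_univ _, hi⟩
    refine (Finset.card_le_card h1).trans ((Finset.card_union_le _ _).trans ?_)
    exact Nat.add_le_add_left Finset.card_image_le _
  have hNsum : ∑ ρ ∈ V, N ρ = G.card := by
    rw [Finset.card_eq_sum_card_fiberwise hvV]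
  -- the common upper bound for the numbers `N ρ`
  set B : ℝ := (P ^ 2 + C₀ * P) / R with hB
  have hR0 : (0 : ℝ) < R := by exact_mod_cast (by omega : 0 < R)
  have hNB : ∀ ρ, (N ρ : ℝ) ≤ B := by
    intro ρ
    rw [hB, le_div_iff₀ hR0, mul_comm]
    exact_mod_cast hNle ρ
  have hvsum : ∑ a ∈ G, v a = ∑ ρ ∈ V, ((N ρ : ℂ) - (B : ℂ)) * ρ := by
    rw [← Finset.sum_fiberwise_of_maps_to hvV]
    simp only [sub_mul]
    rw [Finset.sum_sub_distrib, ← Finset.mul_sum, hVsum, mul_zero, sub_zero]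
    refine Finset.sum_congr rfl fun ρ _ => ?_
    rw [Finset.sum_congr rfl (fun a ha => (Finset.mem_filter.1 ha).2), Finset.sum_const,
      nsmul_eq_mul]
  rw [hsum, hvsum]
  calc ‖∑ ρ ∈ V, ((N ρ : ℂ) - (B : ℂ)) * ρ‖ ≤ ∑ ρ ∈ V, ‖((N ρ : ℂ) - (B : ℂ)) * ρ‖ :=
        norm_sum_le _ _
    _ = ∑ ρ ∈ V, (B - N ρ) := by
        refine Finset.sum_congr rfl fun ρ hρ => ?_
        rw [hV, mem_nthRootsFinset (by omega)] at hρ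
        rw [norm_mul, Complex.norm_eq_one_of_pow_eq_one hρ (by omega), mul_one]
        have : ((N ρ : ℂ) - (B : ℂ)) = ((N ρ - B : ℝ) : ℂ) := by push_cast; rfl
        rw [this, Complex.norm_real, Real.norm_eq_abs, abs_of_nonpos (by linarith [hNB ρ])]
        ring
    _ = P ^ 2 + C₀ * P - G.card := by
        rw [Finset.sum_sub_distrib, Finset.sum_const, hVcard, nsmul_eq_mul, hB,
          mul_div_cancel₀ _ hR0.ne']
        rw [← hNsum]; push_cast; ring
    _ ≤ _ := by
        have h1 : (P : ℝ) ^ 2 ≤ G.card + Fintype.card ι := by rw [hcard] at hGcard; exact_mod_cast hGcard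
        have h2 : (1 : ℝ) ≤ P := by exact_mod_cast (by omega : 1 ≤ P)
        have h3 : (0 : ℝ) ≤ Fintype.card ι := by positivity
        push_cast
        nlinarith

/-- Weil's bound for multiplicative characters, when the exponents have no common divisor with the
order of `θ`: by `norm_charSum_le` the power sums of the reciprocal roots of the `L`-function are
`O(q ^ k)` for the extensions of even degree `2 * k`, hence each root has modulus at most `√q`. -/
theorem weil_coprime {K ι : Type*} [Field K] [Fintype K] [Fintype ι] (θ : MulChar K ℂ)
    (hR : 1 < orderOf θ) (z : ι → K) (hz : Function.Injective z) (e : ι → ℕ)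
    (hgcd : ∀ m, (∀ i, orderOf θ ∣ m * e i) → orderOf θ ∣ m) :
    ‖∑ a : K, ∏ i, (θ ^ e i) (z i - a)‖ ≤
      ((Fintype.card ι - 1 : ℕ) : ℝ) * Real.sqrt (Fintype.card K) := by
  classical
  set q := Fintype.card K with hq
  have hq1 : 1 < q := Fintype.one_lt_card
  set χ : ι → MulChar K ℂ := fun i => θ ^ e i with hχ
  obtain ⟨i₀, hi₀⟩ : ∃ i₀, χ i₀ ≠ 1 := by
    by_contra! h
    have := hgcd 1 fun i => by
      rw [one_mul, orderOf_dvd_iff_pow_eq_one]; exact h i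
    have := Nat.le_of_dvd one_pos this
    omega
  have hι : 0 < Fintype.card ι := Fintype.card_pos_iff.2 ⟨i₀⟩
  obtain ⟨ω, hω⟩ := exists_reciprocal_roots (Lcoeff (charHom χ z)) (psum (charHom χ z))
    (Fintype.card ι - 1) (Lcoeff_zero _)
    (fun n hn => Lcoeff_eq_zero χ z hz i₀ hi₀ n (by omega)) (newton_Lcoeff _)
  obtain ⟨p, hp⟩ := CharP.exists K
  have hpp : Fact p.Prime := ⟨CharP.char_is_prime K p⟩
  obtain ⟨f, _, hf⟩ := FiniteField.card K p
  obtain ⟨C, hC⟩ : ∃ C : ℕ, C = 1 + orderOf θ * (4 * (∑ i, e i) + 5) + orderOf θ * ∑ i, e i +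
    Fintype.card ι := ⟨_, rfl⟩
  obtain ⟨k₀, hk₀⟩ : ∃ k₀ : ℕ, k₀ = 4 * orderOf θ * (orderOf θ * (∑ i, e i)) +
    4 * (∑ i, e i) + 5 := ⟨_, rfl⟩
  have hbound : ∀ k, k₀ ≤ k → ‖∑ j, ω j ^ (2 * k)‖ ≤ C * Real.sqrt q ^ (2 * k) := by
    intro k hk
    have hk1 : 0 < k := by omega
    have : NeZero (2 * k) := ⟨by omega⟩
    let E := FiniteField.Extension K p (2 * k)
    have : Fintype E := Fintype.ofFinite E
    have : CharP E p := charP_of_injective_algebraMap (algebraMap K E).injective p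
    have hcard : Fintype.card E = (q ^ k) ^ 2 := by
      rw [← Nat.card_eq_fintype_card, FiniteField.natCard_extension, Nat.card_eq_fintype_card,
        ← pow_mul, mul_comm]
    have h1 := psum_eq_extension (E := E) χ z
    rw [FiniteField.finrank_extension] at h1
    have h2 := norm_charSum_le (E := E) p (f * k) (q ^ k) (by rw [hq, hf, pow_mul]) hcard ⟨k, rfl⟩
      θ hR z hz e hgcd (by rw [← hk₀]; exact hk.trans_lt (Nat.lt_pow_self hq1))
    rw [← hC, ← h1, hω _ (by omega), norm_neg] at h2
    rw [pow_mul, Real.sq_sqrt (by positivity)]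
    exact_mod_cast h2
  have hωle := norm_le_of_psum_bound ω (Real.sqrt q) C
    (Real.sqrt_pos.2 (by exact_mod_cast (by omega : 0 < q))) k₀ hbound
  have h1 := psum_one χ z
  rw [hω 1 one_pos] at h1
  rw [← h1, norm_neg]
  refine (norm_sum_le _ _).trans ?_
  calc ∑ j, ‖ω j ^ 1‖ ≤ ∑ _j : Fin (Fintype.card ι - 1), Real.sqrt q :=
        Finset.sum_le_sum fun j _ => by rw [pow_one]; exact hωle j
    _ = _ := by simp

/-- Weil's bound for multiplicative characters: if not all `θ ^ e i` are trivial, the sum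
of `∏ i, (θ ^ e i) (z i + a)` is at most `(#ι - 1) √q`. -/
theorem weil {K ι : Type*} [Field K] [Fintype K] [Fintype ι] (θ : MulChar K ℂ)
    (z : ι → K) (hz : Function.Injective z) (e : ι → ℕ)
    (he : ∃ i, ¬ orderOf θ ∣ e i) :
    ‖∑ a : K, ∏ i, (θ ^ e i) (z i + a)‖ ≤
      ((Fintype.card ι - 1 : ℕ) : ℝ) * Real.sqrt (Fintype.card K) := by
  classical
  have h0 : ∑ a : K, ∏ i, (θ ^ e i) (z i + a) = ∑ a : K, ∏ i, (θ ^ e i) (z i - a) := by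
    rw [← Equiv.sum_comp (Equiv.neg K)]
    simp [sub_eq_add_neg]
  rw [h0]
  set r := orderOf θ with hr
  have hr0 : 0 < r := MulChar.orderOf_pos θ
  -- dividing all exponents by their common divisor with the order of `θ`
  set δ := r.gcd (Finset.univ.gcd e) with hδ
  have hδr : δ ∣ r := Nat.gcd_dvd_left _ _
  have hδe : ∀ i, δ ∣ e i := fun i =>
    (Nat.gcd_dvd_right _ _).trans (Finset.gcd_dvd (Finset.mem_univ i))
  have hδ0 : 0 < δ := Nat.gcd_pos_of_pos_left _ hr0
  have hord : orderOf (θ ^ δ) = r / δ := by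
    rw [orderOf_pow' θ hδ0.ne', ← hr, Nat.gcd_eq_right hδr]
  have hpow : ∀ i, θ ^ e i = (θ ^ δ) ^ (e i / δ) := fun i => by
    rw [← pow_mul, Nat.mul_div_cancel' (hδe i)]
  simp only [hpow]
  refine weil_coprime (θ ^ δ) ?_ z hz _ ?_
  · rw [hord]
    obtain ⟨i, hi⟩ := he
    have h1 : δ ≠ r := fun h => hi (h ▸ hδe i)
    have h2 : 0 < r / δ := Nat.div_pos (Nat.le_of_dvd hr0 hδr) hδ0
    have h3 : r / δ ≠ 1 := fun h => h1 (by
      have := Nat.div_mul_cancel hδr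
      rw [h, one_mul] at this; exact this)
    omega
  · intro m hm
    rw [hord] at hm ⊢
    have h1 : ∀ i, r ∣ m * e i := by
      intro i
      have := Nat.mul_dvd_mul_right (hm i) δ
      rwa [Nat.div_mul_cancel hδr, mul_assoc, Nat.div_mul_cancel (hδe i)] at this
    have h2 : r ∣ m * Finset.univ.gcd e := by
      have : r ∣ Finset.univ.gcd fun i => m * e i := Finset.dvd_gcd fun i _ => h1 i
      rw [Finset.gcd_mul_left] at this
      simpa using this
    have h3 : r ∣ m * δ := by
      rw [hδ, ← Nat.gcd_mul_left]
      exact Nat.dvd_gcd (dvd_mul_left _ _) h2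
    rw [← Nat.mul_dvd_mul_iff_right hδ0, Nat.div_mul_cancel hδr]
    exact h3

end

/-! ### The permutation criterion and orthogonality -/

section

/-- The criterion for `x ^ n * (x ^ k + a)` to permute a finite field: with `g` a generator of
the unit group, `s = gcd(k, q - 1)` and `q - 1 = r * s`, the polynomial maps the coset of
`g ^ j` modulo `r`-th powers to the coset of `g ^ (j * n) * (g ^ (k * j) + a)`, and multiplying
`x` by an `r`-th power `c` multiplies the value by `c ^ n`; here `c ↦ c ^ n` is injective since
`gcd(n, s) = 1`. Cosets modulo `r`-th powers are told apart by their `s`-th powers. -/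
theorem bijective_iff {F : Type*} [Field F] [Fintype F] (n k r s : ℕ) (hn : 0 < n) (hk : 0 < k)
    (hs : s = Nat.gcd k (Fintype.card F - 1)) (hrs : Fintype.card F - 1 = r * s)
    (hns : Nat.Coprime n s)
    (g : Fˣ) (hg : ∀ u, u ∈ Submonoid.powers g) (a : F) :
    Function.Bijective (fun x : F => x ^ n * (x ^ k + a)) ↔
      (∀ j : Fin r, ((g : F) ^ k) ^ (j : ℕ) + a ≠ 0) ∧
      ∀ i j : Fin r, (((g : F) ^ n) ^ (i : ℕ) * (((g : F) ^ k) ^ (i : ℕ) + a)) ^ s =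
        (((g : F) ^ n) ^ (j : ℕ) * (((g : F) ^ k) ^ (j : ℕ) + a)) ^ s → i = j := by
  classical
  have hq1 : 0 < Fintype.card F - 1 := by
    have := Fintype.one_lt_card (α := F); omega
  have hr : 0 < r := by
    rcases Nat.eq_zero_or_pos r with h0 | h0
    · rw [h0, zero_mul] at hrs; omega
    · exact h0
  have hs0 : 0 < s := by
    rcases Nat.eq_zero_or_pos s with h0 | h0
    · rw [h0, mul_zero] at hrs; omega
    · exact h0
  have hsk : s ∣ k := hs ▸ Nat.gcd_dvd_left _ _
  have hgo : orderOf g = r * s := by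
    rw [← hrs, ← Fintype.card_units, ← Nat.card_eq_fintype_card]
    exact orderOf_eq_card_of_forall_mem_powers hg
  have hg0 : (g : F) ≠ 0 := g.ne_zero
  have hgpow : ∀ i j : ℕ, (g : F) ^ i = (g : F) ^ j ↔ i ≡ j [MOD r * s] := by
    intro i j
    rw [← hgo, ← pow_eq_pow_iff_modEq, Units.ext_iff]
    simp
  have hgrs : (g : F) ^ (r * s) = 1 := by
    have := (hgpow (r * s) 0).2 (by simp [Nat.ModEq])
    simpa using this
  have hinj : Function.Bijective (fun x : F => x ^ n * (x ^ k + a)) ↔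
      Function.Injective (fun x : F => x ^ n * (x ^ k + a)) :=
    ⟨fun h => h.1, fun h => Finite.injective_iff_bijective.1 h⟩
  rw [hinj]
  constructor
  · intro hf
    have hz : ∀ j : Fin r, ((g : F) ^ k) ^ (j : ℕ) + a ≠ 0 := fun j hj => by
      have h := @hf ((g : F) ^ (j : ℕ)) 0 (by
        simp only
        rw [pow_right_comm _ _ k, hj, zero_pow hn.ne', mul_zero, zero_mul])
      exact pow_ne_zero _ hg0 h
    refine ⟨hz, fun i j hij => ?_⟩
    · set X := ((g : F) ^ n) ^ (i : ℕ) * (((g : F) ^ k) ^ (i : ℕ) + a) with hX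
      set Y := ((g : F) ^ n) ^ (j : ℕ) * (((g : F) ^ k) ^ (j : ℕ) + a) with hY
      have hY0 : Y ≠ 0 := mul_ne_zero (pow_ne_zero _ (pow_ne_zero _ hg0)) (hz j)
      obtain ⟨ζ, hζ⟩ : ∃ ζ, ζ = X / Y := ⟨_, rfl⟩
      have hζs : ζ ^ s = 1 := by
        rw [hζ, div_pow, hij, div_self (pow_ne_zero _ hY0)]
      obtain ⟨n', hn'⟩ : ∃ n', (n * n') ≡ 1 [MOD s] := by
        obtain ⟨m, hm⟩ := Nat.exists_mul_mod_eq_of_coprime 1 hns hs0.ne'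
        exact ⟨m, hm.2⟩
      have hcn : (ζ ^ n') ^ n = ζ := by
        rw [← pow_mul, mul_comm n' n]
        have := pow_eq_pow_of_modEq hn' hζs
        rwa [pow_one] at this
      have hcs : (ζ ^ n') ^ s = 1 := by rw [← pow_mul, mul_comm, pow_mul, hζs, one_pow]
      have hck : (ζ ^ n') ^ k = 1 := by
        obtain ⟨c, rfl⟩ := hsk
        rw [pow_mul, hcs, one_pow]
      have h := @hf ((g : F) ^ (i : ℕ)) ((g : F) ^ (j : ℕ) * ζ ^ n') (by
        simp only
        rw [mul_pow, mul_pow, hcn, hck, mul_one, pow_right_comm, pow_right_comm _ _ k,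
          pow_right_comm _ _ n, pow_right_comm _ (j : ℕ) k, ← hX, mul_right_comm, ← hY, hζ,
          mul_div_cancel₀ _ hY0])
      have h2 : ((g : F) ^ (i : ℕ)) ^ s = ((g : F) ^ (j : ℕ) * ζ ^ n') ^ s := congrArg (· ^ s) h
      rw [mul_pow, hcs, mul_one, ← pow_mul, ← pow_mul, hgpow] at h2
      have h3 := Nat.ModEq.eq_of_lt_of_lt h2 (Nat.mul_lt_mul_of_pos_right i.2 hs0)
        (Nat.mul_lt_mul_of_pos_right j.2 hs0)
      exact Fin.ext (Nat.eq_of_mul_eq_mul_right hs0 h3)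
  · rintro ⟨hz, hP⟩
    -- every nonzero `x = g ^ i` behaves like the representative `j ≡ i` modulo `r`
    have hrep : ∀ x : F, x ≠ 0 → ∃ j : Fin r, x ^ k = ((g : F) ^ k) ^ (j : ℕ) ∧
        (x ^ n) ^ s = (((g : F) ^ n) ^ (j : ℕ)) ^ s := by
      intro x hx
      obtain ⟨i, hi⟩ := hg (Units.mk0 x hx)
      have hi' : x = (g : F) ^ i := by
        have := congrArg Units.val hi
        simpa using this.symm
      have hmod : i % r ≡ i [MOD r] := Nat.mod_modEq _ _
      refine ⟨⟨i % r, Nat.mod_lt _ hr⟩, ?_, ?_⟩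
      · simp only
        rw [hi', ← pow_mul, ← pow_mul, hgpow, mul_comm i k]
        obtain ⟨c, rfl⟩ := hsk
        have h1 : i * s ≡ i % r * s [MOD r * s] := Nat.ModEq.mul_right' s hmod.symm
        have := h1.mul_left c
        rw [show s * c * i = c * (i * s) by ring, show s * c * (i % r) = c * (i % r * s) by ring]
        exact this
      · simp only
        rw [hi', ← pow_mul, ← pow_mul, ← pow_mul, ← pow_mul, hgpow]
        have h1 : i * s ≡ i % r * s [MOD r * s] := Nat.ModEq.mul_right' s hmod.symm
        have := h1.mul_left n
        rw [show i * (n * s) = n * (i * s) by ring]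
        exact this
    have hne : ∀ x : F, x ≠ 0 → x ^ n * (x ^ k + a) ≠ 0 := by
      intro x hx
      obtain ⟨j, hj, _⟩ := hrep x hx
      rw [hj]
      exact mul_ne_zero (pow_ne_zero _ hx) (hz j)
    intro x y hxy
    simp only at hxy
    by_cases hx : x = 0
    · by_contra hne'
      have hy : y ≠ 0 := fun h => hne' (by rw [hx, h])
      refine hne y hy ?_
      rw [← hxy, hx, zero_pow hn.ne', zero_mul]
    by_cases hy : y = 0
    · exfalso
      refine hne x hx ?_
      rw [hxy, hy, zero_pow hn.ne', zero_mul]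
    obtain ⟨i, hi1, hi2⟩ := hrep x hx
    obtain ⟨j, hj1, hj2⟩ := hrep y hy
    have hij : i = j := by
      refine hP i j ?_
      rw [mul_pow, mul_pow, ← hi1, ← hi2, ← hj1, ← hj2, ← mul_pow, ← mul_pow, hxy]
    have hk' : x ^ k = y ^ k := by rw [hi1, hj1, hij]
    have hn' : x ^ n = y ^ n := by
      rw [hk'] at hxy
      refine mul_right_cancel₀ ?_ hxy
      rw [hj1]; exact hz j
    have hu : ∀ m, x ^ m = y ^ m → (x / y) ^ m = 1 := fun m h => by
      rw [div_pow, h, div_self (pow_ne_zero _ hy)]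
    have h1 : orderOf (x / y) ∣ n := orderOf_dvd_of_pow_eq_one (hu n hn')
    have h2 : orderOf (x / y) ∣ k := orderOf_dvd_of_pow_eq_one (hu k hk')
    have h3 : orderOf (x / y) ∣ Fintype.card F - 1 :=
      orderOf_dvd_of_pow_eq_one (FiniteField.pow_card_sub_one_eq_one _ (div_ne_zero hx hy))
    have h4 : orderOf (x / y) ∣ 1 := by
      rw [← hns.gcd_eq_one, hs]
      exact Nat.dvd_gcd h1 (Nat.dvd_gcd h2 h3)
    have h5 := orderOf_eq_one_iff.1 (Nat.dvd_one.1 h4)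
    exact (div_eq_one_iff_eq hy).1 h5

theorem mulChar_eq_iff_pow_eq_pow {K : Type*} [Field K] [Fintype K] (θ : MulChar K ℂ) {x y : K}
    (hx : x ≠ 0) (hy : y ≠ 0) :
    θ x = θ y ↔
      x ^ ((Fintype.card K - 1) / orderOf θ) = y ^ ((Fintype.card K - 1) / orderOf θ) := by
  classical
  refine ⟨pow_eq_pow_of_mulChar_eq θ hx hy, fun h => ?_⟩
  obtain ⟨g, hg'⟩ := IsCyclic.exists_generator (α := Kˣ)
  set u : Kˣ := Units.mk0 x hx * (Units.mk0 y hy)⁻¹ with hu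
  have hxu : x = u * y := by simp [hu, hy]
  obtain ⟨m, hm⟩ := mem_powers_iff_mem_zpowers.2 (hg' u)
  simp only at hm
  have hR : orderOf θ ∣ Fintype.card K - 1 := MulChar.orderOf_dvd_card_sub_one _ θ
  have hq1 : 0 < Fintype.card K - 1 := by
    have := Fintype.one_lt_card (α := K); omega
  obtain ⟨s, hs⟩ := hR
  have hθ0 : 0 < orderOf θ := MulChar.orderOf_pos θ
  have hdiv : (Fintype.card K - 1) / orderOf θ = s := by rw [hs, Nat.mul_div_cancel_left _ hθ0]
  have hs0 : 0 < s := by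
    rcases Nat.eq_zero_or_pos s with h0 | h0
    · rw [h0, mul_zero] at hs; omega
    · exact h0
  rw [hdiv] at h
  have hus : u ^ s = 1 := by
    rw [Units.ext_iff]
    rw [hxu, mul_pow] at h
    have := mul_right_cancel₀ (pow_ne_zero s hy) (h.trans (one_mul _).symm)
    simpa using this
  rw [← hm, ← pow_mul] at hus
  have ho : orderOf g = orderOf θ * s := by
    rw [← hs, ← Fintype.card_units, ← Nat.card_eq_fintype_card]
    exact orderOf_eq_card_of_forall_mem_zpowers hg'
  have hd := orderOf_dvd_of_pow_eq_one hus
  rw [ho] at hd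
  obtain ⟨c, rfl⟩ := Nat.dvd_of_mul_dvd_mul_right hs0 hd
  have h1 : θ u = 1 := by
    rw [← hm, pow_mul]
    have h2 := MulChar.pow_apply_coe θ (orderOf θ) g
    rw [pow_orderOf_eq_one, MulChar.one_apply_coe] at h2
    push_cast
    rw [map_pow, map_pow, ← h2, one_pow]
  rw [hxu, map_mul, h1, one_mul]

/-- Orthogonality: the powers of `θ` detect whether `θ x` is a given root of unity. The zeroth
power `θ ^ 0` is the trivial character, which vanishes at `0`. -/
theorem sum_charPow_eq {K : Type*} [Field K] [Fintype K] (r : ℕ) (θ : MulChar K ℂ)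
    (hθ : orderOf θ = r) (Ω : ℂ) (hΩ : IsPrimitiveRoot Ω r) (x : K) (c : ℕ) [Decidable (x ≠ 0 ∧ θ x = Ω ^ c)] :
    ∑ e : Fin r, (θ ^ (e : ℕ)) x * (Ω⁻¹) ^ (c * (e : ℕ)) =
      if x ≠ 0 ∧ θ x = Ω ^ c then (r : ℂ) else 0 := by
  by_cases hx : x = 0
  · rw [if_neg (by simp [hx])]
    refine Finset.sum_eq_zero fun e _ => ?_
    rw [hx, MulChar.map_zero, zero_mul]
  have hr0 : 0 < r := hθ ▸ MulChar.orderOf_pos θ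
  have hΩ0 : Ω ≠ 0 := hΩ.ne_zero hr0.ne'
  have h1 : ∀ m : ℕ, (θ ^ m) x = θ x ^ m := fun m =>
    MulChar.pow_apply_coe θ m (Units.mk0 x hx)
  have hterm : ∀ e : Fin r, (θ ^ (e : ℕ)) x * (Ω⁻¹) ^ (c * (e : ℕ)) =
      (θ x * (Ω⁻¹) ^ c) ^ (e : ℕ) := fun e => by rw [h1, pow_mul, mul_pow]
  rw [Finset.sum_congr rfl fun e _ => hterm e, Fin.sum_univ_eq_sum_range
    (fun e => (θ x * (Ω⁻¹) ^ c) ^ e) r]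
  have hiff : θ x = Ω ^ c ↔ θ x * (Ω⁻¹) ^ c = 1 := by
    rw [inv_pow, mul_inv_eq_one₀ (pow_ne_zero _ hΩ0)]
  split_ifs with h
  · rw [hiff.1 h.2]; simp
  · have hne : θ x * (Ω⁻¹) ^ c ≠ 1 := fun h' => h ⟨hx, hiff.2 h'⟩
    rw [geom_sum_eq hne, mul_pow, ← h1, ← hθ, pow_orderOf_eq_one, hθ, ← pow_mul, mul_comm c,
      pow_mul, inv_pow, hΩ.pow_eq_one]
    have := MulChar.one_apply_coe (R' := ℂ) (Units.mk0 x hx)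
    rw [Units.val_mk0] at this
    rw [this]; simp

/-- The sum over all permutations occurring in the character expansion of the count. -/
noncomputable def permSum (r : ℕ) (Ω : ℂ) (e : Fin r → Fin r) : ℂ :=
  ∑ σ : Equiv.Perm (Fin r), ∏ j, (Ω⁻¹) ^ ((σ j : ℕ) * (e j : ℕ))

theorem norm_permSum_le (r : ℕ) (Ω : ℂ) (hΩ : ‖Ω‖ = 1) (e : Fin r → Fin r) :
    ‖permSum r Ω e‖ ≤ r.factorial := by
  refine (norm_sum_le _ _).trans ?_
  have : ∀ σ : Equiv.Perm (Fin r), ‖∏ j, (Ω⁻¹) ^ ((σ j : ℕ) * (e j : ℕ))‖ = 1 := fun σ => by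
    rw [norm_prod]
    refine Finset.prod_eq_one fun j _ => ?_
    rw [norm_pow, norm_inv, hΩ, inv_one, one_pow]
  rw [Finset.sum_congr rfl fun σ _ => this σ]
  simp [Fintype.card_perm]

/-- Composing all permutations with a cyclic shift multiplies `permSum` by a root of unity. -/
theorem permSum_eq_zero (r : ℕ) [NeZero r] (Ω : ℂ) (hΩ : IsPrimitiveRoot Ω r) (e : Fin r → Fin r)
    (he : ¬ r ∣ ∑ j, (e j : ℕ)) : permSum r Ω e = 0 := by
  have hΩi : IsPrimitiveRoot Ω⁻¹ r := hΩ.inv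
  have h1 : permSum r Ω e = (Ω⁻¹) ^ (∑ j, (e j : ℕ)) * permSum r Ω e := by
    conv_lhs => rw [permSum, ← Equiv.sum_comp (Equiv.mulLeft (Equiv.addRight (1 : Fin r)))]
    rw [permSum, Finset.mul_sum]
    refine Finset.sum_congr rfl fun σ _ => ?_
    rw [← Finset.prod_pow_eq_pow_sum, ← Finset.prod_mul_distrib]
    refine Finset.prod_congr rfl fun j _ => ?_
    rw [← pow_add, Equiv.coe_mulLeft, Equiv.Perm.mul_apply, Equiv.coe_addRight]
    refine pow_eq_pow_of_modEq (n := r) ?_ hΩi.pow_eq_one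
    have h2 : ((σ j + 1 : Fin r) : ℕ) ≡ (σ j : ℕ) + 1 [MOD r] := by
      rw [Fin.val_add, Fin.val_one']
      exact (Nat.mod_modEq _ _).trans ((Nat.ModEq.refl _).add (Nat.mod_modEq _ _))
    refine (h2.mul_right _).trans ?_
    rw [add_mul, one_mul, add_comm]
  by_contra h0
  have h2 : (Ω⁻¹) ^ (∑ j, (e j : ℕ)) = 1 := by
    have := mul_right_cancel₀ h0 ((one_mul _).trans h1)
    exact this.symm
  exact he (hΩi.dvd_of_pow_eq_one _ h2)

/-- At most `r ^ (r - 1)` vectors have sum divisible by `r`, because the other coordinates of such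
a vector determine the first one. -/
theorem card_sum_dvd_le (r : ℕ) (hr : 0 < r) :
    (Finset.univ.filter fun e : Fin r → Fin r => r ∣ ∑ j, (e j : ℕ)).card ≤ r ^ (r - 1) := by
  obtain ⟨m, rfl⟩ : ∃ m, r = m + 1 := ⟨r - 1, by omega⟩
  have h : Fintype.card (Fin m → Fin (m + 1)) = (m + 1) ^ m := by simp
  rw [Nat.add_sub_cancel, ← h, ← Finset.card_univ]
  refine Finset.card_le_card_of_injOn (fun e i => e i.succ) (fun _ _ => Finset.mem_univ _) ?_
  intro e he e' he' hee
  simp only [Finset.coe_filter, Finset.mem_univ, true_and, Set.mem_ofPred_eq] at he he'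
  have h1 : ∀ i : Fin m, e i.succ = e' i.succ := fun i => congrFun hee i
  rw [Fin.sum_univ_succ] at he he'
  rw [Finset.sum_congr rfl fun i _ => congrArg Fin.val (h1 i)] at he
  have h2 : ((e 0 : ℕ)) ≡ (e' 0 : ℕ) [MOD m + 1] := by
    have h3 := (Nat.modEq_zero_iff_dvd.2 he).trans (Nat.modEq_zero_iff_dvd.2 he').symm
    exact Nat.ModEq.add_right_cancel' _ h3
  have h4 := Nat.ModEq.eq_of_lt_of_lt h2 (e 0).2 (e' 0).2
  funext i
  refine Fin.cases (Fin.ext h4) h1 i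

end

/-! ### Counting by characters -/

section

/-- The condition on `a` that the `z j + a` are nonzero and the values `θ (w j * (z j + a))`
are distinct. -/
def Distinct {F : Type*} [Field F] {r : ℕ} (θ : MulChar F ℂ) (z w : Fin r → F) (a : F) : Prop :=
  (∀ j, z j + a ≠ 0) ∧ ∀ i j, θ (w i * (z i + a)) = θ (w j * (z j + a)) → i = j

/-- If `θ` has order `r`, then `r` distinct values of `θ` exhaust the `r`-th roots of unity, so they
are `Ω ^ σ j` for exactly one permutation `σ`. -/
theorem sum_perm_ite {F : Type*} [Field F] [Fintype F] {r : ℕ} (θ : MulChar F ℂ)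
    (hθ : orderOf θ = r) (Ω : ℂ) (hΩ : IsPrimitiveRoot Ω r) (z w : Fin r → F)
    (hw : ∀ j, w j ≠ 0) (a : F) [DecidablePred (Distinct θ z w)]
    [∀ j c, Decidable (w j * (z j + a) ≠ 0 ∧ θ (w j * (z j + a)) = Ω ^ c)] :
    (∑ σ : Equiv.Perm (Fin r), ∏ j,
      if w j * (z j + a) ≠ 0 ∧ θ (w j * (z j + a)) = Ω ^ (σ j : ℕ) then (r : ℂ) else 0) =
      if Distinct θ z w a then (r : ℂ) ^ r else 0 := by
  have hr0 : 0 < r := hθ ▸ MulChar.orderOf_pos θ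
  have : NeZero r := ⟨hr0.ne'⟩
  split_ifs with h
  · obtain ⟨h1, h2⟩ := h
    have hne : ∀ j, w j * (z j + a) ≠ 0 := fun j => mul_ne_zero (hw j) (h1 j)
    have hroot : ∀ j, ∃ c : Fin r, Ω ^ (c : ℕ) = θ (w j * (z j + a)) := fun j => by
      have h3 : θ (w j * (z j + a)) ^ r = 1 := by
        have := MulChar.pow_apply_coe θ r (Units.mk0 _ (hne j))
        rw [← hθ, pow_orderOf_eq_one, MulChar.one_apply_coe, hθ] at this
        exact this.symm
      obtain ⟨c, hc, h4⟩ := hΩ.eq_pow_of_pow_eq_one h3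
      exact ⟨⟨c, hc⟩, h4⟩
    choose c hc using hroot
    have hcinj : Function.Injective c := fun i j hij => h2 i j (by rw [← hc, ← hc, hij])
    rw [Finset.sum_eq_single (Equiv.ofBijective c (Finite.injective_iff_bijective.1 hcinj))]
    · rw [Finset.prod_congr rfl fun j _ => if_pos ⟨hne j, (hc j).symm⟩]
      simp
    · intro σ _ hσ
      by_contra h0
      apply hσ
      ext j
      have h3 := Finset.prod_ne_zero_iff.1 h0 j (Finset.mem_univ _)
      have h4 : θ (w j * (z j + a)) = Ω ^ (σ j : ℕ) := by
        by_contra h5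
        exact h3 (if_neg fun h6 => h5 h6.2)
      rw [← hc j] at h4
      exact (hΩ.pow_inj (c j).2 (σ j).2 h4).symm
    · intro h0; exact absurd (Finset.mem_univ _) h0
  · refine Finset.sum_eq_zero fun σ _ => ?_
    by_contra h0
    apply h
    have h3 : ∀ j, w j * (z j + a) ≠ 0 ∧ θ (w j * (z j + a)) = Ω ^ (σ j : ℕ) := fun j => by
      by_contra h5
      exact Finset.prod_ne_zero_iff.1 h0 j (Finset.mem_univ _) (if_neg h5)
    refine ⟨fun j hj => (h3 j).1 (by rw [hj, mul_zero]), fun i j hij => ?_⟩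
    rw [(h3 i).2, (h3 j).2] at hij
    exact σ.injective (Fin.ext (hΩ.pow_inj (σ i).2 (σ j).2 hij))

/-- The character expansion of the number of `a` with `Distinct θ z w a`; the zero exponent vector
gives the main term `r! * (q - r)`, and of the others only those with sum divisible by `r`
contribute. -/
theorem count_estimate {F : Type*} [Field F] [Fintype F] {r : ℕ} (θ : MulChar F ℂ)
    (hθ : orderOf θ = r) (z w : Fin r → F) (hz : Function.Injective z) (hw : ∀ j, w j ≠ 0)
    (B : ℝ) (hB0 : 0 ≤ B)
    (hB : ∀ e : Fin r → Fin r, (∃ i, (e i : ℕ) ≠ 0) → r ∣ ∑ i, (e i : ℕ) →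
      ‖∑ a : F, ∏ i, (θ ^ (e i : ℕ)) (z i + a)‖ ≤ B) :
    |(r : ℝ) ^ r * (Nat.card {a : F // Distinct θ z w a} : ℝ) -
      r.factorial * ((Fintype.card F : ℝ) - r)| ≤
      ((r : ℝ) ^ (r - 1) - 1) * (r.factorial * B) := by
  classical
  have hr0 : 0 < r := hθ ▸ MulChar.orderOf_pos θ
  have : NeZero r := ⟨hr0.ne'⟩
  obtain ⟨Ω, hΩ⟩ : ∃ Ω : ℂ, IsPrimitiveRoot Ω r := ⟨_, Complex.isPrimitiveRoot_exp r hr0.ne'⟩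
  have hΩn : ‖Ω‖ = 1 := Complex.norm_eq_one_of_pow_eq_one hΩ.pow_eq_one hr0.ne'
  set W : (Fin r → Fin r) → ℂ := fun e => ∏ j, (θ ^ (e j : ℕ)) (w j) with hW
  set S : (Fin r → Fin r) → ℂ := fun e => ∑ a : F, ∏ i, (θ ^ (e i : ℕ)) (z i + a) with hS
  have hcount : (r : ℂ) ^ r * (Nat.card {a : F // Distinct θ z w a} : ℂ) =
      ∑ e : Fin r → Fin r, W e * permSum r Ω e * S e := by
    have h1 : (r : ℂ) ^ r * (Nat.card {a : F // Distinct θ z w a} : ℂ) =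
        ∑ a : F, if Distinct θ z w a then (r : ℂ) ^ r else 0 := by
      rw [← Finset.sum_filter, Finset.sum_const, nsmul_eq_mul, mul_comm,
        Nat.card_eq_fintype_card, Fintype.card_subtype]
    have h2 : ∀ a : F, (if Distinct θ z w a then (r : ℂ) ^ r else 0) =
        ∑ e : Fin r → Fin r, W e * permSum r Ω e * ∏ i, (θ ^ (e i : ℕ)) (z i + a) := by
      intro a
      rw [← sum_perm_ite θ hθ Ω hΩ z w hw a]
      have h3 : ∀ σ : Equiv.Perm (Fin r), (∏ j,
          if w j * (z j + a) ≠ 0 ∧ θ (w j * (z j + a)) = Ω ^ (σ j : ℕ) then (r : ℂ) else 0) =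
          ∑ e : Fin r → Fin r, ∏ j, (θ ^ (e j : ℕ)) (w j * (z j + a)) *
            (Ω⁻¹) ^ ((σ j : ℕ) * (e j : ℕ)) := by
        intro σ
        rw [Finset.prod_congr rfl fun j _ =>
          (sum_charPow_eq r θ hθ Ω hΩ (w j * (z j + a)) (σ j)).symm]
        rw [Finset.prod_univ_sum, Fintype.piFinset_univ]
      rw [Finset.sum_congr rfl fun σ _ => h3 σ, Finset.sum_comm]
      refine Finset.sum_congr rfl fun e _ => ?_
      rw [permSum, Finset.mul_sum, Finset.sum_mul]
      refine Finset.sum_congr rfl fun σ _ => ?_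
      rw [hW]
      simp only
      rw [← Finset.prod_mul_distrib, ← Finset.prod_mul_distrib]
      refine Finset.prod_congr rfl fun j _ => ?_
      rw [map_mul]; ring
    rw [h1, Finset.sum_congr rfl fun a _ => h2 a, Finset.sum_comm]
    refine Finset.sum_congr rfl fun e _ => ?_
    rw [hS, Finset.mul_sum]
  have hone : ∀ x : F, x ≠ 0 → (1 : MulChar F ℂ) x = 1 := fun x hx =>
    MulChar.one_apply_coe (R' := ℂ) (Units.mk0 x hx)
  have hzero : W 0 * permSum r Ω 0 * S 0 = (r.factorial : ℂ) * ((Fintype.card F : ℂ) - r) := by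
    have h1 : W 0 = 1 := by
      rw [hW]
      simp only
      refine Finset.prod_eq_one fun j _ => ?_
      simp only [Pi.zero_apply, Fin.val_zero, pow_zero]
      exact hone _ (hw j)
    have h2 : permSum r Ω 0 = r.factorial := by
      simp [permSum, Fintype.card_perm]
    have h3 : S 0 = (Fintype.card F : ℂ) - r := by
      have h4 : ∀ a : F, ∏ i, (θ ^ ((0 : Fin r → Fin r) i : ℕ)) (z i + a) =
          if a ∈ Finset.univ.image (fun i => - z i) then 0 else 1 := by
        intro a
        simp only [Pi.zero_apply, Fin.val_zero, pow_zero]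
        split_ifs with h
        · obtain ⟨i, _, rfl⟩ := Finset.mem_image.1 h
          refine Finset.prod_eq_zero (Finset.mem_univ i) ?_
          rw [add_neg_cancel, MulChar.map_zero]
        · refine Finset.prod_eq_one fun i _ => hone _ fun h0 => h ?_
          exact Finset.mem_image.2 ⟨i, Finset.mem_univ _, (eq_neg_of_add_eq_zero_right h0).symm⟩
      have h5 : (Finset.univ.image (fun i => - z i)).card = r := by
        rw [Finset.card_image_of_injective _ fun i j hij => hz (neg_injective hij)]
        simp
      have h6 : ∀ a : F, (if a ∈ Finset.univ.image (fun i => - z i) then (0 : ℂ) else 1) =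
          1 - if a ∈ Finset.univ.image (fun i => - z i) then (1 : ℂ) else 0 := fun a => by
        split_ifs <;> simp
      rw [hS]
      simp only
      rw [Finset.sum_congr rfl fun a _ => (h4 a).trans (h6 a), Finset.sum_sub_distrib,
        Finset.sum_boole, Finset.filter_mem_eq_inter, Finset.univ_inter, h5]
      simp
    rw [h1, h2, h3, one_mul]
  have hterm : ∀ e : Fin r → Fin r, e ≠ 0 → ‖W e * permSum r Ω e * S e‖ ≤
      if r ∣ ∑ j, (e j : ℕ) then r.factorial * B else 0 := by
    intro e he
    split_ifs with h
    · have h1 : ‖W e‖ = 1 := by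
        rw [hW, norm_prod]
        refine Finset.prod_eq_one fun j _ => ?_
        have hθr : θ ^ r = 1 := by rw [← hθ, pow_orderOf_eq_one]
        have h2 : (θ ^ (e j : ℕ)) (w j) ^ r = 1 := by
          have := MulChar.pow_apply_coe (θ ^ (e j : ℕ)) r (Units.mk0 _ (hw j))
          rw [← pow_mul, mul_comm, pow_mul, hθr, one_pow, MulChar.one_apply_coe] at this
          exact this.symm
        exact Complex.norm_eq_one_of_pow_eq_one h2 hr0.ne'
      rw [norm_mul, norm_mul, h1, one_mul]
      refine mul_le_mul (norm_permSum_le r Ω hΩn e) (hB e ?_ h) (norm_nonneg _) (by positivity)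
      by_contra! h0
      exact he (funext fun i => Fin.ext (by simpa using h0 i))
    · rw [permSum_eq_zero r Ω hΩ e h]; simp
  have hmain : (r : ℂ) ^ r * (Nat.card {a : F // Distinct θ z w a} : ℂ) -
      (r.factorial : ℂ) * ((Fintype.card F : ℂ) - r) =
      ∑ e ∈ Finset.univ.erase 0, W e * permSum r Ω e * S e := by
    rw [hcount, ← hzero, ← Finset.add_sum_erase _ _ (Finset.mem_univ (0 : Fin r → Fin r))]
    ring
  have hnorm : |(r : ℝ) ^ r * (Nat.card {a : F // Distinct θ z w a} : ℝ) -
      r.factorial * ((Fintype.card F : ℝ) - r)| =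
      ‖(r : ℂ) ^ r * (Nat.card {a : F // Distinct θ z w a} : ℂ) -
      (r.factorial : ℂ) * ((Fintype.card F : ℂ) - r)‖ := by
    rw [← Real.norm_eq_abs, ← Complex.norm_real]
    push_cast
    rfl
  rw [hnorm, hmain]
  refine (norm_sum_le _ _).trans ((Finset.sum_le_sum fun e he =>
    hterm e (Finset.ne_of_mem_erase he)).trans ?_)
  rw [← Finset.sum_filter, Finset.sum_const, nsmul_eq_mul]
  refine mul_le_mul_of_nonneg_right ?_ (by positivity)
  rw [Finset.filter_erase, Finset.card_erase_of_mem (by simp)]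
  have h1 := card_sum_dvd_le r hr0
  have h2 : 0 < (Finset.univ.filter fun e : Fin r → Fin r => r ∣ ∑ j, (e j : ℕ)).card :=
    Finset.card_pos.2 ⟨0, by simp⟩
  rw [Nat.cast_sub h2]
  have h3 : ((Finset.univ.filter fun e : Fin r → Fin r => r ∣ ∑ j, (e j : ℕ)).card : ℝ) ≤
    (r : ℝ) ^ (r - 1) := by exact_mod_cast h1
  push_cast
  linarith

/-- For the quadratic character the relevant sum is a Jacobi sum of `χ` and `χ⁻¹`, hence a
sign. -/
theorem norm_quadratic_sum {F : Type*} [Field F] [Fintype F] (θ : MulChar F ℂ)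
    (hθ : orderOf θ = 2) (z₁ z₂ : F) (hz : z₁ ≠ z₂) :
    ‖∑ a : F, θ (z₁ + a) * θ (z₂ + a)‖ = 1 := by
  have hne : θ ≠ 1 := fun h => by rw [h, orderOf_one] at hθ; omega
  have hinv : θ⁻¹ = θ := by
    rw [inv_eq_iff_mul_eq_one, ← sq, ← hθ, pow_orderOf_eq_one]
  have hd : z₁ - z₂ ≠ 0 := sub_ne_zero.2 hz
  have hJ := jacobiSum_nontrivial_inv hne
  rw [hinv] at hJ
  have hn : ∀ x : F, x ≠ 0 → ‖θ x‖ = 1 := fun x hx => by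
    refine Complex.norm_eq_one_of_pow_eq_one (n := 2) ?_ two_ne_zero
    have := MulChar.pow_apply_coe θ 2 (Units.mk0 x hx)
    rw [← hθ, pow_orderOf_eq_one, MulChar.one_apply_coe, hθ] at this
    exact this.symm
  -- substitute `a = -z₁ + (z₁ - z₂) * x`
  let φ : F ≃ F := (Equiv.mulLeft₀ (z₁ - z₂) hd).trans (Equiv.addLeft (-z₁))
  rw [← Equiv.sum_comp φ]
  have hterm : ∀ x : F, θ (z₁ + φ x) * θ (z₂ + φ x) =
      θ (z₁ - z₂) * θ (-(z₁ - z₂)) * (θ x * θ (1 - x)) := by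
    intro x
    have h1 : z₁ + φ x = (z₁ - z₂) * x := by simp [φ]
    have h2 : z₂ + φ x = -(z₁ - z₂) * (1 - x) := by simp [φ]; ring
    rw [h1, h2, map_mul, map_mul]; ring
  rw [Finset.sum_congr rfl fun x _ => hterm x, ← Finset.mul_sum]
  have hJ' : ∑ x : F, θ x * θ (1 - x) = -θ (-1) := by rw [← hJ]; rfl
  rw [hJ', norm_mul, norm_mul, norm_neg, hn _ hd, hn _ (neg_ne_zero.2 hd),
    hn _ (neg_ne_zero.2 one_ne_zero)]
  norm_num

end

/-! ### Estimates for the number of permutation binomials -/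

section

/-- The permutation criterion in terms of a character `θ` of order `r`, with `z j = g ^ (k j)` and
`w j = g ^ (n j)` for a generator `g` of the unit group. -/
theorem exists_setup {F : Type*} [Field F] [Fintype F] (n k r s : ℕ) (hn : 0 < n) (hk : 0 < k)
    (hs : s = Nat.gcd k (Fintype.card F - 1)) (hrs : Fintype.card F - 1 = r * s)
    (hns : Nat.Coprime n s) :
    ∃ (θ : MulChar F ℂ) (z w : Fin r → F), orderOf θ = r ∧ Function.Injective z ∧
      (∀ j, w j ≠ 0) ∧
      ∀ a, Function.Bijective (fun x : F => x ^ n * (x ^ k + a)) ↔ Distinct θ z w a := by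
  classical
  have hq1 : 0 < Fintype.card F - 1 := by
    have := Fintype.one_lt_card (α := F); omega
  have hr : 0 < r := by
    rcases Nat.eq_zero_or_pos r with h0 | h0
    · rw [h0, zero_mul] at hrs; omega
    · exact h0
  have hs0 : 0 < s := by
    rcases Nat.eq_zero_or_pos s with h0 | h0
    · rw [h0, mul_zero] at hrs; omega
    · exact h0
  obtain ⟨g, hg⟩ := IsCyclic.exists_monoid_generator (α := Fˣ)
  obtain ⟨θ, hθ⟩ := MulChar.exists_mulChar_orderOf F (n := r) ⟨s, hrs⟩
    (Complex.isPrimitiveRoot_exp r hr.ne')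
  have hdiv : (Fintype.card F - 1) / orderOf θ = s := by
    rw [hθ, hrs, Nat.mul_div_cancel_left _ hr]
  have hgo : orderOf g = r * s := by
    rw [← hrs, ← Fintype.card_units, ← Nat.card_eq_fintype_card]
    exact orderOf_eq_card_of_forall_mem_powers hg
  have hgk : orderOf (g ^ k) = r := by
    rw [orderOf_pow' g hk.ne', hgo, ← hrs, Nat.gcd_comm, ← hs, hrs, Nat.mul_div_cancel _ hs0]
  have hw : ∀ j : Fin r, ((g : F) ^ n) ^ (j : ℕ) ≠ 0 := fun j =>
    pow_ne_zero _ (pow_ne_zero _ g.ne_zero)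
  refine ⟨θ, fun j => ((g : F) ^ k) ^ (j : ℕ), fun j => ((g : F) ^ n) ^ (j : ℕ), hθ, ?_, hw, ?_⟩
  · intro i j hij
    have h1 : (g ^ k) ^ (i : ℕ) = (g ^ k) ^ (j : ℕ) := by
      rw [Units.ext_iff]; push_cast; exact hij
    rw [pow_eq_pow_iff_modEq, hgk] at h1
    exact Fin.ext (Nat.ModEq.eq_of_lt_of_lt h1 i.2 j.2)
  · intro a
    rw [bijective_iff n k r s hn hk hs hrs hns g hg a, Distinct]
    refine and_congr_right fun hz => forall_congr' fun i => forall_congr' fun j => ?_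
    rw [mulChar_eq_iff_pow_eq_pow θ (mul_ne_zero (hw i) (hz i)) (mul_ne_zero (hw j) (hz j)), hdiv]

/-- The estimate obtained from Weil's bound, for every index `r`. -/
theorem card_estimate {F : Type*} [Field F] [Fintype F] (n k r s : ℕ) (hn : 0 < n) (hk : 0 < k)
    (hs : s = Nat.gcd k (Fintype.card F - 1)) (hrs : Fintype.card F - 1 = r * s)
    (hns : Nat.Coprime n s) (hr : 0 < r) :
    |(r : ℝ) ^ r *
        (Nat.card {a : F // Function.Bijective (fun x : F => x ^ n * (x ^ k + a))} : ℝ) -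
      r.factorial * ((Fintype.card F : ℝ) - r)| ≤
      ((r : ℝ) ^ (r - 1) - 1) * (r.factorial * (((r : ℝ) - 1) * Real.sqrt (Fintype.card F))) := by
  obtain ⟨θ, z, w, hθ, hz, hw, h⟩ := exists_setup (F := F) n k r s hn hk hs hrs hns
  rw [Nat.card_congr (Equiv.subtypeEquivRight h)]
  have hr1 : (1 : ℝ) ≤ r := by exact_mod_cast hr
  refine count_estimate θ hθ z w hz hw _
    (mul_nonneg (by linarith) (Real.sqrt_nonneg _)) fun e ⟨i, hi⟩ _ => ?_
  have h1 := weil θ z hz (fun i => (e i : ℕ)) ⟨i, fun hd => by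
    rw [hθ] at hd
    have := Nat.le_of_dvd (Nat.pos_of_ne_zero hi) hd
    have := (e i).2
    omega⟩
  rw [Fintype.card_fin, Nat.cast_sub hr, Nat.cast_one] at h1
  exact h1

/-- For `r = 2` the error term of `card_estimate` is too large; the exact value of the
quadratic character sum gives this sharper estimate. -/
theorem card_estimate_two {F : Type*} [Field F] [Fintype F] (n k s : ℕ) (hn : 0 < n) (hk : 0 < k)
    (hs : s = Nat.gcd k (Fintype.card F - 1)) (hrs : Fintype.card F - 1 = 2 * s)
    (hns : Nat.Coprime n s) :
    |4 * (Nat.card {a : F // Function.Bijective (fun x : F => x ^ n * (x ^ k + a))} : ℝ) -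
      2 * ((Fintype.card F : ℝ) - 2)| ≤ 2 := by
  obtain ⟨θ, z, w, hθ, hz, hw, h⟩ := exists_setup (F := F) n k 2 s hn hk hs hrs hns
  rw [Nat.card_congr (Equiv.subtypeEquivRight h)]
  have h1 := count_estimate θ hθ z w hz hw 1 zero_le_one fun e ⟨i, hi⟩ hd => ?_
  · norm_num at h1 ⊢
    exact h1
  · rw [Fin.sum_univ_two] at hd
    have h0 := (e 0).2
    have h1 := (e 1).2
    have h2 : (e 0 : ℕ) = 1 ∧ (e 1 : ℕ) = 1 := by
      fin_cases i <;> simp only [Fin.zero_eta, Fin.mk_one] at hi <;> omega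
    simp only [Fin.prod_univ_two, h2.1, h2.2, pow_one]
    exact (norm_quadratic_sum θ hθ (z 0) (z 1) fun h3 => absurd (hz h3) (by decide)).le

/-- The hypothesis on the logarithms forces `r ^ r < √q`: with `l = log q` and `u = log l` it gives
`2 r u < l`, hence `r ≤ l`, so that `r log r ≤ r u < l / 2`. -/
theorem pow_self_lt_sqrt (q r : ℕ) (hq : 4 ≤ q) (hr : 2 ≤ r) (s : ℕ) (hrs : q - 1 = r * s)
    (hbig : 2 * (q : ℝ) * Real.log (Real.log q) / Real.log q < s) :
    (r : ℝ) ^ r < Real.sqrt q := by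
  set l := Real.log q with hl
  set u := Real.log l with hu
  have hqR : (4 : ℝ) ≤ q := by exact_mod_cast hq
  have hl4 : (1.386 : ℝ) ≤ l := by
    have h1 : Real.log 4 ≤ l := Real.log_le_log (by norm_num) hqR
    have h2 : Real.log 4 = 2 * Real.log 2 := by
      rw [show (4 : ℝ) = 2 ^ 2 by norm_num, Real.log_pow]; norm_num
    have := Real.log_two_gt_d9
    linarith
  have hl0 : 0 < l := by linarith
  have hu0 : 0 < u := Real.log_pos (by linarith)
  have hr2 : (2 : ℝ) ≤ r := by exact_mod_cast hr
  have hrsR : (r : ℝ) * s = q - 1 := by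
    rw [← Nat.cast_mul, ← hrs, Nat.cast_sub (by omega), Nat.cast_one]
  have h1 : 2 * q * u * r < (q - 1) * l := by
    rw [div_lt_iff₀ hl0] at hbig
    calc 2 * q * u * r < s * l * r := mul_lt_mul_of_pos_right hbig (by linarith)
      _ = (q - 1) * l := by rw [← hrsR]; ring
  have h2 : 2 * u * r < l := by
    have : q * (2 * u * r) < q * l := by nlinarith
    exact lt_of_mul_lt_mul_left this (by linarith)
  have hrl : (r : ℝ) ≤ l := by
    rcases le_or_gt (1 / 2) u with h | h
    · nlinarith
    · -- here `q` is `4` or `5`, and `log l ≥ 1 - 1 / l` contradicts `2 ≤ r`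
      exfalso
      have hl165 : l < 33 / 20 := by
        by_contra! h3
        have h4 : Real.log (33 / 20) ≤ u := Real.log_le_log (by norm_num) h3
        have h5 : (1 / 2 : ℝ) ≤ Real.log (33 / 20) := by
          rw [Real.le_log_iff_exp_le (by norm_num)]
          have h6 : Real.exp (1 / 2) ^ 2 = Real.exp 1 := by
            rw [← Real.exp_nat_mul]; norm_num
          have := Real.exp_one_lt_d9
          nlinarith [Real.exp_pos (1 / 2)]
        linarith
      have hq6 : q < 6 := by
        by_contra! h3
        have h4 : (6 : ℝ) ≤ q := by exact_mod_cast h3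
        have h5 : (6 : ℝ) < Real.exp (33 / 20) := by
          refine h4.trans_lt ?_
          rw [← Real.log_lt_iff_lt_exp (by linarith)]
          exact hl165
        have h6 : Real.exp (33 / 20) ^ 20 = Real.exp 1 ^ 33 := by
          rw [← Real.exp_nat_mul, ← Real.exp_nat_mul]; norm_num
        have h7 : Real.exp 1 ^ 33 ≤ 2.72 ^ 33 :=
          pow_le_pow_left₀ (Real.exp_pos 1).le (by linarith [Real.exp_one_lt_d9]) _
        have h8 : (6 : ℝ) ^ 20 ≤ Real.exp (33 / 20) ^ 20 :=
          pow_le_pow_left₀ (by norm_num) h5.le _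
        rw [h6] at h8
        have := h8.trans h7
        norm_num at this
      have hq5 : (q : ℝ) ≤ 5 := by exact_mod_cast (by omega : q ≤ 5)
      have h5 : 5 * u < l := by
        have h3 : 4 * q * u < (q - 1) * l := by
          have : 0 ≤ q * u * (r - 2) := by
            apply mul_nonneg (by positivity); linarith
          linarith
        have h4 : 5 * ((q - 1) * l) ≤ 4 * (q * l) := by nlinarith
        have : q * (5 * u) < q * l := by linarith
        exact lt_of_mul_lt_mul_left this (by linarith)
      have h6 : 1 - l⁻¹ ≤ u := Real.one_sub_inv_le_log_of_pos hl0
      have h7 : l * l⁻¹ = 1 := mul_inv_cancel₀ hl0.ne'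
      have h8 : l * (5 * (1 - l⁻¹)) < l * l := mul_lt_mul_of_pos_left (by linarith) hl0
      nlinarith
  have hlog : Real.log r ≤ u := Real.log_le_log (by linarith) hrl
  rw [Real.lt_sqrt (by positivity), ← Real.log_lt_log_iff (by positivity) (by linarith),
    Real.log_pow, Real.log_pow, ← hl]
  push_cast
  nlinarith

end

end PermBinom

/-- Let `q ≥ 4` be a prime power, `n, k > 0` with `gcd(n, k, q-1) = 1`. If
`gcd(k, q-1) > 2q(log log q)/log q` then some `x^n (x^k + a)` with `a ≠ 0` permutes `F_q`;
moreover, with `T` the number of `a ∈ F_q` for which `x^n (x^k + a)` permutes `F_q` and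
`r := (q-1)/gcd(k, q-1)`, one has
`(r!/r^r)(q + 1 - √q(r^{r+1} - 2r^r - r^{r-1} + 2) - (r+1)r^{r-1}) ≤ T ≤
 (r!/r^r)(q + 1 + √q(r^{r+1} - 2r^r - r^{r-1} + 2))`. -/
theorem permutation_binomial_existence_and_count' (F : Type) [Field F] [Fintype F]
    (hq : 4 ≤ Fintype.card F) (n k : ℕ) (hn : 0 < n) (hk : 0 < k)
    (hgcd : Nat.gcd n (Nat.gcd k (Fintype.card F - 1)) = 1)
    (hbig : 2 * (Fintype.card F : ℝ) * Real.log (Real.log (Fintype.card F)) /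
        Real.log (Fintype.card F) < (Nat.gcd k (Fintype.card F - 1) : ℝ)) :
    (∃ a : F, a ≠ 0 ∧ Function.Bijective (fun x : F => x ^ n * (x ^ k + a))) ∧
    ∀ T r : ℕ,
      T = Nat.card {a : F // Function.Bijective (fun x : F => x ^ n * (x ^ k + a))} →
      r = (Fintype.card F - 1) / Nat.gcd k (Fintype.card F - 1) →
      ((Nat.factorial r : ℝ) / (r : ℝ) ^ r) *
          ((Fintype.card F : ℝ) + 1
            - Real.sqrt (Fintype.card F) *
              ((r : ℝ) ^ (r + 1) - 2 * (r : ℝ) ^ r - (r : ℝ) ^ (r - 1) + 2)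
            - ((r : ℝ) + 1) * (r : ℝ) ^ (r - 1))
        ≤ (T : ℝ) ∧
      (T : ℝ) ≤ ((Nat.factorial r : ℝ) / (r : ℝ) ^ r) *
          ((Fintype.card F : ℝ) + 1
            + Real.sqrt (Fintype.card F) *
              ((r : ℝ) ^ (r + 1) - 2 * (r : ℝ) ^ r - (r : ℝ) ^ (r - 1) + 2)) := by
  obtain ⟨s, hs⟩ : ∃ s, s = Nat.gcd k (Fintype.card F - 1) := ⟨_, rfl⟩
  rw [← hs] at hgcd hbig ⊢
  obtain ⟨r, hrs⟩ : ∃ r, Fintype.card F - 1 = r * s := by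
    obtain ⟨r, hr⟩ : s ∣ Fintype.card F - 1 := hs ▸ Nat.gcd_dvd_right _ _
    exact ⟨r, by rw [hr, mul_comm]⟩
  have hs0 : 0 < s := hs ▸ Nat.gcd_pos_of_pos_left _ hk
  have hr0 : 0 < r := by
    rcases Nat.eq_zero_or_pos r with h0 | h0
    · rw [h0, zero_mul] at hrs; omega
    · exact h0
  have hest := PermBinom.card_estimate (F := F) n k r s hn hk hs hrs hgcd hr0
  have hest2 := PermBinom.card_estimate_two (F := F) n k s hn hk hs
  set q : ℝ := (Fintype.card F : ℝ) with hqdef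
  have hqR : (4 : ℝ) ≤ q := by rw [hqdef]; exact_mod_cast hq
  set Q := Real.sqrt q with hQ
  have hQQ : Q * Q = q := Real.mul_self_sqrt (by linarith)
  have hQ0 : 0 ≤ Q := Real.sqrt_nonneg _
  obtain ⟨N, hN⟩ : ∃ N : ℝ, N =
    (Nat.card {a : F // Function.Bijective (fun x : F => x ^ n * (x ^ k + a))} : ℝ) := ⟨_, rfl⟩
  obtain ⟨A, hA⟩ : ∃ A : ℝ, A = (r : ℝ) ^ (r - 1) := ⟨_, rfl⟩
  obtain ⟨f, hf⟩ : ∃ f : ℝ, f = (r.factorial : ℝ) := ⟨_, rfl⟩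
  have hr1 : (1 : ℝ) ≤ r := by exact_mod_cast hr0
  have hA1 : 1 ≤ A := hA ▸ one_le_pow₀ hr1
  have hf1 : 1 ≤ f := by rw [hf]; exact_mod_cast Nat.factorial_pos r
  have hrr : (r : ℝ) ^ r = r * A := by
    rw [hA, ← pow_succ', Nat.sub_add_cancel hr0]
  have hrr1 : (r : ℝ) ^ (r + 1) = r * (r * A) := by rw [pow_succ', hrr]
  have hrA : 0 < r * A := by positivity
  rw [← hN, ← hA, ← hf, hrr, abs_le] at hest
  obtain ⟨hlo, hhi⟩ := hest
  constructor
  · -- at most one of the parameters counted by `N` is zero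
    suffices h : 1 < N by
      by_contra! h0
      have h1 : Subsingleton
          {a : F // Function.Bijective (fun x : F => x ^ n * (x ^ k + a))} :=
        ⟨fun a b => Subtype.ext (by
          have ha : a.1 = 0 := by
            by_contra h2; exact h0 _ h2 a.2
          have hb : b.1 = 0 := by
            by_contra h2; exact h0 _ h2 b.2
          rw [ha, hb])⟩
      have h2 := Finite.card_le_one_iff_subsingleton.2 h1
      have h3 : N ≤ 1 := by rw [hN]; exact_mod_cast h2
      linarith
    rcases (by omega : r = 1 ∨ 2 ≤ r) with h1 | h2
    · subst h1
      norm_num at hA hf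
      rw [hA, hf] at hlo
      norm_num at hlo
      linarith
    · have hlt : r * A < Q := by
        rw [← hrr]
        exact PermBinom.pow_self_lt_sqrt _ r hq h2 s hrs hbig
      have hr2 : (2 : ℝ) ≤ r := by exact_mod_cast h2
      have h3 : r * A * Q ≤ q := by rw [← hQQ]; exact mul_le_mul_of_nonneg_right hlt.le hQ0
      have h4 : r ≤ (r - 1) * Q := by nlinarith
      have h5 : r * A < A * Q := by nlinarith
      have h6 : r * A < q - r - (A - 1) * ((r - 1) * Q) := by nlinarith
      have h7 : f * (r * A) < f * (q - r - (A - 1) * ((r - 1) * Q)) :=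
        mul_lt_mul_of_pos_left h6 (by linarith)
      have h8 : r * A ≤ f * (r * A) := le_mul_of_one_le_left hrA.le hf1
      have h9 : r * A * 1 < r * A * N := by linarith
      exact lt_of_mul_lt_mul_left h9 hrA.le
  · intro T r' hT hr'
    have : r' = r := by rw [hr', hrs, Nat.mul_div_cancel _ hs0]
    subst this
    have hTN : (T : ℝ) = N := by rw [hN, hT]
    rw [hTN, hrr, hrr1, ← hA, ← hf, div_mul_eq_mul_div, div_mul_eq_mul_div, div_le_iff₀ hrA,
      le_div_iff₀ hrA]
    by_cases h2 : r' = 2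
    · subst h2
      have h3 := hest2 hrs hgcd
      rw [← hN, abs_le] at h3
      norm_num at hA hf
      rw [hA, hf]
      push_cast
      constructor <;> linarith [h3.1, h3.2]
    · have h3 : (A - 1) * (r' - 1) ≤ r' * (r' * A) - 2 * (r' * A) - A + 2 := by
        rcases (by omega : r' = 1 ∨ 3 ≤ r') with h1 | h1
        · subst h1
          norm_num at hA
          rw [hA]; norm_num
        · have h4 : (3 : ℝ) ≤ r' := by exact_mod_cast h1
          have h5 : 0 ≤ A * (r' * (r' - 3)) :=
            mul_nonneg (by linarith) (mul_nonneg (by linarith) (by linarith))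
          linarith
      have h4 := mul_le_mul_of_nonneg_left h3 hQ0
      have h5 := mul_le_mul_of_nonneg_left h4 (by linarith : 0 ≤ f)
      have h6 : 0 ≤ f * ((r' + 1) * (A - 1)) :=
        mul_nonneg (by linarith) (mul_nonneg (by linarith) (by linarith))
      have h7 : 0 ≤ f * (r' + 1) := mul_nonneg (by linarith) (by linarith)
      constructor <;> linarith
end

section
/- Fix an integer r ≥ 1. For every ε > 0 there exists Q such that for every prime power q > Q with r dividing q−1, and for all integers n, k > 0 with gcd(n, k, q−1) = 1 and (q−1)/gcd(k, q−1) = r, the number T of elements a ∈ F_q for which x^n (x^k + a) permutes F_q satisfies |T − q·(r!/r^r)| ≤ ε·q. (That is, for fixed r, T ∼ q·(r!)/r^r as q → ∞.) -/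
/-!
Write `q = r * s + 1` with `s = gcd (k, q - 1)`, `k = s * k'`, and let `μ` be the group of `r`-th roots
of unity. If `-a ∉ μ`, then `x ^ n * (x ^ k + a)` permutes `F` exactly when
`τ ↦ τ ^ n * (τ ^ k' + a) ^ s` permutes `μ` (`bijective_binomial_iff`). This depends only on the vector
`v = ((a + ζ) ^ s)_{ζ ∈ μ} ∈ μ ^ μ`, and since `τ ↦ τ ^ k'` permutes `μ`, exactly `r!` of the `r ^ r`
vectors are good (`card_injective_twist`). It remains to see that the vector is equidistributed as
`q → ∞`. As the fibres cover all but at most `r` elements of `F`, it is enough to bound each fibre above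
by `(1 / r ^ r + δ) * q` (`fiber_card_le`); no character sums are needed.

The upper bound is Stepanov's method, with parameters independent of `q`. Put `y_ζ = (X + ζ) ^ s`. Linear
algebra gives polynomials `k_{j,l}` of degree less than `B`, not all zero, such that
`Ψ = ∑ k_{j,l} X ^ (q l) y ^ j` vanishes to order `M = r ^ r * L - 1` on the fibre
(`exists_auxiliary`); here Hasse derivatives replace ordinary ones because `M` may exceed the
characteristic. The degree of `Ψ` is about `q * (L + r)` at most, so the fibre has at most about
`q * (L + r) / M` elements, which is close to `q / r ^ r` for large `L` (`stepanov_bound`).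

The essential point is that `Ψ ≠ 0` (`auxiliary_ne_zero`). Modulo `(X - a) ^ q` one has `X ^ q ≡ a` and
`(X + ζ) * y_ζ ^ r ≡ a + ζ`, so the `y_ζ` behave like `r`-th roots of `(a + ζ) / (X + ζ)`. These radicals
generate a field extension of `F(X)` in which the monomials `y ^ j` are independent
(`exists_radicals`). A combination of the monomials with coefficients of bounded degree therefore has
a nonzero norm of bounded degree, computed as the determinant of a multiplication matrix, and cannot
vanish modulo `(X - a) ^ q` when `q` is large (`zero_estimate`).
-/

open Polynomial Matrix

/-! ### The multiplication matrix of a radical extension -/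

/-- The monomial `∏ i, y i ^ j i` with exponents in `{0, …, r - 1}`. -/
def radMon {S I : Type*} [CommMonoid S] [Fintype I] {r : ℕ} (y : I → S) (j : I → Fin r) : S :=
  ∏ i, y i ^ (j i : ℕ)

/-- When `p i * y i ^ r = g i` for all `i`, this is the matrix of multiplication by
`(∏ i, p i) * ∑ d, κ d * y ^ d` with respect to the monomials `y ^ a`, `a ∈ {0, …, r - 1}^I`.
The exponent `d = c - a` is taken modulo `r`; each coordinate in which `d + a` carries contributes
a factor `y i ^ r`, which the factor `p i` turns into `g i`. -/
def mulMat {A I : Type*} [CommRing A] [Fintype I] {r : ℕ} [NeZero r] (p g : I → A)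
    (κ : (I → Fin r) → A) : Matrix (I → Fin r) (I → Fin r) A :=
  fun c a => κ (c - a) * ∏ i, if r ≤ ((c - a) i : ℕ) + (a i : ℕ) then g i else p i

theorem sum_mulMat {A S I : Type*} [CommRing A] [CommRing S] [Fintype I] [DecidableEq I] {r : ℕ}
    [NeZero r] (φ : A →+* S) (p g : I → A) (y : I → S) (hy : ∀ i, φ (p i) * y i ^ r = φ (g i))
    (κ : (I → Fin r) → A) (a : I → Fin r) :
    ∑ c, φ (mulMat p g κ c a) * radMon y c
      = φ (∏ i, p i) * (∑ d, φ (κ d) * radMon y d) * radMon y a := by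
  rw [← Equiv.sum_comp (Equiv.addRight a), Finset.mul_sum, Finset.sum_mul]
  refine Finset.sum_congr rfl fun d _ => ?_
  simp only [Equiv.coe_addRight, mulMat, add_sub_cancel_right, map_mul, map_prod, radMon]
  have : ∀ i, φ (if r ≤ (d i : ℕ) + (a i : ℕ) then g i else p i) * y i ^ (((d + a) i : Fin r) : ℕ)
      = φ (p i) * y i ^ (d i : ℕ) * y i ^ (a i : ℕ) := by
    intro i
    rw [Pi.add_apply, Fin.val_add_eq_ite]
    split_ifs with h
    · rw [← hy i, mul_assoc, mul_assoc, ← pow_add, ← pow_add]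
      congr 2
      omega
    · rw [mul_assoc, ← pow_add]
  have h2 := Finset.prod_congr (s₁ := (Finset.univ : Finset I)) rfl fun i _ => this i
  simp only [Finset.prod_mul_distrib] at h2
  rw [mul_assoc, h2]
  ring

theorem natDegree_det_mulMat_le {F I : Type*} [Field F] [Fintype I] [DecidableEq I] {r : ℕ}
    [NeZero r] (p g : I → F[X]) (hp : ∀ i, (p i).natDegree ≤ 1) (hg : ∀ i, (g i).natDegree ≤ 1)
    (κ : (I → Fin r) → F[X]) (B : ℕ) (hκ : ∀ j, (κ j).natDegree ≤ B) :
    (mulMat p g κ).det.natDegree ≤ r ^ Fintype.card I * (B + Fintype.card I) := by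
  rw [Matrix.det_apply]
  refine natDegree_sum_le_of_forall_le _ _ fun σ _ => ?_
  refine (natDegree_smul_le _ _).trans ((natDegree_prod_le _ _).trans ?_)
  refine (Finset.sum_le_card_nsmul _ _ (B + Fintype.card I) fun a _ => ?_).trans ?_
  · refine natDegree_mul_le.trans (add_le_add (hκ _) ((natDegree_prod_le _ _).trans ?_))
    refine (Finset.sum_le_card_nsmul _ _ 1 fun i _ => ?_).trans (by simp)
    split_ifs
    exacts [hg i, hp i]
  · simp

/-! ### Independence of radicals -/

/-- Linear independence of radicals: if the elements `h ^ j`, `j ∈ {0, …, r - 1}^I`, are pairwise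
inequivalent modulo `r`-th powers of `K`, then the monomials in `r`-th roots of the `h i` are linearly
independent over `K`. The Galois group acts on the monomials through characters with values in `K`;
these are distinct, hence independent by Dedekind's lemma. -/
theorem exists_radicals {K I : Type*} [Field K] [Fintype I] [DecidableEq I] {r : ℕ} [NeZero r]
    {z : K} (hz : IsPrimitiveRoot z r) (hr : (r : K) ≠ 0) (h : I → K) (h0 : ∀ i, h i ≠ 0)
    (hind : ∀ (j j' : I → Fin r) (g : K), radMon h j = g ^ r * radMon h j' → j = j') :
    ∃ y : I → SeparableClosure K, (∀ i, y i ^ r = algebraMap K _ (h i)) ∧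
      ∀ c : (I → Fin r) → K, ∑ j, algebraMap K _ (c j) * radMon y j = 0 → c = 0 := by
  have : ∀ i, ∃ y : SeparableClosure K, y ^ r = algebraMap K _ (h i) := by
    intro i
    have : NeZero (r : SeparableClosure K) := ⟨by
      rw [← map_natCast (algebraMap K (SeparableClosure K))]
      exact (_root_.map_ne_zero _).2 hr⟩
    exact IsSepClosed.exists_pow_nat_eq _ _
  set E := SeparableClosure K with hE
  choose y hy using this
  refine ⟨y, hy, fun c hc => ?_⟩
  have hy0 : ∀ i, y i ≠ 0 := fun i hi => h0 i (by
    have := hy i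
    rw [hi, zero_pow (NeZero.ne r)] at this
    exact (map_eq_zero _).1 this.symm)
  have hm0 : ∀ j : I → Fin r, radMon y j ≠ 0 := fun j =>
    Finset.prod_ne_zero_iff.2 fun i _ => pow_ne_zero _ (hy0 i)
  have hmr : ∀ j : I → Fin r, radMon y j ^ r = algebraMap K E (radMon h j) := fun j => by
    simp only [radMon, map_prod, map_pow, ← Finset.prod_pow]
    refine Finset.prod_congr rfl fun i _ => ?_
    rw [← pow_mul, mul_comm, pow_mul, hy]
  have hz' : IsPrimitiveRoot (algebraMap K E z) r := hz.map_of_injective (algebraMap K E).injective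
  -- `σ` multiplies each monomial by an `r`-th root of unity, and these all lie in `K`.
  have hK : ∀ (j : I → Fin r) (σ : E ≃ₐ[K] E), ∃ w : K,
      σ (radMon y j) / radMon y j = algebraMap K E w := by
    intro j σ
    have : (σ (radMon y j) / radMon y j) ^ r = 1 := by
      rw [div_pow, ← map_pow, hmr, AlgEquiv.commutes, div_self]
      rw [← hmr]
      exact pow_ne_zero _ (hm0 j)
    obtain ⟨i, -, hi⟩ := hz'.eq_pow_of_pow_eq_one this
    exact ⟨z ^ i, by rw [map_pow, hi]⟩
  let χ : (I → Fin r) → ((E ≃ₐ[K] E) →* E) := fun j =>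
    { toFun := fun σ => σ (radMon y j) / radMon y j
      map_one' := by simp [hm0 j]
      map_mul' := fun σ τ => by
        obtain ⟨w, hw⟩ := hK j τ
        have h1 : τ (radMon y j) = algebraMap K E w * radMon y j := by
          rw [← hw, div_mul_cancel₀ _ (hm0 j)]
        rw [hw, AlgEquiv.mul_apply, h1, map_mul, AlgEquiv.commutes]
        ring }
  -- If two characters agree, the quotient of the monomials is Galois-invariant, so lies in `K`.
  have hχ : Function.Injective χ := by
    intro j j' hjj
    have hfix : ∀ σ : E ≃ₐ[K] E, σ (radMon y j / radMon y j') = radMon y j / radMon y j' := by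
      intro σ
      have h1 : σ (radMon y j) / radMon y j = σ (radMon y j') / radMon y j' :=
        DFunLike.congr_fun hjj σ
      have h2 : σ (radMon y j') ≠ 0 := by simpa using hm0 j'
      rw [map_div₀]
      rw [div_eq_div_iff (hm0 _) (hm0 _)] at h1
      rw [div_eq_div_iff h2 (hm0 _), h1]
      ring
    obtain ⟨g, hg⟩ := (InfiniteGalois.mem_range_algebraMap_iff_fixed (k := K) (K := E) _).2 hfix
    refine hind j j' g ((algebraMap K E).injective ?_)
    rw [map_mul, map_pow, hg, ← hmr, ← hmr, div_pow, div_mul_cancel₀ _ (pow_ne_zero _ (hm0 j'))]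
  have hli := (linearIndependent_monoidHom (E ≃ₐ[K] E) E).comp χ hχ
  rw [Fintype.linearIndependent_iff] at hli
  have := hli (fun j => algebraMap K E (c j) * radMon y j) (by
    funext σ
    have h1 := congrArg σ hc
    rw [map_sum, map_zero] at h1
    rw [Finset.sum_apply, Pi.zero_apply, ← h1]
    refine Finset.sum_congr rfl fun j _ => ?_
    simp only [Function.comp, Pi.smul_apply, smul_eq_mul, map_mul]
    change _ * (σ (radMon y j) / radMon y j) = _
    rw [AlgEquiv.commutes, mul_assoc, mul_div_cancel₀ _ (hm0 j)])
  funext j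
  simpa [hm0 j] using this j

theorem radMon_ne_zero {S I : Type*} [CommRing S] [IsDomain S] [Fintype I] {r : ℕ} {y : I → S}
    (hy : ∀ i, y i ≠ 0) (j : I → Fin r) : radMon y j ≠ 0 :=
  Finset.prod_ne_zero_iff.2 fun i _ => pow_ne_zero _ (hy i)

theorem rootMultiplicity_radMon {F I : Type*} [Field F] [Fintype I] [DecidableEq I] {r : ℕ}
    {b : I → F} (hb : Function.Injective b) (j : I → Fin r) (i : I) :
    rootMultiplicity (-b i) (radMon (fun i => X + C (b i)) j) = j i := by
  classical
  have h0 : radMon (fun i => X + C (b i)) j ≠ 0 := radMon_ne_zero (fun i => X_add_C_ne_zero _) j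
  rw [← count_roots, radMon, roots_prod _ _ h0, Multiset.count_bind]
  simp only [roots_pow, roots_X_add_C, Multiset.count_nsmul, Multiset.count_singleton, neg_inj,
    hb.eq_iff]
  simp

/-- The hypothesis of `exists_radicals` for `h i = c i / (X + b i)` over `F(X)`: comparing orders of
vanishing at `-b i` shows that the exponents agree modulo `r`. -/
theorem radMon_ratFunc_injective {F I : Type*} [Field F] [Fintype I] [DecidableEq I] {r : ℕ}
    {b c : I → F} (hb : Function.Injective b) (hc : ∀ i, c i ≠ 0) (j j' : I → Fin r)
    (g : RatFunc F)
    (h : radMon (fun i => algebraMap F[X] (RatFunc F) (C (c i)) /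
        algebraMap F[X] (RatFunc F) (X + C (b i))) j =
      g ^ r * radMon (fun i => algebraMap F[X] (RatFunc F) (C (c i)) /
        algebraMap F[X] (RatFunc F) (X + C (b i))) j') : j = j' := by
  have hm : ∀ j : I → Fin r, radMon (fun i => algebraMap F[X] (RatFunc F) (C (c i)) /
        algebraMap F[X] (RatFunc F) (X + C (b i))) j =
      algebraMap F[X] (RatFunc F) (C (radMon c j)) /
        algebraMap F[X] (RatFunc F) (radMon (fun i => X + C (b i)) j) := fun j => by
    simp only [radMon, map_prod, map_pow, div_pow, Finset.prod_div_distrib]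
  have hf0 : ∀ j : I → Fin r, radMon (fun i => X + C (b i)) j ≠ 0 :=
    radMon_ne_zero (fun i => X_add_C_ne_zero _)
  have hc0 : ∀ j : I → Fin r, radMon c j ≠ 0 := radMon_ne_zero hc
  have hinj := RatFunc.algebraMap_injective F
  have hf0' : ∀ j : I → Fin r,
      algebraMap F[X] (RatFunc F) (radMon (fun i => X + C (b i)) j) ≠ 0 := fun j =>
    (map_ne_zero_iff _ hinj).2 (hf0 j)
  have hg0 : g ≠ 0 ∨ r = 0 := by
    by_contra! hg
    rw [hm, hg.1, zero_pow hg.2, zero_mul, div_eq_zero_iff] at h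
    exact h.elim ((map_ne_zero_iff _ hinj).2 (C_ne_zero.2 (hc0 j))) (hf0' j)
  rcases hg0 with hg0 | rfl
  swap
  · funext i
    exact (j i).elim0
  have hd := g.denom_ne_zero
  have hd' := (map_ne_zero_iff _ hinj).2 hd
  have hn : g.num ≠ 0 := RatFunc.num_ne_zero hg0
  rw [hm, hm, ← RatFunc.num_div_denom g, div_pow, div_mul_div_comm,
    div_eq_div_iff (hf0' j) (mul_ne_zero (pow_ne_zero _ hd') (hf0' j'))] at h
  simp only [← map_mul, ← map_pow] at h
  have h := hinj h
  funext i
  have h := congrArg (rootMultiplicity (-b i)) h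
  have hC : ∀ j : I → Fin r, C (radMon c j) ≠ 0 := fun j => C_ne_zero.2 (hc0 j)
  have hpow : ∀ p : F[X],
      rootMultiplicity (-b i) (p ^ r) = r * rootMultiplicity (-b i) p := fun p => by
    classical
    rw [← count_roots, ← count_roots, roots_pow, Multiset.count_nsmul]
  have hN := pow_ne_zero r hn
  have hD := pow_ne_zero r hd
  rw [rootMultiplicity_mul (mul_ne_zero (hC j) (mul_ne_zero hD (hf0 j'))),
    rootMultiplicity_mul (mul_ne_zero hD (hf0 j')),
    rootMultiplicity_mul (mul_ne_zero (mul_ne_zero hN (hC j')) (hf0 j)),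
    rootMultiplicity_mul (mul_ne_zero hN (hC j')), rootMultiplicity_C, rootMultiplicity_C,
    rootMultiplicity_radMon hb, rootMultiplicity_radMon hb, hpow, hpow] at h
  have h2 : (j i : ℕ) ≡ j' i [MOD r] := by
    have := congrArg (· % r) h
    simp [Nat.add_mod] at this
    exact this.symm
  exact Fin.ext (h2.eq_of_lt_of_lt (j i).2 (j' i).2)

/-! ### The zero estimate -/

/-- If the `y i` satisfy `(X + b i) * y i ^ r ≡ c i` modulo `P`, a combination of the monomials
`y ^ j` with coefficients of small degree relative to `P` can vanish modulo `P` only if it is the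
zero combination. The determinant of the multiplication matrix vanishes modulo `P`, hence vanishes
for degree reasons; over the genuine radical extension of `F(X)` this yields a zero divisor unless
`κ = 0`. -/
theorem zero_estimate {F I : Type*} [Field F] [Fintype I] [DecidableEq I] {r : ℕ} [NeZero r]
    {z : F} (hz : IsPrimitiveRoot z r) (hr : (r : F) ≠ 0) {b c : I → F}
    (hb : Function.Injective b) (hc : ∀ i, c i ≠ 0) (P : F[X]) (y : I → F[X])
    (hy : ∀ i, P ∣ (X + C (b i)) * y i ^ r - C (c i)) (κ : (I → Fin r) → F[X]) (B : ℕ)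
    (hκ : ∀ j, (κ j).natDegree ≤ B)
    (hP : r ^ Fintype.card I * (B + Fintype.card I) < P.natDegree)
    (hdvd : P ∣ ∑ j, κ j * radMon y j) : κ = 0 := by
  set M := mulMat (fun i => X + C (b i)) (fun i => C (c i)) κ with hM
  -- Modulo `P` the row vector of monomials, whose entry at `0` is `1`, is killed by `M`.
  have hdet : M.det = 0 := by
    have hdeg : M.det.natDegree ≤ _ := natDegree_det_mulMat_le (fun i => X + C (b i))
      (fun i => C (c i)) (fun i => natDegree_X_add_C _ |>.le) (fun i => by simp) κ B hκ
    refine eq_zero_of_dvd_of_natDegree_lt ?_ (hdeg.trans_lt hP)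
    set φ := Ideal.Quotient.mk (Ideal.span {P}) with hφ
    have hφ0 : ∀ {f}, P ∣ f → φ f = 0 := fun h =>
      Ideal.Quotient.eq_zero_iff_mem.2 (Ideal.mem_span_singleton.2 h)
    have hsum := sum_mulMat φ (fun i => X + C (b i)) (fun i => C (c i)) (fun i => φ (y i))
      (fun i => by
        have := hφ0 (hy i)
        rw [map_sub, sub_eq_zero, map_mul, map_pow] at this
        exact this) κ
    have hmon : ∀ j : I → Fin r, radMon (fun i => φ (y i)) j = φ (radMon y j) := fun j => by
      simp only [radMon, map_prod, map_pow]
    have hrow : ∀ a, P ∣ ∑ c, M c a * radMon y c := fun a => by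
      rw [← Ideal.mem_span_singleton, ← Ideal.Quotient.eq_zero_iff_mem]
      have h1 := hsum a
      simp only [hmon, ← map_mul, ← map_sum] at h1
      rw [← hφ, h1]
      exact hφ0 (Dvd.dvd.mul_right (Dvd.dvd.mul_left hdvd _) _)
    have h2 : ((fun c => radMon y c) ᵥ* M) ᵥ* M.adjugate = M.det • fun c => radMon y c := by
      rw [Matrix.vecMul_vecMul, Matrix.mul_adjugate, Matrix.vecMul_smul, Matrix.vecMul_one]
    have h3 := congrFun h2 0
    have h4 : radMon y (0 : I → Fin r) = 1 := by simp [radMon]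
    rw [Pi.smul_apply, h4, smul_eq_mul, mul_one] at h3
    rw [← h3]
    refine Finset.dvd_sum fun a _ => Dvd.dvd.mul_right ?_ _
    have := hrow a
    simp only [mul_comm (M _ a)] at this
    exact this
  obtain ⟨x, hx0, hx⟩ := Matrix.exists_mulVec_eq_zero_iff.2 hdet
  have hinj := RatFunc.algebraMap_injective F
  have hf0 : ∀ i, algebraMap F[X] (RatFunc F) (X + C (b i)) ≠ 0 := fun i =>
    (map_ne_zero_iff _ hinj).2 (X_add_C_ne_zero _)
  have hr' : (r : RatFunc F) ≠ 0 := by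
    rw [← map_natCast (algebraMap F (RatFunc F))]
    exact (_root_.map_ne_zero _).2 hr
  obtain ⟨Y, hY, hind⟩ := exists_radicals
    (hz.map_of_injective (algebraMap F (RatFunc F)).injective) hr'
    (fun i => algebraMap F[X] (RatFunc F) (C (c i)) / algebraMap F[X] (RatFunc F) (X + C (b i)))
    (fun i => div_ne_zero ((map_ne_zero_iff _ hinj).2 (C_ne_zero.2 (hc i))) (hf0 i))
    (radMon_ratFunc_injective hb hc)
  set ψ : F[X] →+* SeparableClosure (RatFunc F) :=
    (algebraMap (RatFunc F) (SeparableClosure (RatFunc F))).comp (algebraMap F[X] (RatFunc F))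
    with hψ
  have hψi : Function.Injective ψ := (algebraMap (RatFunc F) _).injective.comp hinj
  have hindψ : ∀ d : (I → Fin r) → F[X], ∑ j, ψ (d j) * radMon Y j = 0 → d = 0 := by
    intro d hd
    have := hind (fun j => algebraMap F[X] (RatFunc F) (d j)) hd
    funext j
    exact (map_eq_zero_iff _ hinj).1 (congrFun this j)
  have hsum := sum_mulMat ψ (fun i => X + C (b i)) (fun i => C (c i)) Y (fun i => by
    rw [hY i, hψ, RingHom.comp_apply, RingHom.comp_apply, ← map_mul, mul_div_cancel₀ _ (hf0 i)]) κ
  have hzero : ψ (∏ i, (X + C (b i))) * (∑ d, ψ (κ d) * radMon Y d) *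
      (∑ a, ψ (x a) * radMon Y a) = 0 := by
    have h1 : ∀ a, ψ (x a) * (ψ (∏ i, (X + C (b i))) * (∑ d, ψ (κ d) * radMon Y d) * radMon Y a)
      = ∑ c, ψ (M c a * x a) * radMon Y c := fun a => by
      rw [← hsum a, Finset.mul_sum]
      refine Finset.sum_congr rfl fun c _ => ?_
      rw [map_mul]
      ring
    have h2 : ∀ c, ∑ a, M c a * x a = 0 := fun c => congrFun hx c
    calc _ = ∑ a, ψ (x a) *
          (ψ (∏ i, (X + C (b i))) * (∑ d, ψ (κ d) * radMon Y d) * radMon Y a) := by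
          rw [Finset.mul_sum]
          exact Finset.sum_congr rfl fun a _ => by ring
      _ = 0 := by
          simp only [h1]
          rw [Finset.sum_comm]
          simp only [← Finset.sum_mul, ← map_sum, h2, map_zero, zero_mul, Finset.sum_const_zero]
  rcases mul_eq_zero.1 hzero with h | h
  · rcases mul_eq_zero.1 h with h | h
    · refine absurd ((map_eq_zero_iff _ hψi).1 h) ?_
      exact Finset.prod_ne_zero_iff.2 fun i _ => X_add_C_ne_zero _
    · exact hindψ κ h
  · exact absurd (hindψ x h) hx0

/-! ### Hasse derivatives of products of powers of linear polynomials -/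

/-- Every Hasse derivative of `y` is `y` times a rational function: of order `t`, the function has
denominator `W ^ t` and numerator of degree at most `m * t`. -/
def Tame {F : Type*} [Field F] (W : F[X]) (m : ℕ) (y : F[X]) : Prop :=
  ∀ t, ∃ H : F[X], H.natDegree ≤ m * t ∧ W ^ t * hasseDeriv t y = H * y

theorem Tame.one {F : Type*} [Field F] (W : F[X]) (m : ℕ) : Tame W m 1 := fun t => by
  rcases Nat.eq_zero_or_pos t with rfl | ht
  · exact ⟨1, by simp⟩
  · exact ⟨0, by simp [hasseDeriv_apply_one _ ht]⟩

theorem Tame.mul {F : Type*} [Field F] {W : F[X]} {m : ℕ} {y y' : F[X]} (h : Tame W m y)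
    (h' : Tame W m y') : Tame W m (y * y') := by
  choose H hd hH using h
  choose H' hd' hH' using h'
  refine fun t => ⟨∑ x ∈ Finset.HasAntidiagonal.antidiagonal t, H x.1 * H' x.2, ?_, ?_⟩
  · refine natDegree_sum_le_of_forall_le _ _ fun x hx => natDegree_mul_le.trans ?_
    rw [← Finset.HasAntidiagonal.mem_antidiagonal.1 hx, mul_add]
    exact add_le_add (hd _) (hd' _)
  · rw [hasseDeriv_mul, Finset.mul_sum, Finset.sum_mul]
    refine Finset.sum_congr rfl fun x hx => ?_
    rw [← Finset.HasAntidiagonal.mem_antidiagonal.1 hx, pow_add]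
    linear_combination (W ^ x.2 * hasseDeriv x.2 y') * hH x.1 + (H x.1 * y) * hH' x.2

theorem Tame.pow {F : Type*} [Field F] {W : F[X]} {m : ℕ} {y : F[X]} (h : Tame W m y) (n : ℕ) :
    Tame W m (y ^ n) := by
  induction n with
  | zero => simpa using Tame.one W m
  | succ n ih => simpa [pow_succ] using ih.mul h

theorem Tame.prod {F I : Type*} [Field F] {W : F[X]} {m : ℕ} {y : I → F[X]}
    (h : ∀ i, Tame W m (y i)) (s : Finset I) : Tame W m (∏ i ∈ s, y i) := by
  classical
  induction s using Finset.induction_on with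
  | empty => simpa using Tame.one W m
  | insert i s hi ih => simpa [Finset.prod_insert hi] using (h i).mul ih

theorem natDegree_prod_X_add_C_le {F I : Type*} [Field F] (b : I → F) (s : Finset I) :
    (∏ i ∈ s, (X + C (b i))).natDegree ≤ s.card :=
  (natDegree_prod_le _ _).trans ((Finset.sum_le_card_nsmul _ _ 1 fun i _ => by simp).trans
    (by simp))

theorem Tame.X_add_C {F I : Type*} [Field F] [Fintype I] (b : I → F) (i : I) :
    Tame (∏ i, (X + C (b i))) (Fintype.card I) (X + C (b i)) := by
  classical
  intro t
  match t with
  | 0 => exact ⟨1, by simp⟩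
  | 1 =>
    refine ⟨∏ k ∈ Finset.univ.erase i, (X + C (b k)),
      (natDegree_prod_X_add_C_le _ _).trans (by simp [Finset.card_erase_of_mem]), ?_⟩
    rw [Finset.prod_erase_mul _ _ (Finset.mem_univ i), hasseDeriv_one']
    simp
  | t + 2 =>
    refine ⟨0, by simp, ?_⟩
    rw [hasseDeriv_eq_zero_of_lt_natDegree _ _ (by simp), mul_zero, zero_mul]

theorem Tame.radMon {F I : Type*} [Field F] [Fintype I] (b : I → F) (s : ℕ) {r : ℕ}
    (j : I → Fin r) :
    Tame (∏ i, (X + C (b i))) (Fintype.card I) (radMon (fun i => (X + C (b i)) ^ s) j) :=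
  Tame.prod (fun i => ((Tame.X_add_C b i).pow s).pow _) _

/-! ### Auxiliary facts on finite fields -/

/-- A vanishing criterion valid in every characteristic, through the Taylor expansion at `a`. -/
theorem X_sub_C_pow_dvd_of_hasseDeriv {F : Type*} [Field F] (f : F[X]) (a : F) (M : ℕ)
    (h : ∀ t < M, (hasseDeriv t f).eval a = 0) : (X - C a) ^ M ∣ f := by
  obtain ⟨g, hg⟩ : X ^ M ∣ taylor a f :=
    X_pow_dvd_iff.2 fun d hd => by rw [taylor_coeff]; exact h d hd
  refine ⟨taylor (-a) g, ?_⟩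
  have := congrArg (taylor (-a)) hg
  rw [taylor_taylor, neg_add_cancel, taylor_zero, taylor_mul] at this
  rw [this]
  congr 1
  simp [taylor_apply, sub_eq_add_neg]

theorem exists_isPrimitiveRoot {F : Type*} [Field F] [Fintype F] {r s : ℕ}
    (hq : Fintype.card F = r * s + 1) (hs : 0 < s) (hr : 0 < r) :
    ∃ z : F, IsPrimitiveRoot z r := by
  classical
  obtain ⟨g, hg⟩ := IsCyclic.exists_ofOrder_eq_natCard (α := Fˣ)
  have h1 : orderOf g = s * r := by
    rw [hg, Nat.card_eq_fintype_card, Fintype.card_units, hq, Nat.add_sub_cancel, mul_comm]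
  have h2 := IsPrimitiveRoot.orderOf g
  rw [h1] at h2
  exact ⟨_, (IsPrimitiveRoot.coe_units_iff.2 (h2.pow (by positivity) rfl))⟩

theorem X_sub_C_pow_card {F : Type*} [Field F] [Fintype F] (a : F) :
    (X - C a) ^ Fintype.card F = X ^ Fintype.card F - C a := by
  obtain ⟨p, hp⟩ := CharP.exists F
  obtain ⟨n, hpp, hn⟩ := FiniteField.card F p
  have := Fact.mk hpp
  rw [hn, sub_pow_char_pow, ← C_pow, ← hn, FiniteField.pow_card]

theorem eq_zero_of_forall_sum_pow {F : Type*} [Field F] {L : ℕ} (c : Fin L → F) (A : Finset F)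
    (hA : L ≤ A.card) (h : ∀ a ∈ A, ∑ l : Fin L, a ^ (l : ℕ) * c l = 0) : c = 0 := by
  have : (∑ l : Fin L, monomial (l : ℕ) (c l) : F[X]) = 0 := by
    refine eq_zero_of_degree_lt_of_eval_finset_eq_zero A ?_ fun a ha => ?_
    · refine lt_of_lt_of_le ?_ (Nat.cast_le.2 hA)
      rw [← mem_degreeLT]
      exact Submodule.sum_mem _ fun l _ => mem_degreeLT.2
        ((degree_monomial_le _ _).trans_lt (by exact_mod_cast l.2))
    · rw [eval_finsetSum, ← h a ha]
      simp [mul_comm]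
  funext l
  have h2 := congrArg (fun p => coeff p (l : ℕ)) this
  simpa [coeff_monomial, Fin.val_inj] using h2

/-! ### The Stepanov auxiliary polynomial -/

/-- Near `a`, the polynomial `X ^ q` may be replaced by the constant `a`, up to order `q`. -/
theorem dvd_sum_sub_specialize {F J : Type*} [Field F] [Fintype F] [Fintype J] {L : ℕ}
    (k : J → Fin L → F[X]) (y : J → F[X]) (a : F) :
    (X - C a) ^ Fintype.card F ∣
      ∑ j, (∑ l : Fin L, X ^ (Fintype.card F * (l : ℕ)) * k j l) * y j -
      ∑ j, (∑ l : Fin L, C (a ^ (l : ℕ)) * k j l) * y j := by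
  rw [← Finset.sum_sub_distrib]
  refine Finset.dvd_sum fun j _ => ?_
  rw [← sub_mul, ← Finset.sum_sub_distrib]
  refine Dvd.dvd.mul_right (Finset.dvd_sum fun l _ => ?_) _
  rw [← sub_mul, pow_mul, C_pow, X_sub_C_pow_card]
  exact Dvd.dvd.mul_right (sub_dvd_pow_sub_pow _ _ _) _

/-- The auxiliary polynomial `∑ j l, k j l * X ^ (q * l) * y ^ j`, where `y i = (X + b i) ^ s`, is not
zero. Otherwise, the zero estimate modulo `(X - a) ^ q` gives `∑ l, a ^ l * k j l = 0` for all but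
few `a`, and these are too many roots for a polynomial of degree less than `L` in `a`. -/
theorem auxiliary_ne_zero {F I : Type*} [Field F] [Fintype F] [Fintype I] [DecidableEq I]
    {r s L B : ℕ} [NeZero r] (hq : Fintype.card F = r * s + 1) (hs : 0 < s) {b : I → F}
    (hb : Function.Injective b) (hqB : r ^ Fintype.card I * (B + Fintype.card I) < Fintype.card F)
    (hqL : L + Fintype.card I ≤ Fintype.card F) (k : (I → Fin r) → Fin L → F[X])
    (hk : ∀ j l, (k j l).natDegree ≤ B) (hk0 : k ≠ 0) :
    ∑ j, (∑ l : Fin L, X ^ (Fintype.card F * (l : ℕ)) * k j l) *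
      radMon (fun i => (X + C (b i)) ^ s) j ≠ 0 := by
  classical
  intro h0
  obtain ⟨z, hz⟩ := exists_isPrimitiveRoot hq hs (NeZero.pos r)
  have hr : (r : F) ≠ 0 := by
    intro hr
    have := FiniteField.cast_card_eq_zero F
    rw [hq] at this
    simp [hr] at this
  have hspec : ∀ a, (∀ i, a + b i ≠ 0) →
      (fun j => ∑ l : Fin L, C (a ^ (l : ℕ)) * k j l) = (0 : (I → Fin r) → F[X]) := by
    intro a ha
    have hd := dvd_sum_sub_specialize k (radMon (fun i => (X + C (b i)) ^ s)) a
    rw [h0, zero_sub, dvd_neg] at hd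
    refine zero_estimate hz hr hb ha _ _ (fun i => ?_) _ B (fun j => ?_) ?_ hd
    · rw [← pow_mul, ← pow_succ', mul_comm s r, ← hq]
      have h1 := X_sub_C_pow_card (-b i)
      simp only [C_neg, sub_neg_eq_add] at h1
      rw [h1, X_sub_C_pow_card, C_add, add_sub_add_right_eq_sub]
    · refine natDegree_sum_le_of_forall_le _ _ fun l _ => ?_
      exact (natDegree_C_mul_le _ _).trans (hk j l)
    · rwa [natDegree_pow, natDegree_X_sub_C, mul_one]
  refine hk0 ?_
  funext j l
  ext n
  set A : Finset F := Finset.univ \ Finset.univ.image (fun i => -b i) with hA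
  have hAc : L ≤ A.card := by
    have h1 : (Finset.univ.image (fun i => -b i)).card ≤ Fintype.card I :=
      Finset.card_image_le.trans (by simp)
    have h2 : _ ≤ A.card := Finset.le_card_sdiff (Finset.univ.image (fun i => -b i)) (Finset.univ : Finset F)
    rw [Finset.card_univ] at h2
    omega
  have := eq_zero_of_forall_sum_pow (fun l => (k j l).coeff n) A hAc fun a ha => by
    have h1 := congrArg (fun p => coeff p n) (congrFun (hspec a fun i hi => ?_) j)
    · simpa only [finsetSum_coeff, coeff_C_mul, Pi.zero_apply, coeff_zero] using h1
    · refine (Finset.mem_sdiff.1 ha).2 (Finset.mem_image.2 ⟨i, Finset.mem_univ _, ?_⟩)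
      exact (eq_neg_of_add_eq_zero_left hi).symm
  exact congrFun this l

/-- Coefficients making the specialised auxiliary polynomial vanish to order `M` at every point of
the fibre over `v`. At such a point its `t`-th Hasse derivative is, up to a unit, the value of one
polynomial depending linearly on `k` and of degree less than `L + B + |I| * M`; having all of these
vanish for `t < M` is a linear system with more unknowns than equations. -/
theorem exists_auxiliary {F I : Type*} [Field F] [Fintype I] [DecidableEq I]
    {r L B M : ℕ} [NeZero r] (s : ℕ) (b v : I → F) (hB : 0 < B)
    (hdim : M * (L + B + Fintype.card I * M) < r ^ Fintype.card I * L * B) :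
    ∃ k : (I → Fin r) → Fin L → F[X], k ≠ 0 ∧ (∀ j l, (k j l).natDegree ≤ B) ∧
      ∀ a : F, (∀ i, a + b i ≠ 0) → (∀ i, (a + b i) ^ s = v i) →
        (X - C a) ^ M ∣ ∑ j, (∑ l : Fin L, C (a ^ (l : ℕ)) * k j l) *
          radMon (fun i => (X + C (b i)) ^ s) j := by
  classical
  set m := Fintype.card I with hm
  set W : F[X] := ∏ i, (X + C (b i)) with hW
  have hWd : W.natDegree ≤ m := natDegree_prod_X_add_C_le b Finset.univ
  choose H hHd hH using fun j : I → Fin r => Tame.radMon b s j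
  rw [← hW] at hH
  rw [← hm] at hHd
  let kk : ((I → Fin r) × Fin L → Fin B → F) → (I → Fin r) → Fin L → F[X] :=
    fun c j l => ((degreeLTEquiv F B).symm (c (j, l)) : F[X])
  have hkk_add : ∀ c c' j l, kk (c + c') j l = kk c j l + kk c' j l := fun c c' j l => by
    simp [kk]
  have hkk_smul : ∀ (x : F) c j l, kk (x • c) j l = C x * kk c j l := fun x c j l => by
    simp [kk, smul_eq_C_mul]
  have hkk_deg : ∀ c j l, (kk c j l).natDegree ≤ B - 1 := fun c j l => by
    have h1 := mem_degreeLT.1 ((degreeLTEquiv F B).symm (c (j, l))).2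
    have h2 : (kk c j l).natDegree < B := by
      rcases eq_or_ne (kk c j l) 0 with h | h
      · rw [h]; simpa using hB
      · exact (natDegree_lt_iff_degree_lt h).2 h1
    omega
  -- `E t j g` is the numerator of the `t`-th Hasse derivative of `g * y ^ j` divided by `y ^ j`.
  let E : ℕ → (I → Fin r) → F[X] → F[X] := fun t j g =>
    ∑ x ∈ Finset.HasAntidiagonal.antidiagonal t, W ^ x.1 * hasseDeriv x.1 g * H j x.2
  have hE : ∀ t j g, W ^ t * hasseDeriv t (g * radMon (fun i => (X + C (b i)) ^ s) j) =
      E t j g * radMon (fun i => (X + C (b i)) ^ s) j := by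
    intro t j g
    rw [hasseDeriv_mul, Finset.mul_sum, Finset.sum_mul]
    refine Finset.sum_congr rfl fun x hx => ?_
    rw [← Finset.HasAntidiagonal.mem_antidiagonal.1 hx, pow_add]
    linear_combination (W ^ x.1 * hasseDeriv x.1 g) * hH j x.2
  have hE_add : ∀ t j g g', E t j (g + g') = E t j g + E t j g' := fun t j g g' => by
    simp only [E, map_add, mul_add, add_mul, Finset.sum_add_distrib]
  have hE_C : ∀ t j x g, E t j (C x * g) = C x * E t j g := fun t j x g => by
    simp only [E, ← smul_eq_C_mul, map_smul, mul_smul_comm, smul_mul_assoc, Finset.smul_sum]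
  have hE_sum : ∀ t j (g : Fin L → F[X]), E t j (∑ l, g l) = ∑ l, E t j (g l) := fun t j g => by
    simp only [E, map_sum, Finset.mul_sum, Finset.sum_mul]
    exact Finset.sum_comm
  have hE_deg : ∀ t j g, g.natDegree ≤ B - 1 → (E t j g).natDegree ≤ m * t + (B - 1) := by
    intro t j g hg
    refine natDegree_sum_le_of_forall_le _ _ fun x hx => ?_
    rw [← Finset.HasAntidiagonal.mem_antidiagonal.1 hx]
    have h1 : (W ^ x.1).natDegree ≤ x.1 * m := natDegree_pow_le.trans (by gcongr)
    have h2 := natDegree_hasseDeriv_le g x.1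
    have h3 := hHd j x.2
    have h4 := natDegree_mul_le (p := W ^ x.1 * hasseDeriv x.1 g) (q := H j x.2)
    have h5 := natDegree_mul_le (p := W ^ x.1) (q := hasseDeriv x.1 g)
    rw [mul_add, mul_comm m x.1]
    omega
  -- The polynomial whose value at a point of the fibre is the `t`-th Hasse derivative there,
  -- up to a power of `W`.
  let P : ((I → Fin r) × Fin L → Fin B → F) → ℕ → F[X] := fun c t =>
    ∑ j, C (radMon v j) * ∑ l : Fin L, X ^ (l : ℕ) * E t j (kk c j l)
  let T : ((I → Fin r) × Fin L → Fin B → F) →ₗ[F] (Fin M × Fin (L + B + m * M) → F) :=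
    { toFun := fun c x => (P c x.1).coeff x.2
      map_add' := fun c c' => by
        funext x
        simp only [P, hkk_add, hE_add, mul_add, Finset.sum_add_distrib, coeff_add, Pi.add_apply]
      map_smul' := fun x c => by
        funext y
        rw [RingHom.id_apply, Pi.smul_apply, smul_eq_mul, ← coeff_C_mul]
        congr 1
        simp only [P, hkk_smul, hE_C, Finset.mul_sum]
        exact Finset.sum_congr rfl fun j _ => Finset.sum_congr rfl fun l _ => by ring }
  have hker : T.ker ≠ ⊥ := LinearMap.ker_ne_bot_of_finrank_lt (by
    rw [Module.finrank_pi_fintype, Module.finrank_pi_fintype]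
    simpa [mul_assoc, ← hm] using hdim)
  obtain ⟨c, hcT, hc0⟩ := Submodule.exists_mem_ne_zero_of_ne_bot hker
  have hP0 : ∀ t < M, P c t = 0 := by
    intro t ht
    have hdeg : (P c t).natDegree < L + B + m * M := by
      have : (P c t).natDegree ≤ L + (B - 1) + m * M := by
        refine natDegree_sum_le_of_forall_le _ _ fun j _ => (natDegree_C_mul_le _ _).trans ?_
        refine natDegree_sum_le_of_forall_le _ _ fun l _ => natDegree_mul_le.trans ?_
        have h1 := hE_deg t j _ (hkk_deg c j l)
        have h2 : m * t ≤ m * M := by gcongr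
        rw [natDegree_X_pow]
        have := l.2
        omega
      omega
    ext n
    rcases lt_or_ge n (L + B + m * M) with hn | hn
    · exact congrFun (LinearMap.mem_ker.1 hcT) (⟨t, ht⟩, ⟨n, hn⟩)
    · exact coeff_eq_zero_of_natDegree_lt (hdeg.trans_le hn)
  refine ⟨kk c, fun h => hc0 ?_, fun j l => (hkk_deg c j l).trans (Nat.sub_le _ _), ?_⟩
  · funext ⟨j, l⟩
    have h1 : kk c j l = 0 := congrFun (congrFun h j) l
    simpa [kk] using h1
  · intro a ha hav
    refine X_sub_C_pow_dvd_of_hasseDeriv _ _ _ fun t ht => ?_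
    have hWa : W.eval a ≠ 0 := by
      rw [hW, eval_prod]
      exact Finset.prod_ne_zero_iff.2 fun i _ => by simpa using ha i
    have hmon : ∀ j : I → Fin r,
        (radMon (fun i => (X + C (b i)) ^ s) j).eval a = radMon v j := fun j => by
      simp [radMon, eval_prod, hav]
    refine (mul_eq_zero.1 (?_ : W.eval a ^ t * _ = 0)).resolve_left (pow_ne_zero _ hWa)
    rw [← eval_pow, ← eval_mul, map_sum, Finset.mul_sum]
    simp only [hE, hE_sum, hE_C]
    have h1 := congrArg (eval a) (hP0 t ht)
    rw [eval_zero] at h1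
    rw [← h1]
    simp only [P, eval_finsetSum, eval_mul, hmon, eval_C, eval_pow, eval_X]
    exact Finset.sum_congr rfl fun j _ => mul_comm _ _

/-- A nonzero polynomial of degree at most `q * (L + |I|) + B` vanishes to order `M` on the fibre `N`. -/
theorem stepanov_bound {F I : Type*} [Field F] [Fintype F] [Fintype I] [DecidableEq I]
    {r s L B M : ℕ} [NeZero r] (hq : Fintype.card F = r * s + 1) (hs : 0 < s) {b : I → F}
    (hb : Function.Injective b) (v : I → F) (hB : 0 < B)
    (hdim : M * (L + B + Fintype.card I * M) < r ^ Fintype.card I * L * B)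
    (hqB : r ^ Fintype.card I * (B + Fintype.card I) < Fintype.card F)
    (hqL : L + Fintype.card I ≤ Fintype.card F) (hqM : M ≤ Fintype.card F) (N : Finset F)
    (hN : ∀ a ∈ N, ∀ i, a + b i ≠ 0 ∧ (a + b i) ^ s = v i) :
    N.card * M ≤ Fintype.card F * (L + Fintype.card I) + B := by
  classical
  obtain ⟨k, hk0, hkd, hk⟩ := exists_auxiliary (r := r) s b v hB hdim
  have hΨ0 := auxiliary_ne_zero hq hs hb hqB hqL k hkd hk0
  set Ψ := ∑ j, (∑ l : Fin L, X ^ (Fintype.card F * (l : ℕ)) * k j l) *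
      radMon (fun i => (X + C (b i)) ^ s) j with hΨ
  have hdvd : ∏ a ∈ N, (X - C a) ^ M ∣ Ψ := by
    refine Finset.prod_dvd_of_coprime (fun a _ a' _ h =>
      ((pairwise_coprime_X_sub_C Function.injective_id) h).pow) fun a ha => ?_
    have h1 := (pow_dvd_pow (X - C a) hqM).trans
      (dvd_sum_sub_specialize k (radMon (fun i => (X + C (b i)) ^ s)) a)
    exact (dvd_sub_left (hk a (fun i => (hN a ha i).1) fun i => (hN a ha i).2)).1 h1
  have hdeg : Ψ.natDegree ≤ Fintype.card F * (L + Fintype.card I) + B := by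
    refine natDegree_sum_le_of_forall_le _ _ fun j _ => natDegree_mul_le.trans ?_
    have h1 : (∑ l : Fin L, X ^ (Fintype.card F * (l : ℕ)) * k j l).natDegree ≤
        Fintype.card F * L + B := by
      refine natDegree_sum_le_of_forall_le _ _ fun l _ => natDegree_mul_le.trans ?_
      rw [natDegree_X_pow]
      exact add_le_add (Nat.mul_le_mul_left _ l.2.le) (hkd j l)
    have h2 : (radMon (fun i => (X + C (b i)) ^ s) j).natDegree ≤
        Fintype.card F * Fintype.card I := by
      refine (natDegree_prod_le _ _).trans ((Finset.sum_le_card_nsmul _ _ (Fintype.card F)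
        fun i _ => ?_).trans (by simp [mul_comm]))
      rw [← pow_mul, natDegree_pow, natDegree_X_add_C, mul_one, hq, mul_comm]
      exact (Nat.mul_le_mul_right _ (j i).2.le).trans (Nat.le_succ _)
    rw [mul_add]
    omega
  have h3 := natDegree_le_of_dvd hdvd hΨ0
  rw [natDegree_prod _ _ fun a _ => pow_ne_zero _ (X_sub_C_ne_zero a)] at h3
  simp only [natDegree_pow, natDegree_X_sub_C, mul_one, Finset.sum_const, smul_eq_mul] at h3
  exact h3.trans hdeg

/-! ### Counting the fibres -/

/-- Each fibre of `a ↦ ((a + b i) ^ s)_i` has at most `(1 / r ^ m + δ) * q` elements for large `q`.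
All `r ^ m` of them together cover almost all of `F`, so this upper bound is asymptotically sharp. -/
theorem fiber_card_le (r m : ℕ) (hr : 1 ≤ r) (δ : ℝ) (hδ : 0 < δ) :
    ∃ Q : ℕ, ∀ (F : Type) [Field F] [Fintype F], Q < Fintype.card F →
      ∀ s, 0 < s → Fintype.card F = r * s + 1 → ∀ (I : Type) [Fintype I], Fintype.card I = m →
      ∀ (b v : I → F), Function.Injective b → ∀ N : Finset F,
      (∀ a ∈ N, ∀ i, a + b i ≠ 0 ∧ (a + b i) ^ s = v i) →
      (N.card : ℝ) ≤ (1 / (r : ℝ) ^ m + δ) * Fintype.card F := by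
  obtain ⟨L₀, hL₀⟩ := exists_nat_gt ((m + 2) / δ)
  -- With `M = R * L - 1`, the linear system is solvable as soon as `(R * L - 1) * (L + m * M) < B`,
  -- and the main term `(L + m) / M` of the bound tends to `1 / R` as `L` grows.
  set L := L₀ + 2 with hL
  set R := r ^ m with hR
  have hR1 : 1 ≤ R := Nat.one_le_pow _ _ hr
  obtain ⟨M, hM⟩ : ∃ M, R * L = M + 1 := ⟨R * L - 1, by
    have : 0 < R * L := by positivity
    omega⟩
  have hLM : L ≤ M + 1 := by rw [← hM]; exact Nat.le_mul_of_pos_left _ hR1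
  set B := (M + 1) * (L + m * M) with hB
  refine ⟨R * (B + m) + L + m + M + B, ?_⟩
  intro F _ _ hQ s hs hq I _ hI b v hb N hN
  classical
  have : NeZero r := ⟨by omega⟩
  have hB0 : 0 < B := by positivity
  have hmain := stepanov_bound (r := r) (L := L) (B := B) (M := M) hq hs hb v hB0
    (by
      rw [hI, ← hR, hM, hB]
      have : 0 < L + m * M := by positivity
      nlinarith)
    (by rw [hI, ← hR]; omega) (by omega) (by omega) N hN
  rw [hI] at hmain
  have h1 : (N.card : ℝ) * M ≤ Fintype.card F * (L + m) + B := by exact_mod_cast hmain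
  have h2 : (B : ℝ) ≤ Fintype.card F := by
    have : B ≤ Fintype.card F := by omega
    exact_mod_cast this
  have h3 : (R : ℝ) * L = M + 1 := by exact_mod_cast hM
  have hM0 : (0 : ℝ) < M := by
    have : 0 < M := by omega
    exact_mod_cast this
  have h4 : (m + 2 : ℝ) ≤ δ * M := by
    rw [div_lt_iff₀ hδ] at hL₀
    have : (L₀ : ℝ) ≤ M := by
      have : L₀ ≤ M := by omega
      exact_mod_cast this
    nlinarith
  have hRpos : (1 : ℝ) ≤ R := by exact_mod_cast hR1
  have h5 : (L : ℝ) - 1 ≤ 1 / R * M := by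
    rw [show (M : ℝ) = R * L - 1 by linarith, mul_sub, ← mul_assoc,
      one_div_mul_cancel (by positivity)]
    have : 1 / (R : ℝ) ≤ 1 := by rw [div_le_one (by positivity)]; exact hRpos
    linarith
  have hq0 : (0 : ℝ) ≤ Fintype.card F := Nat.cast_nonneg _
  have hRc : ((r : ℝ) ^ m) = R := by rw [hR]; push_cast; rfl
  rw [hRc]
  refine le_of_mul_le_mul_right ?_ hM0
  refine h1.trans ?_
  nlinarith [mul_le_mul_of_nonneg_left h4 hq0, mul_le_mul_of_nonneg_left h5 hq0]

/-! ### The permutation criterion -/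

theorem exists_pow_eq_of_pow_eq_one {F : Type*} [Field F] [Fintype F] {r s : ℕ}
    (hq : Fintype.card F = r * s + 1) (hr : 0 < r) (τ : Fˣ) (hτ : τ ^ r = 1) :
    ∃ x : Fˣ, x ^ s = τ := by
  classical
  obtain ⟨g, hg⟩ := IsCyclic.exists_generator (α := Fˣ)
  obtain ⟨i, rfl⟩ := (mem_powers_iff_mem_zpowers.2 (hg τ))
  have h1 : orderOf g = s * r := by
    rw [orderOf_eq_card_of_forall_mem_zpowers hg, Nat.card_eq_fintype_card, Fintype.card_units, hq,
      Nat.add_sub_cancel, mul_comm]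
  have h2 : s * r ∣ i * r := by
    rw [← h1, orderOf_dvd_iff_pow_eq_one, pow_mul]
    exact hτ
  obtain ⟨t, rfl⟩ := Nat.dvd_of_mul_dvd_mul_right hr h2
  exact ⟨g ^ t, by rw [← pow_mul, mul_comm]⟩

/-- The binomial permutes `F` if and only if the map it induces on `s`-th powers permutes the `r`-th
roots of unity; `v` records the values `(a + ζ) ^ s`. -/
theorem bijective_binomial_iff {F : Type*} [Field F] [Fintype F] {r s n k' : ℕ}
    (hq : Fintype.card F = r * s + 1) (hr : 0 < r) (hn : 0 < n)
    (hns : n.Coprime s) (a : F) (v : rootsOfUnity r F → rootsOfUnity r F)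
    (hv : ∀ ζ : rootsOfUnity r F, a + ((ζ : Fˣ) : F) ≠ 0 ∧
      (a + ((ζ : Fˣ) : F)) ^ s = ((v ζ : Fˣ) : F)) :
    Function.Bijective (fun x : F => x ^ n * (x ^ (s * k') + a)) ↔
      Function.Injective fun τ : rootsOfUnity r F => τ ^ n * v (τ ^ k') := by
  classical
  have hrs : ∀ x : Fˣ, (x ^ s) ^ r = 1 := fun x => by
    have := pow_card_eq_one (x := x)
    rwa [Fintype.card_units, hq, Nat.add_sub_cancel, mul_comm, pow_mul] at this
  let π : Fˣ → rootsOfUnity r F := fun x => ⟨x ^ s, (mem_rootsOfUnity r _).2 (hrs x)⟩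
  have hπ : ∀ x, ((π x : Fˣ) : F) = (x : F) ^ s := fun x => by simp [π]
  have hπs : Function.Surjective π := fun τ => by
    obtain ⟨x, hx⟩ := exists_pow_eq_of_pow_eq_one hq hr (τ : Fˣ) ((mem_rootsOfUnity r _).1 τ.2)
    exact ⟨x, Subtype.ext hx⟩
  have hxk : ∀ x : Fˣ, (x : F) ^ (s * k') + a = a + (((π x ^ k' : rootsOfUnity r F) : Fˣ) : F) := by
    intro x
    simp [π, pow_mul, add_comm]
  have hne : ∀ x : Fˣ, (x : F) ^ (s * k') + a ≠ 0 := fun x => by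
    rw [hxk]
    exact (hv _).1
  -- The `s`-th power of the binomial factors through `π`.
  have hfs : ∀ x : Fˣ, ((x : F) ^ n * ((x : F) ^ (s * k') + a)) ^ s =
      (((π x ^ n * v (π x ^ k') : rootsOfUnity r F) : Fˣ) : F) := fun x => by
    rw [mul_pow, hxk, (hv _).2, ← pow_mul, mul_comm n s, pow_mul, ← hπ]
    simp
  rw [← Finite.injective_iff_bijective]
  constructor
  · intro hinj τ τ' h
    obtain ⟨x, rfl⟩ := hπs τ
    obtain ⟨y, rfl⟩ := hπs τ'
    have h1 := congrArg (fun t : rootsOfUnity r F => ((t : Fˣ) : F)) h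
    simp only [← hfs] at h1
    let fx : Fˣ := x ^ n * Units.mk0 _ (hne x)
    let fy : Fˣ := y ^ n * Units.mk0 _ (hne y)
    have h2 : (fx / fy) ^ s = 1 := by
      rw [div_pow, div_eq_one]
      ext
      simpa [fx, fy] using h1
    -- The `s`-th root of unity `fx / fy` is `η ^ n` for another one `η`, and `y * η` has image `fx`.
    obtain ⟨m, hm⟩ := exists_pow_eq_self_of_coprime
      (hns.of_dvd_right (orderOf_dvd_of_pow_eq_one h2))
    set η := (fx / fy) ^ m with hη
    have hηs : η ^ s = 1 := by rw [hη, ← pow_mul, mul_comm, pow_mul, h2, one_pow]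
    have hηn : η ^ n = fx / fy := by rw [hη, ← pow_mul, mul_comm, pow_mul, hm]
    have hπy : π (y * η) = π y := Subtype.ext (by simp [π, mul_pow, hηs])
    have h3 : ((y * η : Fˣ) : F) ^ (s * k') = (y : F) ^ (s * k') := by
      rw [pow_mul, ← hπ, hπy, hπ, ← pow_mul]
    have h4 : x = y * η := by
      ext
      apply hinj
      simp only
      rw [h3]
      have h5 : fx = fy * η ^ n := by rw [hηn, mul_div_cancel]
      have h6 := congrArg (fun t : Fˣ => (t : F)) h5
      simp only [fx, fy, Units.val_mul, Units.val_pow_eq_pow_val, Units.val_mk0] at h6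
      rw [h6, Units.val_mul, mul_pow]
      ring
    rw [h4, hπy]
  · intro hinj x y h
    simp only at h
    rcases eq_or_ne x 0 with rfl | hx <;> rcases eq_or_ne y 0 with rfl | hy
    · rfl
    · rw [zero_pow hn.ne', zero_mul, eq_comm] at h
      exact absurd h (mul_ne_zero (pow_ne_zero _ hy) (hne (Units.mk0 y hy)))
    · rw [zero_pow hn.ne', zero_mul] at h
      exact absurd h (mul_ne_zero (pow_ne_zero _ hx) (hne (Units.mk0 x hx)))
    · lift x to Fˣ using hx.isUnit
      lift y to Fˣ using hy.isUnit
      have h1 : π x = π y := hinj (Subtype.ext (Units.ext (by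
        simp only [← hfs]
        rw [h])))
      have h2 : (x : F) ^ n = (y : F) ^ n := by
        rw [hxk, hxk, h1] at h
        exact mul_right_cancel₀ (hv _).1 h
      have h3 : (x / y) ^ n = 1 := by
        rw [div_pow, div_eq_one]
        ext
        simpa using h2
      have h4 : (x / y) ^ s = 1 := by
        rw [div_pow, div_eq_one]
        exact congrArg Subtype.val h1
      have h5 := pow_gcd_eq_one.2 ⟨h3, h4⟩
      rw [hns, pow_one, div_eq_one] at h5
      rw [h5]

/-- Twisting is a bijection on the self-maps of `G`, so as many twists as permutations are injective. -/
theorem card_injective_twist {G : Type*} [CommGroup G] [Fintype G] [DecidableEq G] {n k' : ℕ}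
    (hk : (Nat.card G).Coprime k') :
    (Finset.univ.filter fun v : G → G => Function.Injective fun τ => τ ^ n * v (τ ^ k')).card =
      (Fintype.card G).factorial := by
  rw [← Nat.descFactorial_self, ← Fintype.card_embedding_eq, ← Fintype.card_subtype]
  refine Fintype.card_congr (Equiv.trans ?_ (Equiv.subtypeInjectiveEquivEmbedding G G))
  refine Equiv.subtypeEquiv ((Equiv.arrowCongr (powCoprime hk).symm (Equiv.refl G)).trans
    (Equiv.piCongrRight fun τ => Equiv.mulLeft (τ ^ n))) fun v => ?_
  rfl

/-! ### The asymptotic count -/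

/-- For fixed `r ≥ 1`, the number `T` of `a ∈ F_q` for which `x^n (x^k + a)` permutes `F_q`
(where `gcd(n, k, q-1) = 1` and `(q-1)/gcd(k, q-1) = r`) satisfies `T ∼ q·r!/r^r` as
`q → ∞`. -/
theorem permutation_binomial_count_asymptotic (r : ℕ) (hr : 1 ≤ r) :
    ∀ ε : ℝ, 0 < ε → ∃ Q : ℕ, ∀ (F : Type) [Field F] [Fintype F],
      Q < Fintype.card F → r ∣ Fintype.card F - 1 →
      ∀ n k : ℕ, 0 < n → 0 < k →
        Nat.gcd n (Nat.gcd k (Fintype.card F - 1)) = 1 →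
        (Fintype.card F - 1) / Nat.gcd k (Fintype.card F - 1) = r →
        |(Nat.card {a : F // Function.Bijective (fun x : F => x ^ n * (x ^ k + a))} : ℝ)
            - (Fintype.card F : ℝ) * ((Nat.factorial r : ℝ) / (r : ℝ) ^ r)|
          ≤ ε * (Fintype.card F : ℝ) := by
  intro ε hε
  have hr0 : (0 : ℝ) < r := by exact_mod_cast hr
  set R : ℝ := (r : ℝ) ^ r with hR
  have hR0 : 0 < R := by positivity
  obtain ⟨Q₁, hQ₁⟩ := fiber_card_le r r hr (ε / (2 * R)) (by positivity)
  obtain ⟨Q₂, hQ₂⟩ := exists_nat_gt (2 * r / ε)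
  refine ⟨Q₁ + Q₂, ?_⟩
  intro F _ _ hQ _ n k hn hk hgcd hdiv
  classical
  set s := Nat.gcd k (Fintype.card F - 1) with hs
  have hs0 : 0 < s := Nat.gcd_pos_of_pos_left _ hk
  have hrs : r * s = Fintype.card F - 1 := by
    rw [← hdiv]
    exact Nat.div_mul_cancel (Nat.gcd_dvd_right _ _)
  have hq : Fintype.card F = r * s + 1 := by
    have : 0 < Fintype.card F := Fintype.card_pos
    omega
  obtain ⟨k', hk'⟩ : s ∣ k := Nat.gcd_dvd_left _ _
  have hcop : r.Coprime k' := by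
    have h1 := Nat.coprime_div_gcd_div_gcd (m := k) (n := Fintype.card F - 1) hs0
    rw [← hs, hdiv, hk', Nat.mul_div_cancel_left _ hs0] at h1
    exact h1.symm
  have : NeZero r := ⟨by omega⟩
  obtain ⟨z, hz⟩ := exists_isPrimitiveRoot hq hs0 hr
  set G := rootsOfUnity r F with hG
  have hGc : Fintype.card G = r := by
    rw [← Nat.card_eq_fintype_card]
    exact hz.card_rootsOfUnity
  let b : G → F := fun ζ => ((ζ : Fˣ) : F)
  have hb : Function.Injective b := Units.val_injective.comp Subtype.val_injective
  let Z : Finset F := Finset.univ.image fun ζ : G => -b ζ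
  let N : (G → G) → Finset F := fun v =>
    Finset.univ.filter fun a => ∀ ζ, a + b ζ ≠ 0 ∧ (a + b ζ) ^ s = b (v ζ)
  let T : Finset F := Finset.univ.filter fun a =>
    Function.Bijective fun x : F => x ^ n * (x ^ k + a)
  let good : Finset (G → G) := Finset.univ.filter fun v : G → G =>
    Function.Injective fun τ => τ ^ n * v (τ ^ k')
  let bad : Finset (G → G) := Finset.univ.filter fun v : G → G =>
    ¬ Function.Injective fun τ => τ ^ n * v (τ ^ k')
  have hgood : good.card = r.factorial := by
    rw [← hGc]
    exact card_injective_twist (by rw [Nat.card_eq_fintype_card, hGc]; exact hcop)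
  have hgb : good.card + bad.card = r ^ r := by
    rw [Finset.card_filter_add_card_filter_not, Finset.card_univ, Fintype.card_fun, hGc]
  have hZ : Z.card ≤ r := Finset.card_image_le.trans (by rw [Finset.card_univ, hGc])
  have hT : ∀ v, ∀ a ∈ N v, a ∈ T ↔ v ∈ good := fun v a ha => by
    have h1 := bijective_binomial_iff (k' := k') hq hr hn hgcd a v (Finset.mem_filter.1 ha).2
    simpa [T, good, hk'] using h1
  have hcover : ∀ a ∉ Z, ∃ v, a ∈ N v := by
    intro a ha
    have h0 : ∀ ζ, a + b ζ ≠ 0 := fun ζ h => ha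
      (Finset.mem_image.2 ⟨ζ, Finset.mem_univ _, (eq_neg_of_add_eq_zero_left h).symm⟩)
    refine ⟨fun ζ => ⟨Units.mk0 _ (h0 ζ) ^ s, (mem_rootsOfUnity r _).2 ?_⟩, ?_⟩
    · have := pow_card_eq_one (x := Units.mk0 _ (h0 ζ))
      rwa [Fintype.card_units, hq, Nat.add_sub_cancel, mul_comm, pow_mul] at this
    · exact Finset.mem_filter.2 ⟨Finset.mem_univ _, fun ζ => ⟨h0 ζ, by simp [b]⟩⟩
  set q : ℝ := (Fintype.card F : ℝ) with hqdef
  have hq0 : 0 ≤ q := Nat.cast_nonneg _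
  have hN : ∀ v, ((N v).card : ℝ) ≤ (1 / R + ε / (2 * R)) * q := fun v =>
    hQ₁ F (by omega) s hs0 hq G hGc b (fun ζ => b (v ζ)) hb (N v)
      fun a ha => (Finset.mem_filter.1 ha).2
  have hsum : ∀ S : Finset (G → G),
      ((S.biUnion N).card : ℝ) ≤ S.card * ((1 / R + ε / (2 * R)) * q) := fun S => by
    calc ((S.biUnion N).card : ℝ) ≤ ∑ v ∈ S, ((N v).card : ℝ) := by
          exact_mod_cast Finset.card_biUnion_le
      _ ≤ _ := by
          rw [← nsmul_eq_mul]
          exact Finset.sum_le_card_nsmul _ _ _ fun v _ => hN v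
  -- Outside `Z`, every `a` counted by `T` lies in a good fibre.
  have hupper : (T.card : ℝ) ≤ r + r.factorial * ((1 / R + ε / (2 * R)) * q) := by
    have h1 : T ⊆ Z ∪ good.biUnion N := fun a ha => by
      by_cases hz : a ∈ Z
      · exact Finset.mem_union_left _ hz
      · obtain ⟨v, hv⟩ := hcover a hz
        exact Finset.mem_union_right _ (Finset.mem_biUnion.2 ⟨v, (hT v a hv).1 ha, hv⟩)
    have h2 : (T.card : ℝ) ≤ Z.card + (good.biUnion N).card := by
      exact_mod_cast (Finset.card_le_card h1).trans (Finset.card_union_le _ _)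
    have h3 : (Z.card : ℝ) ≤ r := by exact_mod_cast hZ
    have h4 := hsum good
    rw [hgood] at h4
    linarith
  -- Outside `Z`, every `a` not counted by `T` lies in a bad fibre, and only upper bounds for fibres
  -- are available, so `T` is bounded below through its complement.
  have hlower : q ≤ r + T.card + (R - r.factorial) * ((1 / R + ε / (2 * R)) * q) := by
    have h1 : (Finset.univ : Finset F) ⊆ (Z ∪ T) ∪ bad.biUnion N := fun a _ => by
      by_cases hz : a ∈ Z
      · exact Finset.mem_union_left _ (Finset.mem_union_left _ hz)
      obtain ⟨v, hv⟩ := hcover a hz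
      by_cases ha : a ∈ T
      · exact Finset.mem_union_left _ (Finset.mem_union_right _ ha)
      · refine Finset.mem_union_right _ (Finset.mem_biUnion.2 ⟨v, ?_, hv⟩)
        rw [hT v a hv] at ha
        exact Finset.mem_filter.2 ⟨Finset.mem_univ _, fun h =>
          ha (Finset.mem_filter.2 ⟨Finset.mem_univ _, h⟩)⟩
    have h2 : q ≤ Z.card + T.card + (bad.biUnion N).card := by
      have := (Finset.card_le_card h1).trans ((Finset.card_union_le _ _).trans
        (add_le_add_left (Finset.card_union_le _ _) _))
      rw [Finset.card_univ] at this
      rw [hqdef]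
      exact_mod_cast this
    have h3 : (Z.card : ℝ) ≤ r := by exact_mod_cast hZ
    have h4 := hsum bad
    have h5 : (bad.card : ℝ) = R - r.factorial := by
      rw [eq_sub_iff_add_eq, hR, ← hgood, add_comm]
      exact_mod_cast hgb
    rw [h5] at h4
    linarith
  have hfR : (r.factorial : ℝ) ≤ R := by
    rw [hR]
    exact_mod_cast Nat.factorial_le_pow r
  have hqr : (r : ℝ) ≤ ε / 2 * q := by
    have h1 : (Q₂ : ℝ) ≤ q := by
      have : Q₂ ≤ Fintype.card F := by omega
      rw [hqdef]
      exact_mod_cast this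
    rw [div_lt_iff₀ hε] at hQ₂
    nlinarith
  have hTc : (Nat.card {a : F // Function.Bijective (fun x : F => x ^ n * (x ^ k + a))}) =
      T.card := by
    rw [Nat.card_eq_fintype_card, Fintype.card_subtype]
  have hf0 : (0 : ℝ) ≤ r.factorial := Nat.cast_nonneg _
  have e1 : ∀ x : ℝ, x * ((1 / R + ε / (2 * R)) * q) = q * (x / R) + x / R * (ε / 2 * q) :=
    fun x => by field_simp
  rw [e1] at hupper hlower
  have hfR1 : r.factorial / R ≤ 1 := (div_le_one hR0).2 hfR
  have hfR0 : 0 ≤ r.factorial / R := by positivity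
  have e2 : (R - r.factorial) / R = 1 - r.factorial / R := by field_simp
  rw [e2] at hlower
  have hεq : 0 ≤ ε / 2 * q := by positivity
  rw [hTc, abs_le]
  constructor <;> nlinarith [mul_le_mul_of_nonneg_right hfR1 hεq, mul_nonneg hfR0 hεq]
end

section
/- Let q be a prime power and f a polynomial with coefficients in F_q. Then f permutes F_q if and only if both of the following hold: (1) for each integer i with 0 < i < q−1, the remainder of f^i upon division by x^q − x has degree less than q−1; and (2) f has precisely one root in F_q. -/
/-!
The bridge between the two sides is the sum `∑ x, g(x)` over `F_q`. Since `∑ x, x ^ j` vanishes for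
`j < q - 1` and equals `-1` for `j = q - 1`, a polynomial `r` of degree less than `q` satisfies
`∑ x, r(x) = -r_{q-1}` (`sum_eval_of_degree_lt_card`). Reduction modulo `x ^ q - x` does not change
values, so condition (1) says exactly that `∑ x, f(x) ^ i = 0` for `0 < i < q - 1`
(`degree_modByMonic_lt_iff`).

If `f` is a permutation, these sums are the power sums `∑ x, x ^ i`, which vanish. Conversely,
the vanishing of the power sums of `f` below the exponent `q - 1` and the binomial theorem give
`∑ x, (f(x) - a) ^ (q - 1) = ∑ x, f(x) ^ (q - 1)` for every `a`, and the right-hand side is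
`q - 1 = -1` because `f` has exactly one root. If `f` missed the value `a`, the left-hand side would
be a sum of `q` ones, which is `0`; so `f` is surjective, hence bijective.
-/

open Polynomial in
theorem sum_eval_of_degree_lt_card {F : Type} [Field F] [Fintype F] (r : F[X])
    (hr : r.degree < (Fintype.card F : WithBot ℕ)) :
    ∑ x : F, r.eval x = -r.coeff (Fintype.card F - 1) := by
  classical
  have hq : 1 < Fintype.card F := Fintype.one_lt_card
  have hnd : r.natDegree < Fintype.card F - 1 + 1 := by
    rcases eq_or_ne r 0 with rfl | h0
    · simp
    · have := (natDegree_lt_iff_degree_lt h0).2 hr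
      omega
  have htop : ∑ x : F, x ^ (Fintype.card F - 1) = -1 := by
    have h : ∀ x : F, x ^ (Fintype.card F - 1) = 1 - if x = 0 then 1 else 0 := by
      intro x
      by_cases hx : x = 0
      · simp [hx, show Fintype.card F - 1 ≠ 0 by omega]
      · simp [hx, FiniteField.pow_card_sub_one_eq_one x hx]
    simp [h]
  simp_rw [eval_eq_sum_range' hnd]
  rw [Finset.sum_comm]
  simp_rw [← Finset.mul_sum]
  rw [Finset.sum_range_succ, htop, Finset.sum_eq_zero]
  · simp
  · intro j hj
    rw [FiniteField.sum_pow_lt_card_sub_one F j (Finset.mem_range.1 hj), mul_zero]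

open Polynomial in
/-- The reduction of `g` modulo `x ^ q - x` has the same values as `g` and degree less than `q`,
so its coefficient at `x ^ (q - 1)` is `-∑ x, g(x)`. -/
theorem degree_modByMonic_lt_iff {F : Type} [Field F] [Fintype F] (g : F[X]) :
    (g %ₘ (X ^ Fintype.card F - X)).degree < ((Fintype.card F - 1 : ℕ) : WithBot ℕ) ↔
      ∑ x : F, g.eval x = 0 := by
  have hq : 1 < Fintype.card F := Fintype.one_lt_card
  have hX : (X : F[X]).degree < (Fintype.card F : WithBot ℕ) := by
    rw [degree_X]; exact_mod_cast hq
  have hmonic : (X ^ Fintype.card F - X : F[X]).Monic := monic_X_pow_sub (by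
    rw [degree_X]; exact_mod_cast hq)
  have hdeg : (X ^ Fintype.card F - X : F[X]).degree = (Fintype.card F : WithBot ℕ) := by
    rw [degree_sub_eq_left_of_degree_lt (by rwa [degree_X_pow]), degree_X_pow]
  have hlt := degree_modByMonic_lt g hmonic
  rw [hdeg] at hlt
  have heval : ∀ x : F, (g %ₘ (X ^ Fintype.card F - X)).eval x = g.eval x := by
    intro x
    conv_rhs => rw [← modByMonic_add_div g (X ^ Fintype.card F - X)]
    simp [FiniteField.pow_card]
  have hsum := sum_eval_of_degree_lt_card _ hlt
  simp_rw [heval] at hsum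
  rw [hsum, neg_eq_zero]
  constructor
  · exact fun h => coeff_eq_zero_of_degree_lt h
  · intro h
    rw [degree_lt_iff_coeff_zero]
    intro m hm
    rcases hm.eq_or_lt with rfl | hm
    · exact h
    · refine coeff_eq_zero_of_degree_lt (hlt.trans_le ?_)
      exact_mod_cast (by omega : Fintype.card F ≤ m)

/-- A self-map of `F_q` whose power sums of positive exponent less than `q - 1` vanish and which
takes the value `0` exactly once is surjective. -/
theorem surjective_of_sum_pow_eq_zero {F : Type} [Field F] [Fintype F] (φ : F → F)
    (hpow : ∀ i : ℕ, 0 < i → i < Fintype.card F - 1 → ∑ x : F, φ x ^ i = 0)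
    (hroot : ∃! x : F, φ x = 0) : Function.Surjective φ := by
  classical
  have hq : 1 < Fintype.card F := Fintype.one_lt_card
  intro a
  by_contra! hne
  have hone : ∑ x : F, (φ x + -a) ^ (Fintype.card F - 1) = 0 := by
    have h : ∀ x : F, (φ x + -a) ^ (Fintype.card F - 1) = 1 := fun x =>
      FiniteField.pow_card_sub_one_eq_one _ (by
        rw [← sub_eq_add_neg]; exact sub_ne_zero.2 (hne x))
    simp [h]
  have htop : ∑ x : F, φ x ^ (Fintype.card F - 1) = -1 := by
    obtain ⟨x₀, hx₀, huniq⟩ := hroot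
    have h : ∀ x : F, φ x ^ (Fintype.card F - 1) = 1 - if x = x₀ then 1 else 0 := by
      intro x
      by_cases hx : x = x₀
      · simp [hx, hx₀, show Fintype.card F - 1 ≠ 0 by omega]
      · simp [hx, FiniteField.pow_card_sub_one_eq_one (φ x) fun h0 => hx (huniq x h0)]
    simp [h]
  simp_rw [add_pow] at hone
  rw [Finset.sum_comm] at hone
  simp_rw [← Finset.sum_mul] at hone
  rw [Finset.sum_range_succ, htop, Finset.sum_eq_zero] at hone
  · simp at hone
  · intro j hj
    rcases Nat.eq_zero_or_pos j with rfl | hj0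
    -- The zeroth power sum is `q`, which vanishes in `F_q`.
    · simp
    · rw [hpow j hj0 (Finset.mem_range.1 hj), zero_mul, zero_mul]

/-- Hermite's criterion: `f` permutes `F_q` if and only if (1) for each `0 < i < q-1`,
the remainder of `f^i` upon division by `x^q - x` has degree less than `q-1`, and
(2) `f` has precisely one root in `F_q`. -/
theorem hermite_criterion (F : Type) [Field F] [Fintype F] (f : Polynomial F) :
    Function.Bijective (fun x : F => f.eval x) ↔
      (∀ i : ℕ, 0 < i → i < Fintype.card F - 1 →
          ((f ^ i) %ₘ (Polynomial.X ^ Fintype.card F - Polynomial.X)).degree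
            < ((Fintype.card F - 1 : ℕ) : WithBot ℕ)) ∧
      (∃! x : F, f.eval x = 0) := by
  simp_rw [degree_modByMonic_lt_iff, Polynomial.eval_pow]
  constructor
  · intro hf
    refine ⟨fun i _ hi => ?_, hf.existsUnique 0⟩
    rw [hf.sum_comp (fun y : F => y ^ i)]
    exact FiniteField.sum_pow_lt_card_sub_one F i hi
  · rintro ⟨hpow, hroot⟩
    exact Finite.surjective_iff_bijective.1
      (surjective_of_sum_pow_eq_zero (fun x => f.eval x) hpow hroot)
end

section
/- Let q be a prime power, let k, n > 0 be integers with k dividing q−1 and gcd(n, k) = 1, and put r := (q−1)/k. For a ∈ F_q, the polynomial f(x) = x^n (x^k + a) permutes F_q if and only if there exists a permutation π of μ_r (the set of r-th roots of unity in F_q) such that every ζ ∈ μ_r satisfies (ζ + a)^k = π(ζ)/ζ^n. -/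
/-!
Write `f(x) = x^n (x^k + a)` and `g(z) = z^n (z + a)^k`, so that `f(x)^k = g(x^k)`. As `F^*` is
cyclic, `x ↦ x^k` maps `F^*` onto `μ_r` (`exists_pow_eq_of_pow_eq_one`), and the condition on the
right says exactly that `g` restricts to a permutation of `μ_r`.

If `f` is bijective, then `f(0) = 0` forces `f` to permute `F^*`; taking `k`-th powers, `g` maps
`μ_r` onto itself, and `μ_r` is finite. Conversely, if `g` permutes `μ_r`, then `f` has no zero
other than `0`, and `f(x) = f(y) ≠ 0` gives `g(x^k) = g(y^k)`, hence `x^k = y^k`, hence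
`x^n = y^n`; since `gcd(n, k) = 1` this means `x = y` (`eq_of_pow_eq_of_pow_eq`).
-/

/-- In the cyclic group `F^*`, every `r`-th root of unity is a `k`-th power when `kr = q - 1`. -/
lemma exists_pow_eq_of_pow_eq_one_s11 {F : Type} [Field F] [Fintype F] {k : ℕ}
    (hkdvd : k ∣ Fintype.card F - 1) {z : F}
    (hz : z ^ ((Fintype.card F - 1) / k) = 1) : ∃ x : F, x ≠ 0 ∧ x ^ k = z := by
  classical
  obtain ⟨r, hr⟩ := hkdvd
  have hcard : 0 < Fintype.card F - 1 := by
    have := Fintype.one_lt_card (α := F)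
    omega
  rw [hr] at hcard
  have hk : 0 < k := Nat.pos_of_mul_pos_right hcard
  have hr0 : 0 < r := Nat.pos_of_mul_pos_left hcard
  rw [hr, Nat.mul_div_cancel_left r hk] at hz
  have hz0 : z ≠ 0 := by
    rintro rfl
    simp [hr0.ne'] at hz
  obtain ⟨g, hg⟩ := IsCyclic.exists_generator (α := Fˣ)
  obtain ⟨m, hm⟩ := (mem_powers_iff_mem_zpowers (x := g)).2 (hg (Units.mk0 z hz0))
  simp only at hm
  have hord : orderOf g = k * r := by
    rw [orderOf_eq_card_of_forall_mem_zpowers hg, Nat.card_eq_fintype_card,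
      Fintype.card_units, hr]
  have h1 : g ^ (m * r) = 1 := by
    rw [pow_mul, hm]
    ext
    simpa using hz
  obtain ⟨j, rfl⟩ : k ∣ m :=
    Nat.dvd_of_mul_dvd_mul_right hr0 (hord ▸ orderOf_dvd_of_pow_eq_one h1)
  refine ⟨((g ^ j : Fˣ) : F), Units.ne_zero _, ?_⟩
  rw [← Units.val_pow_eq_pow_val, ← pow_mul, mul_comm, hm, Units.val_mk0]

lemma eq_of_pow_eq_of_pow_eq {F : Type} [Field F] {k n : ℕ} (hgcd : Nat.gcd n k = 1)
    {x y : F} (hy : y ≠ 0) (hn : x ^ n = y ^ n) (hk : x ^ k = y ^ k) : x = y := by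
  have h1 : (x / y) ^ n = 1 := by rw [div_pow, hn, div_self (pow_ne_zero _ hy)]
  have h2 : (x / y) ^ k = 1 := by rw [div_pow, hk, div_self (pow_ne_zero _ hy)]
  have h3 := pow_gcd_eq_one.2 ⟨h1, h2⟩
  rw [hgcd, pow_one] at h3
  exact (div_eq_one_iff_eq hy).1 h3

/-- Let `k ∣ q-1`, `gcd(n, k) = 1`, `r := (q-1)/k`. For `a ∈ F_q`, the polynomial
`x^n (x^k + a)` permutes `F_q` if and only if there is a permutation `π` of the set `μ_r`
of `r`-th roots of unity in `F_q` with `(ζ + a)^k = π(ζ)/ζ^n` for every `ζ ∈ μ_r`. -/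
theorem permutation_binomial_iff_perm_of_roots_of_unity (F : Type) [Field F] [Fintype F]
    (k n : ℕ) (hk : 0 < k) (hn : 0 < n) (hkdvd : k ∣ Fintype.card F - 1)
    (hgcd : Nat.gcd n k = 1) (a : F) :
    Function.Bijective (fun x : F => x ^ n * (x ^ k + a)) ↔
      ∃ π : Equiv.Perm {x : F // x ^ ((Fintype.card F - 1) / k) = 1},
        ∀ ζ : {x : F // x ^ ((Fintype.card F - 1) / k) = 1},
          ((ζ : F) + a) ^ k = (π ζ : F) / (ζ : F) ^ n := by
  have hpow : ∀ x : F, x ≠ 0 → (x ^ k) ^ ((Fintype.card F - 1) / k) = 1 := fun x hx => by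
    rw [← pow_mul, Nat.mul_div_cancel' hkdvd, FiniteField.pow_card_sub_one_eq_one x hx]
  have hfg : ∀ x : F, (x ^ n * (x ^ k + a)) ^ k = (x ^ k) ^ n * (x ^ k + a) ^ k :=
    fun x => by rw [mul_pow, pow_right_comm]
  have hne : ∀ ζ : {x : F // x ^ ((Fintype.card F - 1) / k) = 1}, (ζ : F) ≠ 0 := by
    rintro ⟨z, hz⟩
    obtain ⟨x, hx, rfl⟩ := exists_pow_eq_of_pow_eq_one_s11 hkdvd hz
    exact pow_ne_zero _ hx
  constructor
  · intro hf
    have hf0 : ∀ x : F, x ≠ 0 → x ^ n * (x ^ k + a) ≠ 0 := fun x hx h =>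
      hx (hf.1 (by simpa [hn.ne'] using h))
    have hg : ∀ ζ : {x : F // x ^ ((Fintype.card F - 1) / k) = 1},
        ((ζ : F) ^ n * ((ζ : F) + a) ^ k) ^ ((Fintype.card F - 1) / k) = 1 := by
      rintro ⟨z, hz⟩
      obtain ⟨x, hx, rfl⟩ := exists_pow_eq_of_pow_eq_one_s11 hkdvd hz
      rw [← hfg]
      exact hpow _ (hf0 x hx)
    let g : {x : F // x ^ ((Fintype.card F - 1) / k) = 1} →
        {x : F // x ^ ((Fintype.card F - 1) / k) = 1} := fun ζ => ⟨_, hg ζ⟩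
    have hsurj : Function.Surjective g := by
      rintro ⟨w, hw⟩
      obtain ⟨y, hy, rfl⟩ := exists_pow_eq_of_pow_eq_one_s11 hkdvd hw
      obtain ⟨x, rfl⟩ := hf.2 y
      have hx : x ≠ 0 := by
        rintro rfl
        simp [hn.ne'] at hy
      exact ⟨⟨x ^ k, hpow x hx⟩, Subtype.ext (hfg x).symm⟩
    refine ⟨Equiv.ofBijective g (Finite.surjective_iff_bijective.1 hsurj), fun ζ => ?_⟩
    rw [Equiv.ofBijective_apply, eq_div_iff (pow_ne_zero _ (hne ζ)), mul_comm]
  · rintro ⟨π, hπ⟩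
    have hπ' : ∀ (x : F) (hx : x ≠ 0),
        (π ⟨x ^ k, hpow x hx⟩ : F) = (x ^ n * (x ^ k + a)) ^ k := fun x hx => by
      have h := hπ ⟨x ^ k, hpow x hx⟩
      rw [eq_div_iff (pow_ne_zero _ (hne _))] at h
      rw [hfg, ← h, mul_comm]
    have hf0 : ∀ x : F, x ≠ 0 → x ^ n * (x ^ k + a) ≠ 0 := fun x hx h => by
      apply hne (π ⟨x ^ k, hpow x hx⟩)
      rw [hπ' x hx, h, zero_pow hk.ne']
    refine Finite.injective_iff_bijective.1
      fun x y (hxy : x ^ n * (x ^ k + a) = y ^ n * (y ^ k + a)) => ?_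
    by_cases hx : x = 0
    · by_contra hne'
      refine hf0 y (fun hy => hne' (hx.trans hy.symm)) ?_
      rw [← hxy, hx, zero_pow hn.ne', zero_mul]
    by_cases hy : y = 0
    · refine absurd ?_ (hf0 x hx)
      rw [hxy, hy, zero_pow hn.ne', zero_mul]
    have hxyk : x ^ k = y ^ k := by
      have h : π ⟨x ^ k, hpow x hx⟩ = π ⟨y ^ k, hpow y hy⟩ :=
        Subtype.ext (by rw [hπ' x hx, hπ' y hy, hxy])
      exact congrArg Subtype.val (π.injective h)
    have hxyn : x ^ n = y ^ n := by
      rw [hxyk] at hxy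
      exact mul_right_cancel₀ (right_ne_zero_of_mul (hf0 y hy)) hxy
    exact eq_of_pow_eq_of_pow_eq hgcd hy hxyn hxyk
end
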